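/- arXiv:1312.7516 — 3 statements merged into one kernel-verified Lean document; each statement's English description precedes it below -/
import Mathlib

section
/- For all positive integers μ₁, μ₂, μ₃, μ₄, the pruned simple Hurwitz number satisfies K_{0,4}(μ₁, μ₂, μ₃, μ₄) = (μ₁+μ₂+μ₃+μ₄+2)! · μ₁μ₂μ₃μ₄ · (1/2)·Σ_{i=1}^{4} (μ_i² + μ_i). -/
/-- `σ` is a tuple of `m` transpositions in the symmetric group on `d` letters whose
ordered product is `T`, which generates a subgroup acting transitively, and such that
every point is moved by at least two of the transpositions.  These are the objects
counted by the pruned simple Hurwitz numbers. -/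
def IsPrunedFactorisation {d m : ℕ} (T : Equiv.Perm (Fin d))
    (σ : Fin m → Equiv.Perm (Fin d)) : Prop :=
  (∀ i, (σ i).IsSwap) ∧
  (List.ofFn σ).prod = T ∧
  (∀ x y : Fin d, ∃ g ∈ Subgroup.closure (Set.range σ), g x = y) ∧
  (∀ x : Fin d, 2 ≤ Nat.card {i : Fin m // σ i x ≠ x})

namespace HZ
open Finset Equiv Equiv.Perm

section Tree
open PowerSeries

noncomputable def tt : ℕ → ℚ
  | 0 => 0
  | 1 => 1
  | (n+2) => (((n:ℚ)+2)/(2*((n:ℚ)+1))) * ∑ i : Fin (n+1), tt (i.1+1) * tt (n+1-i.1)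
termination_by n => n
decreasing_by
  · omega
  · omega

theorem tt_zero : tt 0 = 0 := by rw [tt]
theorem tt_one : tt 1 = 1 := by rw [tt]

theorem tt_rec (n : ℕ) : 2 * ((n:ℚ) * tt n - tt n) = n * ∑ p ∈ antidiagonal n, tt p.1 * tt p.2 + (if n = 1 then 2 * (tt 1 - 1) else 0) := by
  match n with
  | 0 => simp [tt_zero]
  | 1 =>
    simp [Finset.Nat.antidiagonal_succ, tt_zero, tt_one]
  | (n+2) =>
    have h : ∑ p ∈ antidiagonal (n+2), tt p.1 * tt p.2 = ∑ i : Fin (n+1), tt (i.1+1) * tt (n+1-i.1) := by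
      rw [Finset.Nat.sum_antidiagonal_eq_sum_range_succ (fun a b => tt a * tt b), Finset.sum_range_succ,
        Finset.sum_range_succ', Fin.sum_univ_eq_sum_range (fun i => tt (i+1) * tt (n+1-i))]
      simp [tt_zero]
    have h0 : tt (n+2) = (((n:ℚ)+2)/(2*((n:ℚ)+1))) * ∑ i : Fin (n+1), tt (i.1+1) * tt (n+1-i.1) := by
      conv_lhs => rw [tt]
    rw [h, h0]
    have : ((n:ℚ)+1) ≠ 0 := by positivity
    push_cast
    simp
    field_simp
    ring

noncomputable def tau : PowerSeries ℚ := PowerSeries.mk tt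

noncomputable def DD (f : PowerSeries ℚ) : PowerSeries ℚ := X * d⁄dX ℚ f

theorem coeff_DD (f : PowerSeries ℚ) (n : ℕ) : coeff n (DD f) = n * coeff n f := by
  unfold DD
  cases n with
  | zero => simp
  | succ n => rw [coeff_succ_X_mul, coeff_derivative]; push_cast; ring

theorem DD_mul (f g : PowerSeries ℚ) : DD (f * g) = DD f * g + f * DD g := by
  unfold DD
  rw [Derivation.leibniz]; simp only [smul_eq_mul]; ring

theorem tau_ode : DD tau = tau + tau * DD tau := by
  have h : (2:PowerSeries ℚ) * (DD tau - tau) = DD (tau * tau) := by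
    ext n
    have h2 : (2:PowerSeries ℚ) = C (2:ℚ) := (map_ofNat C 2).symm
    rw [coeff_DD, h2, coeff_C_mul, map_sub, coeff_DD, coeff_mul]
    simp only [tau, coeff_mk]
    rw [tt_rec]
    simp [tt_one]
  rw [DD_mul] at h
  have h3 : (2:PowerSeries ℚ) * (DD tau - tau - tau * DD tau) = 0 := by linear_combination h
  have h4 : (2:PowerSeries ℚ) ≠ 0 := by
    rw [← map_ofNat (C (R := ℚ)) 2]
    intro h
    have := congrArg (coeff 0) h
    simp at this
  rcases mul_eq_zero.1 h3 with h | h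
  · exact absurd h h4
  · linear_combination h

noncomputable def cc (x j : ℕ) : ℚ := coeff x (tau ^ j)

theorem DD_pow (j : ℕ) : DD (tau^(j+1)) = ((j:PowerSeries ℚ)+1) * tau^j * DD tau := by
  induction j with
  | zero => simp
  | succ j ih => rw [pow_succ, DD_mul, ih]; push_cast; ring

theorem cc_rec (x j : ℕ) (hj : 1 ≤ j) : (j:ℚ) * x * cc x (j+1) = (j+1) * (x - j) * cc x j := by
  obtain ⟨i, rfl⟩ : ∃ i, j = i+1 := ⟨j-1, by omega⟩
  have h : ((i:PowerSeries ℚ)+1) * DD (tau^(i+1+1)) = ((i:PowerSeries ℚ)+2) * (DD (tau^(i+1)) - ((i:PowerSeries ℚ)+1) * tau^(i+1)) := by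
    rw [DD_pow, DD_pow]
    have := tau_ode
    push_cast
    linear_combination (-(i+1)*(i+2) * tau^i : PowerSeries ℚ) * this
  have h2 := congrArg (coeff x) h
  have e1 : ((i:PowerSeries ℚ)+1) = C ((i:ℚ)+1) := by simp
  have e2 : ((i:PowerSeries ℚ)+2) = C ((i:ℚ)+2) := by rw [map_add, map_ofNat]; simp
  rw [e1, e2, coeff_C_mul, coeff_C_mul, map_sub, coeff_C_mul, coeff_DD, coeff_DD] at h2
  unfold cc
  push_cast
  linear_combination h2

theorem cc_self (x : ℕ) : cc x x = 1 := by
  have : tau = X * PowerSeries.mk (fun n => tt (n+1)) := by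
    ext n
    cases n with
    | zero => simp [tau, tt_zero]
    | succ n => rw [coeff_succ_X_mul]; simp [tau]
  unfold cc
  rw [this, mul_pow]
  have := coeff_X_pow_mul ((PowerSeries.mk (fun n => tt (n+1)))^x) x 0
  rw [zero_add] at this
  rw [this]; simp [tt_one]

/-- closed form, parametrised by k = x - j -/
theorem cc_formula (j k : ℕ) (hj : 1 ≤ j) :
    ((j:ℚ)+k) * cc (j+k) j = j * ((j:ℚ)+k)^k / k.factorial := by
  induction k generalizing j with
  | zero => simp [cc_self]
  | succ k ih =>
    have h := ih (j+1) (by omega)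
    have h2 := cc_rec (j+(k+1)) j hj
    rw [show j+1+k = j+(k+1) by ring] at h
    rw [Nat.factorial_succ]
    have hk : ((k:ℚ)+1) ≠ 0 := by positivity
    have hj' : ((j:ℚ)+1) ≠ 0 := by positivity
    have hf : (k.factorial:ℚ) ≠ 0 := by positivity
    push_cast at *
    rw [eq_div_iff (by positivity)] at *
    have e : (j:ℚ) + 1 + k = j + (k+1) := by ring
    rw [e] at h
    have h3 : ((j:ℚ)+1) * (((j:ℚ)+(k+1)) * cc (j+(k+1)) j * ((k+1) * k.factorial)) = ((j:ℚ)+1) * (j * (j+(k+1))^(k+1)) := by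
      rw [pow_succ]
      linear_combination -((j:ℚ)+(k+1)) * k.factorial * h2 + (j:ℚ) * (j+(k+1)) * h
    exact mul_left_cancel₀ hj' h3

theorem cc_conv (x j : ℕ) : ∑ p ∈ antidiagonal x, tt p.1 * cc p.2 j = cc x (j+1) := by
  unfold cc
  rw [pow_succ', coeff_mul]
  simp [tau]

theorem cc_one (x : ℕ) : cc x 1 = tt x := by simp [cc, tau]

theorem cc_lt (x j : ℕ) (h : x < j) : cc x j = 0 := by
  unfold cc
  apply coeff_of_lt_order
  have h1 : (1:ℕ∞) ≤ tau.order := by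
    rw [one_le_order_iff_constCoeff_eq_zero]; simp [tau, tt_zero]
  have h2 := le_order_pow_of_constantCoeff_eq_zero (R := ℚ) (φ := tau) j (by simp [tau, tt_zero])
  exact lt_of_lt_of_le (by exact_mod_cast h) h2

noncomputable def ww (n : ℕ) : ℚ := (n:ℚ)^(n+1) / n.factorial
noncomputable def pp (n : ℕ) : ℚ := (n:ℚ)^n / n.factorial

theorem tt_eq (n : ℕ) : (n:ℚ)^2 * tt n = ww n := by
  cases n with
  | zero => simp [ww]
  | succ n =>
    have h := cc_formula 1 n le_rfl
    rw [add_comm 1 n, cc_one] at h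
    unfold ww
    rw [Nat.factorial_succ]
    have hf : (n.factorial:ℚ) ≠ 0 := by positivity
    have hk : ((n:ℚ)+1) ≠ 0 := by positivity
    push_cast at *
    rw [eq_div_iff (by positivity)] at *
    have e : (1:ℚ)+n = n+1 := by ring
    rw [e] at h
    linear_combination ((n:ℚ)+1)^2 * h

theorem ww_eq (n : ℕ) : ww n = n * pp n := by unfold ww pp; ring

theorem pp_eq (n : ℕ) (h : 1 ≤ n) : pp n = n * tt n := by
  have h1 := tt_eq n
  rw [ww_eq] at h1
  have : (n:ℚ) ≠ 0 := by positivity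
  apply mul_left_cancel₀ this
  linear_combination -h1

end Tree
end HZ

namespace HZ
open Finset Equiv Equiv.Perm

theorem pp_div (y b : ℕ) (hy : 1 ≤ y) :
    pp b / ((b:ℚ)+y) = ∑ j ∈ range (b+1), ((y-1).factorial * (y:ℚ)^j / (y+j).factorial) * cc b j := by
  obtain ⟨z, rfl⟩ : ∃ z, y = z+1 := ⟨y-1, by omega⟩
  rcases Nat.eq_zero_or_pos b with rfl | hb
  · simp [pp, cc, Nat.factorial_succ]
    field_simp
  have hbQ : (b:ℚ) ≠ 0 := by positivity
  set y := z+1 with hyd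
  have hyQ : (y:ℚ) ≠ 0 := by positivity
  have hbc : ∀ j ≤ b, (b:ℚ) * cc b j = j * (b:ℚ)^(b-j) / (b-j).factorial := by
    intro j hj
    rcases Nat.eq_zero_or_pos j with rfl | hj0
    · simp [cc, PowerSeries.coeff_one]; try omega
    · have := cc_formula j (b-j) hj0
      rw [show j + (b-j) = b by omega] at this
      have e : (j:ℚ) + ((b-j:ℕ):ℚ) = b := by exact_mod_cast (by omega : j + (b-j) = b)
      rw [e] at this
      exact this
  have key : ∀ n ≤ b, ∑ j ∈ range n, ((b:ℚ)+y) * ((y:ℚ)^j / (y+j).factorial) * ((b:ℚ) * cc b j)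
      = (b:ℚ)^(b+1) * y / (y.factorial * b.factorial)
        - (b:ℚ)^(b+1-n) * (y:ℚ)^n * (y+n) / ((y+n).factorial * (b-n).factorial) := by
    intro n hn
    induction n with
    | zero => simp
    | succ n ih =>
      rw [sum_range_succ, ih (by omega), hbc n (by omega)]
      obtain ⟨r, rfl⟩ : ∃ r, b = n + 1 + r := ⟨b-(n+1), by omega⟩
      rw [show n+1+r+1-n = r+2 by omega, show n+1+r-n = r+1 by omega, show n+1+r+1-(n+1) = r+1 by omega,
        show n+1+r-(n+1)=r by omega, show y+(n+1) = (y+n)+1 by ring, Nat.factorial_succ (y+n), Nat.factorial_succ r]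
      have h1 : ((y+n).factorial:ℚ) ≠ 0 := by positivity
      have h2 : (r.factorial:ℚ) ≠ 0 := by positivity
      have h3 : (y.factorial:ℚ) ≠ 0 := by positivity
      have h4 : ((n+1+r).factorial:ℚ) ≠ 0 := by positivity
      have h5 : ((y:ℚ)+n+1) ≠ 0 := by positivity
      have h6 : ((r:ℚ)+1) ≠ 0 := by positivity
      push_cast
      field_simp
      ring
  have hne : ((b:ℚ)+y) ≠ 0 := by positivity
  rw [div_eq_iff hne]
  apply mul_left_cancel₀ hbQ
  have k2 := key b le_rfl
  have hl := hbc b le_rfl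
  have f1 : (y.factorial:ℚ) = y * z.factorial := by rw [hyd, Nat.factorial_succ]; push_cast; ring
  have hzf : (z.factorial:ℚ) ≠ 0 := by positivity
  have hbf : (b.factorial:ℚ) ≠ 0 := by positivity
  have hs : ∑ j ∈ range (b+1), ((b:ℚ)+y) * ((y:ℚ)^j / (y+j).factorial) * ((b:ℚ) * cc b j)
     = (b:ℚ)^(b+1) * y / (y.factorial * b.factorial) := by
    rw [sum_range_succ, k2, hl]
    simp
    ring
  have : z = y - 1 := by omega
  rw [show y - 1 = z by omega]
  calc (b:ℚ) * pp b = z.factorial * ((b:ℚ)^(b+1) * y / (y.factorial * b.factorial)) := by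
        rw [f1]; unfold pp; field_simp; ring
    _ = _ := by
        rw [← hs, mul_sum, sum_mul, mul_sum]
        refine sum_congr rfl fun j _ => ?_
        ring

theorem conv_tp (x : ℕ) (hx : 1 ≤ x) : ∑ p ∈ antidiagonal x, tt p.1 * pp p.2 = pp x := by
  have h := congrArg (PowerSeries.coeff x) tau_ode
  rw [map_add, coeff_DD, PowerSeries.coeff_mul] at h
  simp only [coeff_DD, tau, PowerSeries.coeff_mk] at h
  rw [pp_eq x hx, h]
  have h0 : ∀ b, pp b = (if b = 0 then 1 else 0) + b * tt b := by
    intro b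
    rcases Nat.eq_zero_or_pos b with rfl | hb
    · simp [pp]
    · rw [pp_eq b hb]; simp; omega
  simp only [h0, mul_add, sum_add_distrib]
  congr 1
  rw [sum_eq_single (x, 0)]
  · simp
  · rintro ⟨a, b⟩ h1 h2
    simp at h1 h2 ⊢
    intro hb; subst hb; simp at h1; exact absurd h1 (by tauto)
  · simp

noncomputable def S1 (x y : ℕ) : ℚ := ∑ p ∈ antidiagonal x, tt p.1 * (ww p.2 / ((p.2:ℚ)+y))

theorem S1_eq (x y : ℕ) (hx : 1 ≤ x) (hy : 1 ≤ y) :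
    S1 x y = pp x - y * ∑ j ∈ range x, ((y-1).factorial * (y:ℚ)^j / (y+j).factorial) * cc x (j+1) := by
  have hyQ : (y:ℚ) > 0 := by exact_mod_cast hy
  have h1 : S1 x y = ∑ p ∈ antidiagonal x, (tt p.1 * pp p.2 - y * (tt p.1 * (pp p.2 / ((p.2:ℚ)+y)))) := by
    unfold S1
    refine sum_congr rfl fun p _ => ?_
    rw [ww_eq]
    have : ((p.2:ℚ)+y) ≠ 0 := by positivity
    field_simp
    ring
  rw [h1, sum_sub_distrib, conv_tp x hx, ← mul_sum]
  congr 2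
  have h2 : ∀ p ∈ antidiagonal x, tt p.1 * (pp p.2 / ((p.2:ℚ)+y)) =
      ∑ j ∈ range (x+1), ((y-1).factorial * (y:ℚ)^j / (y+j).factorial) * (tt p.1 * cc p.2 j) := by
    intro p hp
    have hp' : p.2 ≤ x := by have := mem_antidiagonal.1 hp; omega
    rw [pp_div y p.2 hy, mul_sum]
    rw [← sum_subset (range_mono (show p.2+1 ≤ x+1 by omega))]
    · refine sum_congr rfl fun j _ => by ring
    · intro j _ hj
      rw [cc_lt _ _ (by simp at hj; omega)]; simp
  rw [sum_congr rfl h2, sum_comm]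
  simp only [← mul_sum, cc_conv]
  rw [sum_range_succ, cc_lt x (x+1) (by omega)]
  simp

theorem binom_id (x y : ℕ) (hx : 1 ≤ x) (hy : 1 ≤ y) (q : ℕ → ℚ)
    (hq : ∀ k, q k = (y:ℚ)^k / k.factorial * ((x:ℚ)^(x+y-k) / (x+y-k).factorial)) :
    ∑ j ∈ range x, q (y+1+j) * (y+1+j) * (1+j) + ∑ k ∈ range y, q k * (x+y-k) * (y-k)
      = x * y * tt (x+y) + x * y * (pp x * pp y) := by
  set d := x + y with hd
  have hdQ : (d:ℚ) = x + y := by rw [hd]; push_cast; ring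
  have hd0 : (d:ℚ) ≠ 0 := by rw [hdQ]; positivity
  have st : ∀ k < d, (y:ℚ) * (d - k) * q k = x * (k+1) * q (k+1) := by
    intro k hk
    obtain ⟨r, hr⟩ : ∃ r, d = k + 1 + r := ⟨d-(k+1), by omega⟩
    rw [hq, hq, show d - k = r+1 by omega, show d - (k+1) = r by omega, Nat.factorial_succ, Nat.factorial_succ]
    have h2 : (r.factorial:ℚ) ≠ 0 := by positivity
    have h3 : (k.factorial:ℚ) ≠ 0 := by positivity
    have h5 : ((k:ℚ)+1) ≠ 0 := by positivity
    have h6 : ((r:ℚ)+1) ≠ 0 := by positivity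
    rw [hr]
    push_cast
    field_simp
    ring
  have dk : ∀ k < d, (d:ℚ) * (k - y) * q k = x * k * q k - x * (k+1) * q (k+1) := by
    intro k hk
    rw [← st k hk, hdQ]; ring
  -- partial sums
  have P1 : ∀ n ≤ d, ∑ k ∈ range n, (d:ℚ) * (k - y) * q k * k = x * ∑ k ∈ range n, k * q k - x * n * q n * (n - 1) := by
    intro n hn
    induction n with
    | zero => simp
    | succ n ih =>
      rw [sum_range_succ, sum_range_succ, ih (by omega), dk n (by omega)]
      push_cast; ring
  have P2 : ∀ n ≤ d, ∑ k ∈ range n, (d:ℚ) * (k - y) * q k = - (x * n * q n) := by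
    intro n hn
    induction n with
    | zero => simp
    | succ n ih =>
      rw [sum_range_succ, ih (by omega), dk n (by omega)]
      push_cast; ring
  have mean : ∑ k ∈ range (d+1), k * q k = y * (pp d) := by
    obtain ⟨e, he⟩ : ∃ e, d = e + 1 := ⟨d-1, by omega⟩
    rw [sum_range_succ']
    simp only [Nat.cast_zero, zero_mul, add_zero]
    have hp : pp d = ∑ k ∈ range (e+1), ((y:ℚ)^k / k.factorial * ((x:ℚ)^(e-k) / (e-k).factorial)) := by
      have : pp d = (d:ℚ)^e / e.factorial := by
        unfold pp
        rw [he, Nat.factorial_succ]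
        have : (e.factorial:ℚ) ≠ 0 := by positivity
        have h6 : ((e:ℚ)+1) ≠ 0 := by positivity
        push_cast
        field_simp
        try ring
      rw [this, hdQ, add_comm (x:ℚ), add_pow, sum_div]
      refine sum_congr rfl fun k hk => ?_
      rw [Nat.cast_choose ℚ (show k ≤ e by simp at hk; omega)]
      have : (e.factorial:ℚ) ≠ 0 := by positivity
      have h1 : (k.factorial:ℚ) ≠ 0 := by positivity
      have h2 : ((e-k).factorial:ℚ) ≠ 0 := by positivity
      field_simp
    rw [hp, mul_sum, he]
    refine sum_congr rfl fun k hk => ?_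
    rw [hq, show d - (k+1) = e - k by omega, Nat.factorial_succ]
    have h1 : (k.factorial:ℚ) ≠ 0 := by positivity
    have h2 : ((e-k).factorial:ℚ) ≠ 0 := by positivity
    have h5 : ((k:ℚ)+1) ≠ 0 := by positivity
    push_cast
    field_simp
    ring
  have tot : ∑ k ∈ range (d+1), (d:ℚ) * (k - y) * q k * k = x * y * pp d := by
    rw [sum_range_succ, P1 d le_rfl]
    rw [sum_range_succ] at mean
    have : (x:ℚ) = d - y := by rw [hdQ]; ring
    linear_combination (x:ℚ) * mean - (d:ℚ) * q d * d * this
  have split : ∑ k ∈ range (d+1), (d:ℚ) * (k - y) * q k * k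
      = ∑ k ∈ range y, (d:ℚ) * (k - y) * q k * k + d * ∑ j ∈ range x, q (y+1+j) * (y+1+j) * (1+j) := by
    rw [show d + 1 = (y+1) + x by omega, sum_range_add, sum_range_succ, mul_sum]
    simp only [sub_self, mul_zero, zero_mul, add_zero]
    congr 1
    refine sum_congr rfl fun k hk => ?_
    push_cast
    ring
  have last : ∑ k ∈ range y, (d:ℚ) * (q k * (x+y-k) * (y-k)) =
     - (d:ℚ) * ∑ k ∈ range y, (d:ℚ) * (k - y) * q k + ∑ k ∈ range y, (d:ℚ) * (k - y) * q k * k := by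
    rw [mul_sum, ← sum_add_distrib]
    refine sum_congr rfl fun k hk => ?_
    rw [hdQ]; ring
  have hqy : q y = pp x * pp y := by
    rw [hq, show d - y = x by omega]; unfold pp; ring
  apply mul_left_cancel₀ hd0
  rw [mul_add, mul_sum (range y), last, P2 y (by omega)]
  have hpd := pp_eq d (by omega)
  rw [hqy]
  linear_combination -split + tot + (x:ℚ) * y * hpd

theorem E2 (x y : ℕ) (hx : 1 ≤ x) (hy : 1 ≤ y) :
    ww x * ww y = x * y * tt (x+y) + x * ww y * S1 x y + y * ww x * S1 y x := by
  rw [S1_eq x y hx hy, S1_eq y x hy hx]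
  have hxQ : (x:ℚ) ≠ 0 := by positivity
  have hyQ : (y:ℚ) ≠ 0 := by positivity
  have aux : ∀ x y : ℕ, 1 ≤ x → 1 ≤ y → ∀ j < x,
      (x:ℚ) * ww y * (y * (((y-1).factorial * (y:ℚ)^j / (y+j).factorial) * cc x (j+1)))
        = ((y:ℚ)^(y+1+j) / (y+1+j).factorial * ((x:ℚ)^(x-1-j) / (x-1-j).factorial)) * (y+1+j) * (1+j) := by
    intro x y hx hy j hj
    have := cc_formula (j+1) (x-1-j) (by omega)
    rw [show j + 1 + (x-1-j) = x by omega] at this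
    have e : ((j+1:ℕ):ℚ) + ((x-1-j:ℕ):ℚ) = x := by exact_mod_cast (by omega : j + 1 + (x-1-j) = x)
    rw [e] at this
    obtain ⟨z, rfl⟩ : ∃ z, y = z+1 := ⟨y-1, by omega⟩
    rw [show (z+1-1) = z by omega, show z+1+1+j = (z+1+j)+1 by ring, Nat.factorial_succ (z+1+j)]
    have h1 : (z.factorial:ℚ) ≠ 0 := by positivity
    have h2 : ((z+1+j).factorial:ℚ) ≠ 0 := by positivity
    have h3 : ((x-1-j).factorial:ℚ) ≠ 0 := by positivity
    have h4 : ((z:ℚ)+1+j+1) ≠ 0 := by positivity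
    have h5 : ((z:ℚ)+1) ≠ 0 := by positivity
    calc _ = ww (z+1) * (((z+1:ℕ):ℚ) * ((z.factorial * ((z+1:ℕ):ℚ)^j / (z+1+j).factorial))) * ((x:ℚ) * cc x (j+1)) := by ring
      _ = _ := by
        rw [this]; unfold ww; rw [Nat.factorial_succ z]
        push_cast
        field_simp
        ring
  have b := binom_id x y hx hy _ (fun k => rfl)
  have r2 : ∑ k ∈ range y, ((y:ℚ)^k / k.factorial * ((x:ℚ)^(x+y-k) / (x+y-k).factorial)) * (x+y-k) * (y-k)
     = ∑ j ∈ range y, ((x:ℚ)^(x+1+j) / (x+1+j).factorial * ((y:ℚ)^(y-1-j) / (y-1-j).factorial)) * (x+1+j) * (1+j) := by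
    rw [← sum_range_reflect]
    refine sum_congr rfl fun j hj => ?_
    have hj' : j < y := by simpa using hj
    rw [show x + y - (y-1-j) = x+1+j by omega]
    have e : ((y-1-j:ℕ):ℚ) = y - 1 - j := by
      rw [Nat.cast_sub (by omega), Nat.cast_sub (by omega)]; simp
    rw [e]; ring
  rw [r2, ← sum_congr rfl (fun j hj => aux y x hy hx j (by simpa using hj))] at b
  have r1 : ∑ j ∈ range x, ((y:ℚ)^(y+1+j) / (y+1+j).factorial * ((x:ℚ)^(x+y-(y+1+j)) / (x+y-(y+1+j)).factorial)) * (y+1+j) * (1+j)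
     = ∑ j ∈ range x, (x:ℚ) * ww y * (y * (((y-1).factorial * (y:ℚ)^j / (y+j).factorial) * cc x (j+1))) := by
    refine sum_congr rfl fun j hj => ?_
    rw [aux x y hx hy j (by simpa using hj), show x+y-(y+1+j) = x-1-j by omega]
  rw [r1] at b
  simp only [← mul_sum] at b
  simp only [mul_sub]
  rw [ww_eq, ww_eq] at *
  linear_combination b
end HZ

namespace HZ
open Finset Equiv Equiv.Perm

noncomputable def al (x : ℕ) : ℚ := ∑ p ∈ antidiagonal x, tt p.1 * ww p.2
noncomputable def be (x : ℕ) : ℚ := ∑ p ∈ antidiagonal x, p.1 * tt p.1 * ww p.2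
noncomputable def SQ (x y : ℕ) : ℚ := ∑ p ∈ antidiagonal x, ww p.1 * (ww p.2 / ((p.2:ℚ)+y))

theorem swap_conv (x : ℕ) (f : ℕ → ℕ → ℚ) : ∑ p ∈ antidiagonal x, f p.1 p.2 = ∑ p ∈ antidiagonal x, f p.2 p.1 := by
  rw [← Finset.Nat.sum_antidiagonal_swap]; rfl

theorem E1 (x : ℕ) : 2 * ((x:ℚ) - 1) * tt x = x * ∑ p ∈ antidiagonal x, tt p.1 * tt p.2 := by
  have := tt_rec x
  rw [tt_one] at this
  simp at this
  linear_combination this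

theorem ga_eq (x : ℕ) : ∑ p ∈ antidiagonal x, tt p.1 * (p.2 * ww p.2) = x * al x - be x := by
  unfold al be
  rw [mul_sum, ← sum_sub_distrib]
  refine sum_congr rfl fun p hp => ?_
  have : (x:ℚ) = p.1 + p.2 := by exact_mod_cast (mem_antidiagonal.1 hp).symm
  rw [this]; ring

theorem I1 (x : ℕ) : ((x:ℚ) - 1) * ww x = 2 * be x + x * al x := by
  have h := E1 x
  have h2 : (x:ℚ)^2 * (x * ∑ p ∈ antidiagonal x, tt p.1 * tt p.2) =
      x * (∑ p ∈ antidiagonal x, (ww p.1 * tt p.2 + 2 * ((p.1:ℚ) * p.2 * tt p.1 * tt p.2) + tt p.1 * ww p.2)) := by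
    rw [← mul_assoc, mul_comm ((x:ℚ)^2) (x:ℚ), mul_assoc, mul_sum]
    congr 1
    refine sum_congr rfl fun p hp => ?_
    have : (x:ℚ) = p.1 + p.2 := by exact_mod_cast (mem_antidiagonal.1 hp).symm
    rw [this, ← tt_eq, ← tt_eq]; ring
  rw [sum_add_distrib, sum_add_distrib, swap_conv x (fun a b => ww a * tt b)] at h2
  have h3 : ∑ p ∈ antidiagonal x, ww p.2 * tt p.1 = al x := by
    unfold al; exact sum_congr rfl fun p _ => mul_comm _ _
  have h4 : (x:ℚ) * ∑ p ∈ antidiagonal x, 2 * ((p.1:ℚ) * p.2 * tt p.1 * tt p.2) = 4 * be x := by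
    have : (x:ℚ) * ∑ p ∈ antidiagonal x, 2 * ((p.1:ℚ) * p.2 * tt p.1 * tt p.2) =
      2 * (∑ p ∈ antidiagonal x, p.1 * tt p.1 * ww p.2 + ∑ p ∈ antidiagonal x, p.2 * tt p.2 * ww p.1) := by
      rw [← sum_add_distrib, mul_sum, mul_sum]
      refine sum_congr rfl fun p hp => ?_
      have : (x:ℚ) = p.1 + p.2 := by exact_mod_cast (mem_antidiagonal.1 hp).symm
      rw [this, ← tt_eq, ← tt_eq]; ring
    rw [this, swap_conv x (fun a b => b * tt b * ww a)]
    unfold be; ring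
  have h5 : ∑ p ∈ antidiagonal x, tt p.1 * ww p.2 = al x := rfl
  rw [h3, h5] at h2
  have := tt_eq x
  linear_combination (1/2:ℚ) * ((x:ℚ)^2 * h + h2 + h4) - ((x:ℚ)-1) * this

theorem S1_sq (x y : ℕ) (hy : 1 ≤ y) : ((x:ℚ)+y)^2 * S1 x y = SQ x y + be x + (x+y) * al x := by
  have h : ((x:ℚ)+y)^2 * S1 x y = SQ x y + 2 * be x + (∑ p ∈ antidiagonal x, tt p.1 * (p.2 * ww p.2)) + y * al x := by
    unfold S1 SQ be al
    simp only [mul_sum]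
    rw [← sum_add_distrib, ← sum_add_distrib, ← sum_add_distrib]
    refine sum_congr rfl fun p hp => ?_
    have : (x:ℚ) = p.1 + p.2 := by exact_mod_cast (mem_antidiagonal.1 hp).symm
    have h0 : ((p.2:ℚ)+y) ≠ 0 := by positivity
    rw [this, ← tt_eq p.1]
    field_simp
    ring
  rw [h, ga_eq]; ring

theorem QQ (x y : ℕ) (hx : 1 ≤ x) (hy : 1 ≤ y) :
    x * y * ww (x+y) + x * ww y * SQ x y + y * ww x * SQ y x
     = ((x:ℚ)+y)^2 * ww x * ww y - x * ww y * (be x + (x+y) * al x) - y * ww x * (be y + (x+y) * al y) := by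
  have h := E2 x y hx hy
  have h1 := S1_sq x y hy
  have h2 := S1_sq y x hx
  have h3 := tt_eq (x+y)
  push_cast at h3
  linear_combination (-((x:ℚ)+y)^2) * h - x * ww y * h1 - y * ww x * h2 - x * y * h3

section alg
variable {ι : Type*} [DecidableEq ι]

noncomputable def hx (s : ι → ℕ) (a : ℕ) (I : Finset ι) : ℚ :=
  ((a:ℚ) + ∑ i ∈ I, (s i:ℚ))^((I.card:ℤ)-2) * ww a * ∏ i ∈ I, ww (s i)

noncomputable def hv (s : ι → ℕ) (C : Finset ι) : ℚ :=
  (∑ i ∈ C, (s i:ℚ))^((C.card:ℤ)-3) * ∏ i ∈ C, ww (s i)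

theorem hv_insert (s : ι → ℕ) (c : ι) (I : Finset ι) (h : c ∉ I) : hv s (insert c I) = hx s (s c) I := by
  unfold hv hx
  rw [sum_insert h, prod_insert h, card_insert_of_notMem h]
  push_cast
  rw [show (I.card:ℤ) + 1 - 3 = I.card - 2 by ring]; ring

def PS (F : Finset ι → Finset ι → ℚ) (D : Finset ι) : ℚ := ∑ I ∈ D.powerset, F I (D \ I)

theorem PS_empty (F : Finset ι → Finset ι → ℚ) : PS F ∅ = F ∅ ∅ := by simp [PS]

theorem PS_insert (F : Finset ι → Finset ι → ℚ) (a : ι) (D : Finset ι) (h : a ∉ D) :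
    PS F (insert a D) = PS (fun I J => F I (insert a J)) D + PS (fun I J => F (insert a I) J) D := by
  unfold PS
  rw [sum_powerset_insert h]
  congr 1
  · refine sum_congr rfl fun I hI => ?_
    rw [insert_sdiff_of_notMem _ (fun h' => h (mem_powerset.1 hI h'))]
  · refine sum_congr rfl fun I hI => ?_
    congr 1
    ext z; simp only [mem_sdiff, mem_insert]; constructor
    · rintro ⟨h1 | h1, h2⟩
      · subst h1; simp at h2
      · exact ⟨h1, by tauto⟩
    · rintro ⟨h1, h2⟩
      refine ⟨Or.inr h1, ?_⟩
      rintro (h3 | h3)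
      · subst h3; exact h h1
      · exact h2 h3

theorem PS_one (F : Finset ι → Finset ι → ℚ) (i : ι) : PS F {i} = F ∅ {i} + F {i} ∅ := by
  have h := PS_insert F i ∅ (by simp)
  simpa only [PS_empty, insert_empty_eq] using h

theorem PS_two (F : Finset ι → Finset ι → ℚ) (i j : ι) (hij : i ≠ j) :
    PS F {i, j} = F ∅ {i, j} + F {j} {i} + F {i} {j} + F {i, j} ∅ := by
  have h := PS_insert F i {j} (by simpa using hij)
  rw [h, PS_one, PS_one]; simp only [insert_empty_eq]; ring

theorem PS_three (F : Finset ι → Finset ι → ℚ) (i j k : ι) (hij : i ≠ j) (hik : i ≠ k) (hjk : j ≠ k) :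
    PS F {i, j, k} = F ∅ {i, j, k} + F {k} {i, j} + F {j} {i, k} + F {j, k} {i}
      + (F {i} {j, k} + F {i, k} {j} + F {i, j} {k} + F {i, j, k} ∅) := by
  have h := PS_insert F i {j, k} (by simp [hij, hik])
  rw [h, PS_two _ _ _ hjk, PS_two _ _ _ hjk]; simp only [insert_empty_eq]

theorem hx0 (s : ι → ℕ) (a : ℕ) : hx s a ∅ = tt a := by
  unfold hx
  rcases Nat.eq_zero_or_pos a with rfl | h
  · simp [ww, tt_zero]
  · have : (a:ℚ) ≠ 0 := by positivity
    simp only [sum_empty, card_empty, prod_empty, ← tt_eq]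
    norm_num
    field_simp
theorem hx1 (s : ι → ℕ) (a : ℕ) (i : ι) : hx s a {i} = ww a * ww (s i) / ((a:ℚ) + s i) := by
  unfold hx
  simp; ring
theorem hx2 (s : ι → ℕ) (a : ℕ) (i j : ι) (h : i ≠ j) : hx s a {i,j} = ww a * ww (s i) * ww (s j) := by
  unfold hx
  rw [card_pair h, prod_pair h]
  simp; ring
theorem hx3 (s : ι → ℕ) (a : ℕ) (i j k : ι) (h : i ≠ j) (h1 : i ≠ k) (h2 : j ≠ k) :
    hx s a {i,j,k} = (a + s i + s j + s k) * (ww a * ww (s i) * ww (s j) * ww (s k)) := by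
  unfold hx
  rw [card_eq_three.2 ⟨i,j,k,h,h1,h2,rfl⟩, prod_insert (by simp [h,h1]), prod_pair h2, sum_insert (by simp [h,h1]), sum_pair h2]
  norm_num; ring

noncomputable def cutS (s : ι → ℕ) (n : ℕ) (D : Finset ι) : ℚ :=
  ∑ p ∈ antidiagonal n, ∑ I ∈ D.powerset, hx s p.1 I * hx s p.2 (D \ I)

theorem cut0 (s : ι → ℕ) (n : ℕ) : (n:ℚ) * cutS s n ∅ = 2 * ((n:ℚ)-1) * tt n := by
  rw [E1]; simp [cutS, hx0]

theorem cut1 (s : ι → ℕ) (n : ℕ) (i : ι) : cutS s n {i} = 2 * (ww (s i) * S1 n (s i)) := by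
  have : ∀ p : ℕ × ℕ, (∑ I ∈ ({i}:Finset ι).powerset, hx s p.1 I * hx s p.2 ({i} \ I)) =
      tt p.1 * (ww p.2 * ww (s i) / ((p.2:ℚ) + s i)) + tt p.2 * (ww p.1 * ww (s i) / ((p.1:ℚ) + s i)) := by
    intro p
    have h := PS_insert (fun I J => hx s p.1 I * hx s p.2 J) i ∅ (by simp)
    simp only [PS_empty, insert_empty_eq, hx0, hx1] at h
    unfold PS at h
    rw [h]; ring
  unfold cutS
  simp only [this]
  rw [sum_add_distrib, swap_conv n (fun a b => tt b * (ww a * ww (s i) / ((a:ℚ) + s i)))]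
  unfold S1
  rw [mul_sum, ← sum_add_distrib, mul_sum]
  refine sum_congr rfl fun p _ => by ring

theorem cut2 (s : ι → ℕ) (n : ℕ) (i j : ι) (h : i ≠ j) (hi : 1 ≤ s i) (hj : 1 ≤ s j) :
    ((n:ℚ) + s i + s j) * cutS s n {i,j} = 2 * (ww (s i) * ww (s j) * ((n + s i + s j) * al n + SQ n (s i) + SQ n (s j))) := by
  have : ∀ p : ℕ × ℕ, (∑ I ∈ ({i,j}:Finset ι).powerset, hx s p.1 I * hx s p.2 ({i,j} \ I)) =
      (tt p.1 * (ww p.2 * ww (s i) * ww (s j)) + 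
       (ww p.1 * ww (s j) / ((p.1:ℚ) + s j)) * (ww p.2 * ww (s i) / ((p.2:ℚ) + s i)))
      + (tt p.2 * (ww p.1 * ww (s i) * ww (s j)) + 
       (ww p.2 * ww (s j) / ((p.2:ℚ) + s j)) * (ww p.1 * ww (s i) / ((p.1:ℚ) + s i))) := by
    intro p
    have h' := PS_two (fun I J => hx s p.1 I * hx s p.2 J) i j h
    simp only [hx0, hx1, hx2 _ _ i j h] at h'
    unfold PS at h'
    rw [h']; ring
  unfold cutS
  simp only [this]
  rw [sum_add_distrib, swap_conv n (fun a b => tt b * (ww a * ww (s i) * ww (s j)) + 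
       (ww b * ww (s j) / ((b:ℚ) + s j)) * (ww a * ww (s i) / ((a:ℚ) + s i)))]
  have hS : SQ n (s j) = ∑ p ∈ antidiagonal n, ww p.2 * (ww p.1 / ((p.1:ℚ)+s j)) := by
    unfold SQ; rw [swap_conv n (fun a b => ww a * (ww b / ((b:ℚ)+s j)))]
  rw [hS]
  unfold SQ al
  simp only [mul_sum, mul_add, ← sum_add_distrib]
  refine sum_congr rfl fun p hp => ?_
  have : (n:ℚ) = p.1 + p.2 := by exact_mod_cast (mem_antidiagonal.1 hp).symm
  have h0 : ((p.2:ℚ)+s i) ≠ 0 := by positivity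
  have h1 : ((p.1:ℚ)+s j) ≠ 0 := by positivity
  rw [this]
  field_simp
  ring

theorem cut3 (s : ι → ℕ) (n : ℕ) (i j k : ι) (h : i ≠ j) (h1 : i ≠ k) (h2 : j ≠ k) :
    cutS s n {i,j,k} = 2 * (ww (s i) * ww (s j) * ww (s k) *
      ((n * al n - be n) + (s i + s j + s k) * al n + SQ n (s i) + SQ n (s j) + SQ n (s k))) := by
  let f : ℕ → ℕ → ℚ := fun a b => tt a * ((b + s i + s j + s k) * (ww b * ww (s i) * ww (s j) * ww (s k)))
    + ww a * ww (s i) * ww (s j) * (ww b * ww (s k) / ((b:ℚ) + s k))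
    + ww a * ww (s i) * ww (s k) * (ww b * ww (s j) / ((b:ℚ) + s j))
    + ww a * ww (s j) * ww (s k) * (ww b * ww (s i) / ((b:ℚ) + s i))
  have : ∀ p : ℕ × ℕ, (∑ I ∈ ({i,j,k}:Finset ι).powerset, hx s p.1 I * hx s p.2 ({i,j,k} \ I)) =
      f p.1 p.2 + f p.2 p.1 := by
    intro p
    have h' := PS_three (fun I J => hx s p.1 I * hx s p.2 J) i j k h h1 h2
    simp only [hx0, hx1, hx2 _ _ i j h, hx2 _ _ i k h1, hx2 _ _ j k h2, hx3 _ _ i j k h h1 h2] at h'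
    unfold PS at h'
    rw [h']; simp only [f]; ring
  unfold cutS
  simp only [this]
  rw [sum_add_distrib, swap_conv n (fun a b => f b a), ← ga_eq]
  unfold SQ al
  simp only [mul_sum, mul_add, ← sum_add_distrib]
  refine sum_congr rfl fun p hp => ?_
  simp only [f]
  ring

theorem hv1 (s : ι → ℕ) (a : ι) : hv s {a} = tt (s a) := by
  rw [← insert_empty_eq, hv_insert _ _ _ (by simp), hx0]
theorem hv2 (s : ι → ℕ) (a b : ι) (h : a ≠ b) : hv s {a, b} = ww (s a) * ww (s b) / ((s a:ℚ) + s b) := by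
  rw [hv_insert _ _ _ (by simpa using h), hx1]
theorem hv3 (s : ι → ℕ) (i j k : ι) (h : i ≠ j) (h1 : i ≠ k) (h2 : j ≠ k) :
    hv s {i,j,k} = ww (s i) * ww (s j) * ww (s k) := by
  rw [hv_insert _ _ _ (by simp [h, h1]), hx2 _ _ _ _ h2]
theorem hv4 (s : ι → ℕ) (l i j k : ι) (h : i ≠ j) (h1 : i ≠ k) (h2 : j ≠ k) (h3 : l ≠ i) (h4 : l ≠ j) (h5 : l ≠ k) :
    hv s {l,i,j,k} = (s l + s i + s j + s k) * (ww (s l) * ww (s i) * ww (s j) * ww (s k)) := by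
  rw [hv_insert _ _ _ (by simp [h3, h4, h5]), hx3 _ _ _ _ _ h h1 h2]

noncomputable def RHS (s : ι → ℕ) (C : Finset ι) : ℚ :=
  (1/2) * ∑ i ∈ C, ∑ j ∈ C.erase i, (s i:ℚ) * s j * hx s (s i + s j) ((C.erase i).erase j)
   + (1/2) * ∑ i ∈ C, (s i:ℚ) * cutS s (s i) (C.erase i)

theorem alg_main (s : ι → ℕ) (C : Finset ι) (hC : C.Nonempty) (h4 : C.card ≤ 4) (hs : ∀ i ∈ C, 1 ≤ s i) :
    ((∑ i ∈ C, (s i:ℚ)) + C.card - 2) * hv s C = RHS s C := by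
  have hc : C.card = 1 ∨ C.card = 2 ∨ C.card = 3 ∨ C.card = 4 := by
    have := hC.card_pos; omega
  unfold RHS
  rcases hc with hc | hc | hc | hc
  · obtain ⟨a, rfl⟩ := card_eq_one.1 hc
    simp only [sum_singleton, erase_singleton, sum_empty, cut0, hv1, hc]
    push_cast; ring
  · obtain ⟨a, b, hab, rfl⟩ := card_eq_two.1 hc
    have ha := hs a (by simp)
    have hb := hs b (by simp)
    have e1 : ({a,b} : Finset ι).erase a = {b} := by grind
    have e2 : ({a,b} : Finset ι).erase b = {a} := by grind
    rw [sum_pair hab, sum_pair hab, sum_pair hab, e1, e2, hc]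
    simp only [sum_singleton, erase_singleton, hx0, cut1, hv2 s a b hab]
    have h := E2 _ _ ha hb
    have hne : ((s a:ℚ) + s b) ≠ 0 := by positivity
    rw [add_comm (s b) (s a)]
    field_simp
    push_cast
    linear_combination 2 * ((s a:ℚ)+s b) * h
  · obtain ⟨a, b, c, hab, hac, hbc, rfl⟩ := card_eq_three.1 hc
    have ha := hs a (by simp)
    have hb := hs b (by simp)
    have hcc := hs c (by simp)
    have e1 : ({a,b,c} : Finset ι).erase a = {b,c} := by grind
    have e2 : ({a,b,c} : Finset ι).erase b = {a,c} := by grind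
    have e3 : ({a,b,c} : Finset ι).erase c = {a,b} := by grind
    have p1 : ({b,c} : Finset ι).erase b = {c} := by grind
    have p2 : ({b,c} : Finset ι).erase c = {b} := by grind
    have p3 : ({a,c} : Finset ι).erase a = {c} := by grind
    have p4 : ({a,c} : Finset ι).erase c = {a} := by grind
    have p5 : ({a,b} : Finset ι).erase a = {b} := by grind
    have p6 : ({a,b} : Finset ι).erase b = {a} := by grind
    have sm : ∀ f : ι → ℚ, ∑ i ∈ ({a,b,c}:Finset ι), f i = f a + f b + f c := by
      intro f; rw [sum_insert (by simp [hab, hac]), sum_pair hbc]; ring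
    rw [sm, sm, sm, e1, e2, e3, sum_pair hab, sum_pair hac, sum_pair hbc, p1, p2, p3, p4, p5, p6, hc, hv3 s a b c hab hac hbc]
    simp only [hx1]
    have c1 := cut2 s (s a) b c hbc hb hcc
    have c2 := cut2 s (s b) a c hac ha hcc
    have c3 := cut2 s (s c) a b hab ha hb
    have q1 := QQ _ _ ha hb
    have q2 := QQ _ _ ha hcc
    have q3 := QQ _ _ hb hcc
    have i1 := I1 (s a)
    have i2 := I1 (s b)
    have i3 := I1 (s c)
    have hne : ((s a:ℚ) + s b + s c) ≠ 0 := by positivity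
    rw [add_comm (s b) (s a), add_comm (s c) (s a), add_comm (s c) (s b)]
    have hne2 : ((s a:ℚ) + s c + s b) ≠ 0 := by positivity
    have hne3 : ((s b:ℚ) + s c + s a) ≠ 0 := by positivity
    apply mul_left_cancel₀ hne
    have d1 : ∀ z, ((s a:ℚ) + s b + s c) * (z / ((s a:ℚ) + s b + s c)) = z := fun z => by field_simp
    have d2 : ∀ z, ((s a:ℚ) + s b + s c) * (z / ((s a:ℚ) + s c + s b)) = z := fun z => by field_simp; ring
    have d3 : ∀ z, ((s a:ℚ) + s b + s c) * (z / ((s b:ℚ) + s c + s a)) = z := fun z => by field_simp; ring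
    push_cast
    have g1 := d1 (ww (s a + s b) * ww (s c))
    have g2 := d2 (ww (s a + s c) * ww (s b))
    have g3 := d3 (ww (s b + s c) * ww (s a))
    linear_combination (-(s a:ℚ) * s b) * g1 + (-(s a:ℚ) * s c) * g2 + (-(s b:ℚ) * s c) * g3
      - (1/2:ℚ) * s a * c1 - (1/2:ℚ) * s b * c2 - (1/2:ℚ) * s c * c3
      - ww (s c) * q1 - ww (s b) * q2 - ww (s a) * q3
      - s a * ww (s b) * ww (s c) * i1 - s b * ww (s a) * ww (s c) * i2 - s c * ww (s a) * ww (s b) * i3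
  · obtain ⟨e, D, heD, rfl, hD⟩ := card_eq_succ.1 hc
    obtain ⟨a, b, c, hab, hac, hbc, rfl⟩ := card_eq_three.1 hD
    simp only [mem_insert, mem_singleton, not_or] at heD
    obtain ⟨hea, heb, hec⟩ := heD
    have ha := hs a (by simp)
    have hb := hs b (by simp)
    have hcc := hs c (by simp)
    have he := hs e (by simp)
    have e0 : ({e,a,b,c} : Finset ι).erase e = {a,b,c} := by grind
    have e1 : ({e,a,b,c} : Finset ι).erase a = {e,b,c} := by grind
    have e2 : ({e,a,b,c} : Finset ι).erase b = {e,a,c} := by grind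
    have e3 : ({e,a,b,c} : Finset ι).erase c = {e,a,b} := by grind
    have r3 : ∀ {x y z : ι}, x ≠ y → x ≠ z → y ≠ z → ({x,y,z}:Finset ι).erase x = {y,z} ∧ ({x,y,z}:Finset ι).erase y = {x,z}
       ∧ ({x,y,z}:Finset ι).erase z = {x,y} := by
      intro x y z h1 h2 h3; refine ⟨?_, ?_, ?_⟩ <;> grind
    have s3 : ∀ {x y z : ι}, x ≠ y → x ≠ z → y ≠ z → ∀ f : ι → ℚ, ∑ i ∈ ({x,y,z}:Finset ι), f i = f x + f y + f z := by
      intro x y z h1 h2 h3 f; rw [sum_insert (by simp [h1, h2]), sum_pair h3]; ring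
    have sm : ∀ f : ι → ℚ, ∑ i ∈ ({e,a,b,c}:Finset ι), f i = f e + f a + f b + f c := by
      intro f; rw [sum_insert (by simp [hea, heb, hec]), s3 hab hac hbc]; ring
    rw [sm, sm, sm, e0, e1, e2, e3, s3 hab hac hbc, s3 heb hec hbc, s3 hea hec hac, s3 hea heb hab,
      (r3 hab hac hbc).1, (r3 hab hac hbc).2.1, (r3 hab hac hbc).2.2,
      (r3 heb hec hbc).1, (r3 heb hec hbc).2.1, (r3 heb hec hbc).2.2,
      (r3 hea hec hac).1, (r3 hea hec hac).2.1, (r3 hea hec hac).2.2,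
      (r3 hea heb hab).1, (r3 hea heb hab).2.1, (r3 hea heb hab).2.2, hc,
      hv4 s e a b c hab hac hbc hea heb hec,
      hx2 _ _ b c hbc, hx2 _ _ a c hac, hx2 _ _ a b hab, hx2 _ _ b c hbc, hx2 _ _ e b heb, hx2 _ _ e c hec,
      hx2 _ _ a c hac, hx2 _ _ e c hec, hx2 _ _ e a hea, hx2 _ _ a b hab, hx2 _ _ e b heb, hx2 _ _ e a hea,
      cut3 s _ a b c hab hac hbc, cut3 s _ e b c heb hec hbc, cut3 s _ e a c hea hec hac, cut3 s _ e a b hea heb hab]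
    rw [add_comm (s b) (s a), add_comm (s c) (s a), add_comm (s c) (s b), add_comm (s a) (s e), add_comm (s b) (s e), add_comm (s c) (s e)]
    have q1 := QQ _ _ ha hb
    have q2 := QQ _ _ ha hcc
    have q3 := QQ _ _ hb hcc
    have q4 := QQ _ _ he ha
    have q5 := QQ _ _ he hb
    have q6 := QQ _ _ he hcc
    have i1 := I1 (s a)
    have i2 := I1 (s b)
    have i3 := I1 (s c)
    have i4 := I1 (s e)
    push_cast
    linear_combination - ww (s c) * ww (s e) * q1 - ww (s b) * ww (s e) * q2 - ww (s a) * ww (s e) * q3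
      - ww (s b) * ww (s c) * q4 - ww (s a) * ww (s c) * q5 - ww (s a) * ww (s b) * q6
      - 2 * (s a * ww (s b) * ww (s c) * ww (s e) * i1) - 2 * (s b * ww (s a) * ww (s c) * ww (s e) * i2)
      - 2 * (s c * ww (s a) * ww (s b) * ww (s e) * i3) - 2 * (s e * ww (s a) * ww (s b) * ww (s c) * i4)
end alg
end HZ

namespace HZ
open Finset Equiv Equiv.Perm
open scoped Classical

set_option linter.unusedSectionVars false
section lists
variable {α : Type*} [Fintype α]

noncomputable def sumL (A : Finset α) : ℕ → (List (Perm α) → ℚ) → ℚ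
  | 0, f => f []
  | m+1, f => (1/2) * ∑ p ∈ A.offDiag, sumL A m (fun L => f (swap p.1 p.2 :: L))

def SwL (A : Finset α) (L : List (Perm α)) : Prop :=
  ∀ τ ∈ L, ∃ x ∈ A, ∃ y ∈ A, x ≠ y ∧ τ = swap x y

theorem SwL.tail {A : Finset α} {τ : Perm α} {L} (h : SwL A (τ :: L)) : SwL A L :=
  fun s hs => h s (List.mem_cons_of_mem _ hs)

theorem sumL_congr (A : Finset α) (m : ℕ) (f g : List (Perm α) → ℚ)
    (h : ∀ L, SwL A L → L.length = m → f L = g L) : sumL A m f = sumL A m g := by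
  induction m generalizing f g with
  | zero => exact h [] (by intro τ hτ; simp at hτ) rfl
  | succ m ih =>
    unfold sumL
    congr 1
    refine sum_congr rfl fun p hp => ih _ _ fun L hL hl => h _ ?_ (by simp [hl])
    intro τ hτ
    rcases List.mem_cons.1 hτ with rfl | h'
    · have := mem_offDiag.1 hp
      exact ⟨p.1, this.1, p.2, this.2.1, this.2.2, rfl⟩
    · exact hL _ h'

theorem sumL_add (A : Finset α) (m : ℕ) (f g : List (Perm α) → ℚ) :
    sumL A m (fun L => f L + g L) = sumL A m f + sumL A m g := by
  induction m generalizing f g with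
  | zero => rfl
  | succ m ih =>
    simp only [sumL, ih, sum_add_distrib]; ring

theorem sumL_mul (A : Finset α) (m : ℕ) (c : ℚ) (f : List (Perm α) → ℚ) :
    sumL A m (fun L => c * f L) = c * sumL A m f := by
  induction m generalizing f with
  | zero => rfl
  | succ m ih =>
    simp only [sumL, ih, ← mul_sum]; ring

theorem sumL_zero (A : Finset α) (m : ℕ) : sumL A m (fun _ => 0) = 0 := by
  simpa using sumL_mul A m 0 (fun _ => 0)

theorem sumL_sum {ι : Type*} (s : Finset ι) (A : Finset α) (m : ℕ) (f : ι → List (Perm α) → ℚ) :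
    sumL A m (fun L => ∑ i ∈ s, f i L) = ∑ i ∈ s, sumL A m (f i) := by
  induction s using Finset.induction_on with
  | empty => simp [sumL_zero]
  | insert a s ha ih => simp only [sum_insert ha, sumL_add, ih]

def Inv (B : Finset α) (L : List (Perm α)) : Prop := ∀ τ ∈ L, ∀ z ∈ B, τ z ∈ B
def Tr (A : Finset α) (L : List (Perm α)) : Prop := ∀ B ⊆ A, B.Nonempty → Inv B L → B = A
noncomputable def fil (B : Finset α) (L : List (Perm α)) : List (Perm α) :=
  L.filter (fun τ => ∃ z ∈ B, τ z ≠ z)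

theorem Inv_cons {B : Finset α} {τ : Perm α} {L} : Inv B (τ :: L) ↔ (∀ z ∈ B, τ z ∈ B) ∧ Inv B L := by
  simp [Inv]

theorem swap_inv {B : Finset α} {x y : α} : (∀ z ∈ B, swap x y z ∈ B) ↔ (x ∈ B ↔ y ∈ B) := by
  constructor
  · intro h
    constructor
    · intro hx; simpa using h x hx
    · intro hx; simpa using h y hx
  · intro h z hz
    by_cases h1 : z = x
    · subst h1; simpa using h.1 hz
    · by_cases h2 : z = y
      · subst h2; simpa using h.2 hz
      · rwa [swap_apply_of_ne_of_ne h1 h2]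

theorem fil_cons_of {B : Finset α} {τ : Perm α} {L} (h : ∃ z ∈ B, τ z ≠ z) : fil B (τ :: L) = τ :: fil B L := by
  unfold fil; rw [List.filter_cons_of_pos (by simpa using h)]
theorem fil_cons_not {B : Finset α} {τ : Perm α} {L} (h : ∀ z ∈ B, τ z = z) : fil B (τ :: L) = fil B L := by
  unfold fil; rw [List.filter_cons_of_neg (by simpa using h)]

theorem swap_fix {B : Finset α} {x y : α} (hx : x ∉ B) (hy : y ∉ B) : ∀ z ∈ B, swap x y z = z := by
  intro z hz
  apply swap_apply_of_ne_of_ne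
  · rintro rfl; exact hx hz
  · rintro rfl; exact hy hz

theorem split_lemma (A B : Finset α) (hB : B ⊆ A) (m : ℕ) (f g : List (Perm α) → ℚ) :
    sumL A m (fun L => if Inv B L then f (fil B L) * g (fil (A \ B) L) else 0)
      = ∑ ij ∈ antidiagonal m, (m.choose ij.1 : ℚ) * (sumL B ij.1 f * sumL (A \ B) ij.2 g) := by
  induction m generalizing f g with
  | zero => simp [sumL, Inv, fil]
  | succ m ih =>
    have key : ∀ F : α × α → ℚ, (∀ p ∈ A.offDiag, ¬ (p.1 ∈ B ↔ p.2 ∈ B) → F p = 0) →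
        ∑ p ∈ A.offDiag, F p = ∑ p ∈ B.offDiag, F p + ∑ p ∈ (A \ B).offDiag, F p := by
      intro F hF
      rw [← sum_union]
      · symm
        apply sum_subset
        · intro p hp
          rcases mem_union.1 hp with h | h
          · rw [mem_offDiag] at h ⊢; exact ⟨hB h.1, hB h.2.1, h.2.2⟩
          · rw [mem_offDiag] at h ⊢; exact ⟨(mem_sdiff.1 h.1).1, (mem_sdiff.1 h.2.1).1, h.2.2⟩
        · intro p hp h
          apply hF p hp
          rw [mem_union, mem_offDiag, mem_offDiag] at h
          rw [mem_offDiag] at hp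
          simp only [mem_sdiff] at h
          tauto
      · rw [disjoint_left]
        intro p h1 h2
        rw [mem_offDiag] at h1 h2
        exact (mem_sdiff.1 h2.1).2 h1.1
    rw [sumL, key]
    · have e1 : ∀ p ∈ B.offDiag, sumL A m (fun L => if Inv B (swap p.1 p.2 :: L) then
            f (fil B (swap p.1 p.2 :: L)) * g (fil (A \ B) (swap p.1 p.2 :: L)) else 0)
          = ∑ ij ∈ antidiagonal m, (m.choose ij.1 : ℚ) * (sumL B ij.1 (fun L => f (swap p.1 p.2 :: L)) * sumL (A \ B) ij.2 g) := by
        intro p hp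
        rw [mem_offDiag] at hp
        rw [← ih]
        congr 1
        funext L
        rw [Inv_cons, swap_inv, fil_cons_of ⟨p.1, hp.1, by simpa using hp.2.2.symm⟩, fil_cons_not (swap_fix (by simp [hp.1]) (by simp [hp.2.1]))]
        simp [hp.1, hp.2.1]
      have e2 : ∀ p ∈ (A \ B).offDiag, sumL A m (fun L => if Inv B (swap p.1 p.2 :: L) then
            f (fil B (swap p.1 p.2 :: L)) * g (fil (A \ B) (swap p.1 p.2 :: L)) else 0)
          = ∑ ij ∈ antidiagonal m, (m.choose ij.1 : ℚ) * (sumL B ij.1 f * sumL (A \ B) ij.2 (fun L => g (swap p.1 p.2 :: L))) := by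
        intro p hp
        rw [mem_offDiag] at hp
        have h1 := (mem_sdiff.1 hp.1).2
        have h2 := (mem_sdiff.1 hp.2.1).2
        rw [← ih]
        congr 1
        funext L
        rw [Inv_cons, swap_inv, fil_cons_not (swap_fix h1 h2), fil_cons_of (B := A \ B) ⟨p.1, hp.1, by simpa using hp.2.2.symm⟩]
        simp [h1, h2]
      rw [sum_congr rfl e1, sum_congr rfl e2, Finset.sum_antidiagonal_choose_succ_mul (fun i j => sumL B i f * sumL (A \ B) j g) m]
      rw [sum_comm, sum_comm (s := (A \ B).offDiag)]
      simp only [← mul_sum, ← sum_mul]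
      rw [mul_add, mul_sum, mul_sum, add_comm]
      congr 1
      · refine sum_congr rfl fun p hp => ?_
        have hc : m.choose p.1 = m.choose p.2 := by
          rw [← mem_antidiagonal.1 hp]; exact Nat.choose_symm_add
        rw [sumL]; ring
      · refine sum_congr rfl fun p hp => ?_
        have hc : m.choose p.1 = m.choose p.2 := by
          rw [← mem_antidiagonal.1 hp]; exact Nat.choose_symm_add
        rw [sumL, hc]; ring
    · intro p hp h
      have : ∀ L, ¬ Inv B (swap p.1 p.2 :: L) := by
        intro L; rw [Inv_cons, swap_inv]; tauto
      simp only [this, if_false, sumL_zero]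

theorem Inv_sdiff {A B : Finset α} {L : List (Perm α)} (hA : Inv A L) (hB : Inv B L) (hL : ∀ τ ∈ L, ∀ z, τ (τ z) = z) :
    Inv (A \ B) L := by
  intro τ hτ z hz
  rw [mem_sdiff] at hz ⊢
  refine ⟨hA τ hτ z hz.1, fun h => hz.2 ?_⟩
  have := hB τ hτ _ h
  rwa [hL τ hτ] at this

theorem Inv_inter {A B : Finset α} {L : List (Perm α)} (hA : Inv A L) (hB : Inv B L) : Inv (A ∩ B) L := by
  intro τ hτ z hz
  rw [mem_inter] at hz ⊢
  exact ⟨hA τ hτ z hz.1, hB τ hτ z hz.2⟩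

theorem Inv_union {A B : Finset α} {L : List (Perm α)} (hA : Inv A L) (hB : Inv B L) : Inv (A ∪ B) L := by
  intro τ hτ z hz
  rw [mem_union] at hz ⊢
  exact hz.imp (hA τ hτ z) (hB τ hτ z)

theorem SwL.inv {A : Finset α} {L} (h : SwL A L) : Inv A L := by
  intro τ hτ
  obtain ⟨x, hx, y, hy, _, rfl⟩ := h τ hτ
  exact swap_inv.2 (by tauto)
theorem SwL.invol {A : Finset α} {L} (h : SwL A L) : ∀ τ ∈ L, ∀ z, τ (τ z) = z := by
  intro τ hτ z
  obtain ⟨x, hx, y, hy, _, rfl⟩ := h τ hτ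
  simp

theorem Tr_fil {B : Finset α} {L : List (Perm α)} : Tr B (fil B L) ↔ Tr B L := by
  unfold Tr
  refine forall_congr' fun C => forall_congr' fun hC => forall_congr' fun hne => ?_
  have : Inv C (fil B L) ↔ Inv C L := by
    constructor
    · intro h τ hτ z hz
      by_cases h' : ∃ z ∈ B, τ z ≠ z
      · exact h τ (by simpa [fil] using ⟨hτ, h'⟩) z hz
      · push Not at h'
        rwa [h' z (hC hz)]
    · intro h τ hτ z hz
      exact h τ (List.mem_of_mem_filter hτ) z hz
  rw [this]

theorem ind_id (A : Finset α) (L : List (Perm α)) (hL : SwL A L) (x y : α) (hx : x ∈ A) (hy : y ∈ A) :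
    (if Tr A (swap x y :: L) then (1:ℚ) else 0) = (if Tr A L then 1 else 0) +
     ∑ B ∈ A.powerset.filter (fun B => x ∈ B ∧ y ∉ B), if Inv B L ∧ Tr B L ∧ Tr (A \ B) L then 1 else 0 := by
  have hA := hL.inv
  have hi := hL.invol
  let C : Finset α := A.filter (fun z => ∀ B ⊆ A, x ∈ B → Inv B L → z ∈ B)
  have hC : ∀ B ⊆ A, x ∈ B → Inv B L → C ⊆ B := by
    intro B h1 h2 h3 z hz
    exact (mem_filter.1 hz).2 B h1 h2 h3
  have hxC : x ∈ C := mem_filter.2 ⟨hx, fun B _ h _ => h⟩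
  have hCA : C ⊆ A := filter_subset _ _
  have hCi : Inv C L := by
    intro τ hτ z hz
    have hz' := mem_filter.1 hz
    refine mem_filter.2 ⟨hA τ hτ z hz'.1, fun B h1 h2 h3 => h3 τ hτ z (hz'.2 B h1 h2 h3)⟩
  have hC2 : ∀ B ⊆ A, x ∉ B → Inv B L → Disjoint C B := by
    intro B h1 h2 h3
    have := hC (A \ B) sdiff_subset (mem_sdiff.2 ⟨hx, h2⟩) (Inv_sdiff hA h3 hi)
    rw [disjoint_left]
    intro z hz hz'
    exact (mem_sdiff.1 (this hz)).2 hz'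
  by_cases hyC : y ∈ C
  · have e1 : ∑ B ∈ A.powerset.filter (fun B => x ∈ B ∧ y ∉ B), (if Inv B L ∧ Tr B L ∧ Tr (A \ B) L then (1:ℚ) else 0) = 0 := by
      apply sum_eq_zero
      intro B hB
      rw [mem_filter, mem_powerset] at hB
      rw [if_neg]
      rintro ⟨h1, -⟩
      exact hB.2.2 (hC B hB.1 hB.2.1 h1 hyC)
    have e2 : Tr A (swap x y :: L) ↔ Tr A L := by
      unfold Tr
      refine forall_congr' fun B => forall_congr' fun hB => forall_congr' fun hne => ?_
      have : Inv B (swap x y :: L) ↔ Inv B L := by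
        rw [Inv_cons, swap_inv]
        refine ⟨fun h => h.2, fun h => ⟨⟨fun h1 => hC B hB h1 h hyC, fun h1 => ?_⟩, h⟩⟩
        by_contra h2
        exact disjoint_left.1 (hC2 B hB h2 h) hyC h1
      rw [this]
    rw [e1, add_zero]; simp only [e2]
  · have e0 : ¬ Tr A L := by
      intro h
      have := h C hCA ⟨x, hxC⟩ hCi
      exact hyC (this ▸ hy)
    have hCT : Tr C L := by
      intro B hB hne hBi
      by_cases h : x ∈ B
      · exact Subset.antisymm hB (hC B (hB.trans hCA) h hBi)
      · have := hC2 B (hB.trans hCA) h hBi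
        obtain ⟨z, hz⟩ := hne
        exact absurd hz (disjoint_left.1 this (hB hz))
    have e1 : ∑ B ∈ A.powerset.filter (fun B => x ∈ B ∧ y ∉ B), (if Inv B L ∧ Tr B L ∧ Tr (A \ B) L then (1:ℚ) else 0)
        = if Tr (A \ C) L then 1 else 0 := by
      rw [sum_eq_single C]
      · simp [hCi, hCT]
      · intro B hB hBC
        rw [mem_filter, mem_powerset] at hB
        rw [if_neg]
        rintro ⟨h1, h2, -⟩
        exact hBC (h2 C (hC B hB.1 hB.2.1 h1) ⟨x, hxC⟩ hCi).symm
      · intro h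
        exact absurd (mem_filter.2 ⟨mem_powerset.2 hCA, hxC, hyC⟩) h
    rw [e1, if_neg e0, zero_add]
    congr 1
    apply propext
    constructor
    · intro h B hB hne hBi
      have hBA : B ⊆ A := hB.trans sdiff_subset
      have hxB : x ∉ B := fun h' => (mem_sdiff.1 (hB h')).2 hxC
      by_cases hyB : y ∈ B
      · have := h (C ∪ B) (union_subset hCA hBA) ⟨x, by simp [hxC]⟩ (by
          rw [Inv_cons, swap_inv]; exact ⟨by simp [hxC, hyB], Inv_union hCi hBi⟩)
        rw [← this]
        ext z
        have := @hB z
        simp only [mem_sdiff, mem_union] at this ⊢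
        tauto
      · have := h B hBA hne (by rw [Inv_cons, swap_inv]; exact ⟨by simp [hxB, hyB], hBi⟩)
        rw [this] at hxB
        exact absurd hx hxB
    · intro h B hB hne hBi
      rw [Inv_cons, swap_inv] at hBi
      obtain ⟨h1, h2⟩ := hBi
      by_cases hxB : x ∈ B
      · have hyB := h1.1 hxB
        have hCB := hC B hB hxB h2
        have := h ((A \ C) ∩ B) inter_subset_left ⟨y, by simp [hy, hyC, hyB]⟩ (Inv_inter (Inv_sdiff hA hCi hi) h2)
        apply Subset.antisymm hB
        intro z hz
        by_cases hzC : z ∈ C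
        · exact hCB hzC
        · have h3 : z ∈ A \ C := mem_sdiff.2 ⟨hz, hzC⟩
          rw [← this] at h3
          exact (mem_inter.1 h3).2
      · have hyB : y ∉ B := fun h' => hxB (h1.2 h')
        have hd := hC2 B hB hxB h2
        have := h B (fun z hz => mem_sdiff.2 ⟨hB hz, fun h' => disjoint_left.1 hd h' hz⟩) hne h2
        rw [this] at hyB
        exact absurd (mem_sdiff.2 ⟨hy, hyC⟩) hyB

noncomputable def res (B : Finset α) (T : Perm α) : Perm α :=
  if h : ∀ z, T z ∈ B ↔ z ∈ B then ofSubtype (T.subtypePerm (p := fun z => z ∈ B) h) else 1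

theorem perm_inv {B : Finset α} {T : Perm α} (h : ∀ z ∈ B, T z ∈ B) (z : α) : T z ∈ B ↔ z ∈ B := by
  refine ⟨fun hz => ?_, h z⟩
  have : B.image T = B := by
    apply eq_of_subset_of_card_le
    · intro w hw; obtain ⟨v, hv, rfl⟩ := mem_image.1 hw; exact h v hv
    · rw [card_image_of_injective _ T.injective]
  rw [← this] at hz
  obtain ⟨w, hw, h'⟩ := mem_image.1 hz
  rwa [← T.injective h']

theorem res_apply {B : Finset α} {T : Perm α} (h : ∀ z ∈ B, T z ∈ B) (z : α) :
    res B T z = if z ∈ B then T z else z := by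
  unfold res
  rw [dif_pos (perm_inv h)]
  by_cases hz : z ∈ B
  · rw [if_pos hz, ofSubtype_apply_of_mem _ hz]; rfl
  · rw [if_neg hz, ofSubtype_apply_of_not_mem _ hz]

theorem prod_inv {B : Finset α} {L : List (Perm α)} (h : Inv B L) : ∀ z ∈ B, L.prod z ∈ B := by
  induction L with
  | nil => simp
  | cons τ L ih =>
    rw [Inv_cons] at h
    intro z hz
    rw [List.prod_cons, Perm.mul_apply]
    exact h.1 _ (ih h.2 z hz)

theorem prod_fix {A : Finset α} {L : List (Perm α)} (h : SwL A L) : ∀ z, z ∉ A → L.prod z = z := by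
  induction L with
  | nil => simp
  | cons τ L ih =>
    intro z hz
    rw [List.prod_cons, Perm.mul_apply, ih h.tail z hz]
    obtain ⟨x, hx, y, hy, _, rfl⟩ := h τ (by simp)
    apply swap_apply_of_ne_of_ne
    · rintro rfl; exact hz hx
    · rintro rfl; exact hz hy

theorem fil_prod {A B : Finset α} {L : List (Perm α)} (hL : SwL A L) (h : Inv B L) : (fil B L).prod = res B L.prod := by
  ext z
  rw [res_apply (prod_inv h)]
  induction L with
  | nil => simp [fil]
  | cons τ L ih =>
    have h' := h
    rw [Inv_cons] at h'
    have ih' := ih hL.tail h'.2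
    by_cases hm : ∃ z ∈ B, τ z ≠ z
    · rw [fil_cons_of hm, List.prod_cons, Perm.mul_apply, ih']
      by_cases hz : z ∈ B
      · simp [hz]
      · simp only [hz, if_false]
        obtain ⟨w, hw, hw'⟩ := hm
        obtain ⟨x, hx, y, hy, _, rfl⟩ := hL τ (by simp)
        have h1 := swap_inv.1 h'.1
        have : x ∈ B ∧ y ∈ B := by
          by_contra hc
          have hx : x ∉ B := by tauto
          have hy : y ∉ B := by tauto
          exact hw' (swap_fix hx hy w hw)
        apply swap_apply_of_ne_of_ne
        · rintro rfl; exact hz this.1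
        · rintro rfl; exact hz this.2
    · push Not at hm
      rw [fil_cons_not hm, ih']
      by_cases hz : z ∈ B
      · simp only [hz, if_true, List.prod_cons, Perm.mul_apply]
        exact (hm _ (prod_inv h'.2 z hz)).symm
      · simp [hz]

theorem prod_eq_iff {A B : Finset α} {L : List (Perm α)} {T : Perm α} (hB : B ⊆ A) (hL : SwL A L) (hI : Inv B L)
    (hT : ∀ z, z ∉ A → T z = z) (hTB : ∀ z ∈ B, T z ∈ B) :
    L.prod = T ↔ ((fil B L).prod = res B T ∧ (fil (A \ B) L).prod = res (A \ B) T) := by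
  have hI2 := Inv_sdiff hL.inv hI hL.invol
  have hTA : ∀ z ∈ A, T z ∈ A := by
    intro z hz
    by_contra h
    have := hT _ h
    rw [T.injective this] at h
    exact h hz
  have hT2 : ∀ z ∈ A \ B, T z ∈ A \ B := by
    intro z hz
    rw [mem_sdiff] at hz ⊢
    exact ⟨hTA z hz.1, fun h => hz.2 ((perm_inv hTB z).1 h)⟩
  rw [fil_prod hL hI, fil_prod hL hI2]
  constructor
  · rintro rfl; exact ⟨rfl, rfl⟩
  · rintro ⟨h1, h2⟩
    ext z
    by_cases hz : z ∈ A
    · by_cases hzB : z ∈ B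
      · have := congrArg (fun s : Perm α => s z) h1
        simpa only [res_apply (prod_inv hI), res_apply hTB, hzB, if_true] using this
      · have := congrArg (fun s : Perm α => s z) h2
        have hh : z ∈ A \ B := mem_sdiff.2 ⟨hz, hzB⟩
        simpa only [res_apply (prod_inv hI2), res_apply hT2, hh, if_true] using this
    · rw [hT z hz, prod_fix hL z hz]

noncomputable def cnt (A : Finset α) (T : Perm α) (m : ℕ) : ℚ :=
  sumL A m (fun L => if L.prod = T ∧ Tr A L then 1 else 0)

theorem cnt_succ (A : Finset α) (T : Perm α) (hT : ∀ z, z ∉ A → T z = z) (m : ℕ) :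
    cnt A T (m+1) = (1/2) * ∑ p ∈ A.offDiag, (cnt A (swap p.1 p.2 * T) m +
      ∑ B ∈ A.powerset.filter (fun B => (p.1 ∈ B ∧ p.2 ∉ B) ∧ ∀ z ∈ B, (swap p.1 p.2 * T) z ∈ B),
        ∑ ij ∈ antidiagonal m, (m.choose ij.1 : ℚ) * (cnt B (res B (swap p.1 p.2 * T)) ij.1 *
          cnt (A \ B) (res (A \ B) (swap p.1 p.2 * T)) ij.2)) := by
  conv_lhs => unfold cnt
  rw [sumL]
  congr 1
  refine sum_congr rfl fun p hp => ?_
  rw [mem_offDiag] at hp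
  obtain ⟨hx, hy, hxy⟩ := hp
  set T' := swap p.1 p.2 * T with hT'
  have hT2 : ∀ z, z ∉ A → T' z = z := by
    intro z hz
    rw [hT', Perm.mul_apply, hT z hz]
    apply swap_apply_of_ne_of_ne
    · rintro rfl; exact hz hx
    · rintro rfl; exact hz hy
  have hprod : ∀ L : List (Perm α), (swap p.1 p.2 :: L).prod = T ↔ L.prod = T' := by
    intro L
    rw [List.prod_cons, hT']
    constructor
    · intro h; rw [← h, ← mul_assoc, swap_mul_self, one_mul]
    · intro h; rw [h, ← mul_assoc, swap_mul_self, one_mul]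
  rw [sumL_congr A m _ (fun L => (if L.prod = T' ∧ Tr A L then 1 else 0) +
     ∑ B ∈ A.powerset.filter (fun B => (p.1 ∈ B ∧ p.2 ∉ B) ∧ ∀ z ∈ B, T' z ∈ B),
       if Inv B L then (if (fil B L).prod = res B T' ∧ Tr B (fil B L) then 1 else 0) *
         (if (fil (A \ B) L).prod = res (A \ B) T' ∧ Tr (A \ B) (fil (A \ B) L) then 1 else 0) else 0)]
  · rw [sumL_add, sumL_sum]
    congr 1
    refine sum_congr rfl fun B hB => ?_
    rw [mem_filter, mem_powerset] at hB
    exact split_lemma A B hB.1 m (fun L => if L.prod = res B T' ∧ Tr B L then 1 else 0)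
      (fun L => if L.prod = res (A \ B) T' ∧ Tr (A \ B) L then 1 else 0)
  · intro L hL _
    simp only [hprod, Tr_fil]
    by_cases hp : L.prod = T'
    · have := ind_id A L hL p.1 p.2 hx hy
      simp only [hp, true_and]
      rw [this]
      congr 1
      rw [← filter_filter (fun B : Finset α => p.1 ∈ B ∧ p.2 ∉ B) (fun B : Finset α => ∀ z ∈ B, T' z ∈ B), sum_filter (fun B : Finset α => ∀ z ∈ B, T' z ∈ B)]
      refine sum_congr rfl fun B hB => ?_
      rw [mem_filter, mem_powerset] at hB
      by_cases hI : Inv B L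
      · have hTB : ∀ z ∈ B, T' z ∈ B := by rw [← hp]; exact prod_inv hI
        have := (prod_eq_iff hB.1 hL hI hT2 hTB).1 hp
        rw [if_pos hTB]
        simp only [hI, this.1, this.2, true_and, if_true]
        by_cases h1 : Tr B L <;> by_cases h2 : Tr (A \ B) L <;> simp [h1, h2]
      · simp [hI]
    · simp only [hp, false_and, if_false, zero_add]
      symm
      apply sum_eq_zero
      intro B hB
      rw [mem_filter, mem_powerset] at hB
      by_cases hI : Inv B L
      · have := (not_congr (prod_eq_iff hB.1 hL hI hT2 hB.2.2)).1 hp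
        rw [if_pos hI]
        by_cases h1 : (fil B L).prod = res B T'
        · have h2 : ¬ (fil (A \ B) L).prod = res (A \ B) T' := fun h => this ⟨h1, h⟩
          simp [h2]
        · simp [h1]
      · simp [hI]
end lists
end HZ

namespace HZ
open Finset Equiv Equiv.Perm
open scoped Classical
set_option linter.unusedSectionVars false
section orbits
variable {α : Type*} [Fintype α]

noncomputable def orb (T : Perm α) (x : α) : Finset α := univ.filter (fun z => T.SameCycle x z)

theorem mem_orb {T : Perm α} {x z : α} : z ∈ orb T x ↔ T.SameCycle x z := by simp [orb]
theorem self_mem_orb (T : Perm α) (x : α) : x ∈ orb T x := mem_orb.2 (SameCycle.refl _ _)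
theorem orb_eq_iff {T : Perm α} {x y : α} : orb T x = orb T y ↔ T.SameCycle x y := by
  constructor
  · intro h
    have := self_mem_orb T y
    rw [← h] at this
    exact mem_orb.1 this
  · intro h
    ext z
    rw [mem_orb, mem_orb]
    exact ⟨fun h' => h.symm.trans h', fun h' => h.trans h'⟩
theorem orb_eq_of_mem {T : Perm α} {x z : α} (h : z ∈ orb T x) : orb T z = orb T x :=
  (orb_eq_iff.2 (mem_orb.1 h)).symm
theorem apply_mem_orb {T : Perm α} {x z : α} : T z ∈ orb T x ↔ z ∈ orb T x := by
  rw [mem_orb, mem_orb, sameCycle_apply_right]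

theorem iter_mem {T : Perm α} {c : Finset α} (h : ∀ w ∈ c, T w ∈ c) {z : α} (hz : z ∈ c) (n : ℕ) : T^[n] z ∈ c := by
  induction n with
  | zero => exact hz
  | succ n ih => rw [Function.iterate_succ_apply']; exact h _ ih

theorem mem_orb_iff {T : Perm α} {x z : α} : z ∈ orb T x ↔ ∃ n : ℕ, T^[n] x = z := by
  rw [mem_orb]
  constructor
  · intro h
    obtain ⟨i, -, hi⟩ := h.exists_pow_eq'
    exact ⟨i, by rw [iterate_eq_pow]; exact hi⟩
  · rintro ⟨n, rfl⟩
    rw [iterate_eq_pow]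
    exact ⟨n, by simp⟩

theorem orb_char {T : Perm α} {c : Finset α} {z : α} (hz : z ∈ c) (h : ∀ w ∈ c, T w ∈ c)
    (h2 : ∀ w ∈ c, ∃ n : ℕ, T^[n] z = w) : orb T z = c := by
  ext w
  rw [mem_orb_iff]
  refine ⟨?_, h2 w⟩
  rintro ⟨n, rfl⟩
  exact iter_mem h hz n

theorem orb_subset {T : Perm α} {B : Finset α} (h : ∀ w ∈ B, T w ∈ B) {z : α} (hz : z ∈ B) : orb T z ⊆ B := by
  intro w hw
  obtain ⟨n, rfl⟩ := mem_orb_iff.1 hw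
  exact iter_mem h hz n

theorem minP_pos (T : Perm α) (x : α) : 0 < Function.minimalPeriod T x := by
  apply Function.minimalPeriod_pos_of_mem_periodicPts
  obtain ⟨n, hn, h⟩ := isOfFinOrder_iff_pow_eq_one.1 (isOfFinOrder_of_finite T)
  refine ⟨n, hn, ?_⟩
  rw [Function.IsPeriodicPt, Function.IsFixedPt, iterate_eq_pow, h]; rfl

theorem iter_inj {T : Perm α} {x : α} {i j : ℕ} (hi : i < Function.minimalPeriod T x)
    (hj : j < Function.minimalPeriod T x) (h : T^[i] x = T^[j] x) : i = j :=
  Function.iterate_injOn_Iio_minimalPeriod hi hj h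

theorem orb_eq_image (T : Perm α) (x : α) :
    orb T x = (range (Function.minimalPeriod T x)).image (fun j => T^[j] x) := by
  ext z
  rw [mem_orb_iff, mem_image]
  constructor
  · rintro ⟨n, rfl⟩
    refine ⟨n % Function.minimalPeriod T x, mem_range.2 (Nat.mod_lt _ (minP_pos T x)), ?_⟩
    exact Function.iterate_mod_minimalPeriod_eq
  · rintro ⟨n, -, rfl⟩; exact ⟨n, rfl⟩

theorem card_orb (T : Perm α) (x : α) : (orb T x).card = Function.minimalPeriod T x := by
  rw [orb_eq_image, card_image_of_injOn, card_range]
  intro i hi j hj h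
  exact iter_inj (by simpa using hi) (by simpa using hj) h

theorem exists_iter {T : Perm α} {x y : α} (h : y ∈ orb T x) : ∃ k < Function.minimalPeriod T x, T^[k] x = y := by
  rw [orb_eq_image, mem_image] at h
  obtain ⟨k, hk, h⟩ := h
  exact ⟨k, mem_range.1 hk, h⟩

theorem cut_orb (T : Perm α) (x y : α) (k : ℕ) (hk : 0 < k) (hkn : k < Function.minimalPeriod T x) (hy : T^[k] x = y) :
    orb (swap x y * T) x = (range k).image (fun j => T^[j] x) := by
  have hT' : ∀ j, j + 1 < k → (swap x y * T) (T^[j] x) = T^[j+1] x := by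
    intro j hj
    rw [Perm.mul_apply, ← Function.iterate_succ_apply' (⇑T)]
    apply swap_apply_of_ne_of_ne
    · intro h
      have := iter_inj (i := j+1) (j := 0) (by omega) (by omega) h
      omega
    · intro h
      have := iter_inj (i := j+1) (j := k) (by omega) (by omega) (h.trans hy.symm)
      omega
  apply orb_char
  · exact mem_image.2 ⟨0, mem_range.2 hk, rfl⟩
  · intro w hw
    obtain ⟨j, hj, rfl⟩ := mem_image.1 hw
    rw [mem_range] at hj
    by_cases h : j + 1 < k
    · simp only [hT' j h]
      exact mem_image.2 ⟨j+1, mem_range.2 h, rfl⟩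
    · have : j + 1 = k := by omega
      refine mem_image.2 ⟨0, mem_range.2 hk, ?_⟩
      simp only [Perm.mul_apply]
      rw [← Function.iterate_succ_apply' (⇑T), Nat.succ_eq_add_one, this, hy]
      simp
  · intro w hw
    obtain ⟨j, hj, rfl⟩ := mem_image.1 hw
    rw [mem_range] at hj
    refine ⟨j, ?_⟩
    clear hw
    induction j with
    | zero => rfl
    | succ j ih =>
      rw [Function.iterate_succ_apply', ih (by omega)]
      exact hT' j hj

theorem cut_lemma (T : Perm α) (x y : α) (k : ℕ) (hk : 0 < k) (hkn : k < Function.minimalPeriod T x) (hy : T^[k] x = y) :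
    orb (swap x y * T) x ∪ orb (swap x y * T) y = orb T x ∧ y ∉ orb (swap x y * T) x ∧
    (orb (swap x y * T) x).card = k ∧ (orb (swap x y * T) y).card = (orb T x).card - k ∧
    ∀ z, z ∉ orb T x → orb (swap x y * T) z = orb T z := by
  have hyx : y ∈ orb T x := mem_orb_iff.2 ⟨k, hy⟩
  have hoy : orb T y = orb T x := orb_eq_of_mem hyx
  have hm : Function.minimalPeriod T y = Function.minimalPeriod T x := by
    rw [← card_orb, ← card_orb, hoy]
  have hback : T^[Function.minimalPeriod T x - k] y = x := by
    rw [← hy, ← Function.iterate_add_apply, Nat.sub_add_cancel hkn.le]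
    exact Function.iterate_minimalPeriod
  have gcard : ∀ (a b : α) (j : ℕ), 0 < j → j < Function.minimalPeriod T a → T^[j] a = b →
      (orb (swap a b * T) a).card = j ∧ orb (swap a b * T) a ⊆ orb T a := by
    intro a b j h0 h1 h2
    rw [cut_orb T a b j h0 h1 h2]
    constructor
    · rw [card_image_of_injOn, card_range]
      intro i hi l hl h
      have h3 := mem_range.1 (mem_coe.1 hi)
      have h4 := mem_range.1 (mem_coe.1 hl)
      exact iter_inj (by omega) (by omega) h
    · intro w hw
      obtain ⟨l, _, rfl⟩ := mem_image.1 hw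
      exact mem_orb_iff.2 ⟨l, rfl⟩
  obtain ⟨c1, s1⟩ := gcard x y k hk hkn hy
  obtain ⟨c2, s2⟩ := gcard y x (Function.minimalPeriod T x - k) (by omega) (by omega) hback
  rw [swap_comm] at c2 s2
  rw [hoy] at s2
  have hyn : y ∉ orb (swap x y * T) x := by
    rw [cut_orb T x y k hk hkn hy, mem_image]
    rintro ⟨j, hj, h⟩
    rw [mem_range] at hj
    have := iter_inj (by omega) hkn (h.trans hy.symm)
    omega
  have hd : Disjoint (orb (swap x y * T) x) (orb (swap x y * T) y) := by
    rw [disjoint_left]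
    intro z h1 h2
    apply hyn
    rw [← orb_eq_of_mem h1, orb_eq_of_mem h2]
    exact self_mem_orb _ _
  refine ⟨?_, hyn, c1, by rw [c2, card_orb], ?_⟩
  · apply eq_of_subset_of_card_le (union_subset s1 s2)
    rw [card_union_of_disjoint hd, c1, c2, card_orb]
    omega
  · intro z hz
    have hT' : ∀ w ∈ orb T z, (swap x y * T) w = T w := by
      intro w hw
      have hw' : T w ∈ orb T z := apply_mem_orb.2 hw
      rw [Perm.mul_apply]
      apply swap_apply_of_ne_of_ne
      · intro h
        apply hz
        rw [h] at hw'
        rw [orb_eq_of_mem hw']; exact self_mem_orb _ _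
      · intro h
        apply hz
        rw [h] at hw'
        rw [← hoy, orb_eq_of_mem hw']; exact self_mem_orb _ _
    apply orb_char (self_mem_orb _ _)
    · intro w hw
      rw [hT' w hw]; exact apply_mem_orb.2 hw
    · intro w hw
      obtain ⟨n, rfl⟩ := mem_orb_iff.1 hw
      refine ⟨n, ?_⟩
      clear hw
      induction n with
      | zero => rfl
      | succ n ih =>
        rw [Function.iterate_succ_apply', ih, Function.iterate_succ_apply']
        exact hT' _ (mem_orb_iff.2 ⟨n, rfl⟩)

theorem join_same (T : Perm α) (x y : α) (h : y ∉ orb T x) : y ∈ orb (swap x y * T) x := by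
  have key : ∀ j, j < Function.minimalPeriod T x → (swap x y * T)^[j] x = T^[j] x := by
    intro j
    induction j with
    | zero => intro _; rfl
    | succ j ih =>
      intro hj
      rw [Function.iterate_succ_apply', ih (by omega), Perm.mul_apply, ← Function.iterate_succ_apply' (⇑T)]
      apply swap_apply_of_ne_of_ne
      · intro h
        have := iter_inj (i := j+1) (j := 0) (by omega) (by omega) h
        omega
      · intro h'
        exact h (mem_orb_iff.2 ⟨_, h'⟩)
  have hp := minP_pos T x
  refine mem_orb_iff.2 ⟨Function.minimalPeriod T x, ?_⟩
  obtain ⟨n, hn⟩ : ∃ n, Function.minimalPeriod T x = n + 1 := ⟨_, (Nat.succ_pred_eq_of_pos hp).symm⟩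
  rw [hn, Function.iterate_succ_apply', key n (by omega), Perm.mul_apply, ← Function.iterate_succ_apply' (⇑T),
    Nat.succ_eq_add_one, ← hn, Function.iterate_minimalPeriod]
  simp

noncomputable def cyc (A : Finset α) (T : Perm α) : Finset (Finset α) := A.image (orb T)

theorem sup_inv {A : Finset α} {T : Perm α} (hT : ∀ z, z ∉ A → T z = z) : ∀ z ∈ A, T z ∈ A := by
  intro z hz
  by_contra h
  have := hT _ h
  rw [T.injective this] at h
  exact h hz

theorem mem_cyc_eq {A : Finset α} {T : Perm α} {c : Finset α} (hc : c ∈ cyc A T) {z : α} (hz : z ∈ c) : orb T z = c := by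
  obtain ⟨w, hw, rfl⟩ := mem_image.1 hc
  exact orb_eq_of_mem hz

theorem sum_cyc (A : Finset α) (T : Perm α) (hT : ∀ z ∈ A, T z ∈ A) (F : Finset α → ℚ) :
    ∑ x ∈ A, F (orb T x) = ∑ c ∈ cyc A T, (c.card : ℚ) * F c := by
  rw [Finset.sum_comp F (orb T)]
  refine sum_congr rfl fun c hc => ?_
  rw [nsmul_eq_mul]
  congr 2
  congr 1
  ext z
  rw [mem_filter]
  constructor
  · rintro ⟨_, rfl⟩; exact self_mem_orb _ _
  · intro hz
    refine ⟨?_, mem_cyc_eq hc hz⟩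
    obtain ⟨w, hw, rfl⟩ := mem_image.1 hc
    exact orb_subset hT hw hz

theorem card_pos_of_cyc {A : Finset α} {T : Perm α} {c : Finset α} (hc : c ∈ cyc A T) : 1 ≤ c.card := by
  obtain ⟨w, hw, rfl⟩ := mem_image.1 hc
  exact card_pos.2 ⟨w, self_mem_orb _ _⟩

/-- cycles after a cut, `D` = the other cycles -/
theorem cyc_cut (A : Finset α) (T : Perm α) (x y : α) (hx : x ∈ A) (hxy : x ≠ y) (hy : y ∈ orb T x)
    (hT : ∀ z ∈ A, T z ∈ A) :
    cyc A (swap x y * T) = insert (orb (swap x y * T) x) (insert (orb (swap x y * T) y) ((cyc A T).erase (orb T x)))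
    ∧ orb (swap x y * T) x ∉ insert (orb (swap x y * T) y) ((cyc A T).erase (orb T x))
    ∧ orb (swap x y * T) y ∉ (cyc A T).erase (orb T x) := by
  obtain ⟨k, hk, hky⟩ := exists_iter hy
  have hk0 : 0 < k := by
    rcases Nat.eq_zero_or_pos k with rfl | h
    · exact absurd hky hxy
    · exact h
  obtain ⟨h1, h2, -, -, h5⟩ := cut_lemma T x y k hk0 hk hky
  have hyA : y ∈ A := orb_subset hT hx hy
  have hne : ∀ w, w ∈ orb T x → ∀ S, orb S w ∉ (cyc A T).erase (orb T x) := by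
    intro w hw S h
    rw [mem_erase] at h
    apply h.1
    rw [← mem_cyc_eq h.2 (self_mem_orb S w), orb_eq_of_mem hw]
  refine ⟨?_, ?_, hne y hy _⟩
  · ext c
    simp only [mem_insert, mem_erase]
    constructor
    · intro hc
      obtain ⟨w, hw, rfl⟩ := mem_image.1 hc
      by_cases hwx : w ∈ orb T x
      · rw [← h1, mem_union] at hwx
        rcases hwx with h | h
        · exact Or.inl (orb_eq_of_mem h)
        · exact Or.inr (Or.inl (orb_eq_of_mem h))
      · right; right
        rw [h5 w hwx]
        refine ⟨fun h => hwx ?_, mem_image_of_mem _ hw⟩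
        rw [← h]; exact self_mem_orb _ _
    · rintro (rfl | rfl | ⟨hc1, hc2⟩)
      · exact mem_image_of_mem _ hx
      · exact mem_image_of_mem _ hyA
      · obtain ⟨w, hw, rfl⟩ := mem_image.1 hc2
        rw [← h5 w]
        · exact mem_image_of_mem _ hw
        · intro h; exact hc1 (orb_eq_of_mem h)
  · rw [mem_insert]
    rintro (h | h)
    · apply h2; rw [h]; exact self_mem_orb _ _
    · exact hne x (self_mem_orb _ _) _ h

theorem orb_res {B : Finset α} {T : Perm α} (hB : ∀ z ∈ B, T z ∈ B) {z : α} (hz : z ∈ B) : orb (res B T) z = orb T z := by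
  have hk : ∀ w ∈ B, res B T w = T w := fun w hw => by rw [res_apply hB, if_pos hw]
  have hit : ∀ n : ℕ, (res B T)^[n] z = T^[n] z := by
    intro n
    induction n with
    | zero => rfl
    | succ n ih =>
      rw [Function.iterate_succ_apply', Function.iterate_succ_apply', ih]
      exact hk _ (iter_mem hB hz n)
  ext w
  simp only [mem_orb_iff, hit]

theorem cyc_res {B : Finset α} {T : Perm α} (hB : ∀ z ∈ B, T z ∈ B) : cyc B (res B T) = cyc B T :=
  image_congr fun _ hz => orb_res hB hz

theorem cyc_sdiff {A B : Finset α} {T : Perm α} (hB : B ⊆ A) (hT : ∀ z ∈ B, T z ∈ B) : cyc (A \ B) T = cyc A T \ cyc B T := by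
  ext c
  rw [mem_sdiff]
  constructor
  · intro h
    obtain ⟨w, hw, rfl⟩ := mem_image.1 h
    rw [mem_sdiff] at hw
    refine ⟨mem_image_of_mem _ hw.1, fun h' => hw.2 ?_⟩
    obtain ⟨v, hv, h⟩ := mem_image.1 h'
    have := orb_subset hT hv
    rw [h] at this
    exact this (self_mem_orb _ _)
  · rintro ⟨h1, h2⟩
    obtain ⟨w, hw, rfl⟩ := mem_image.1 h1
    exact mem_image_of_mem _ (mem_sdiff.2 ⟨hw, fun h => h2 (mem_image_of_mem _ h)⟩)

end orbits
end HZ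

namespace HZ
open Finset Equiv Equiv.Perm
open scoped Classical
set_option linter.unusedSectionVars false
section hur
variable {α : Type*} [Fintype α]

theorem sum_offD (A : Finset α) (F : α × α → ℚ) : ∑ p ∈ A.offDiag, F p = ∑ x ∈ A, ∑ y ∈ A.erase x, F (x, y) := by
  have : A.offDiag = (A ×ˢ A).filter (fun p => p.1 ≠ p.2) := by
    ext p; simp only [mem_offDiag, mem_filter, mem_product]; tauto
  rw [this, sum_filter, sum_product]
  refine sum_congr rfl fun x _ => ?_
  rw [← sum_filter]
  refine sum_congr ?_ fun _ _ => rfl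
  ext y; simp only [mem_filter, mem_erase]; tauto

theorem cut_bij (A : Finset α) (T : Perm α) (x y : α) (hx : x ∈ A) (hxy : x ≠ y) (hy : y ∈ orb T x)
    (hT : ∀ z ∈ A, T z ∈ A) (G : Finset (Finset α) → Finset (Finset α) → ℚ) :
    ∑ B ∈ A.powerset.filter (fun B => (x ∈ B ∧ y ∉ B) ∧ ∀ z ∈ B, (swap x y * T) z ∈ B),
        G (cyc B (swap x y * T)) (cyc (A \ B) (swap x y * T))
      = ∑ I ∈ ((cyc A T).erase (orb T x)).powerset, G (insert (orb (swap x y * T) x) I)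
          (insert (orb (swap x y * T) y) ((cyc A T).erase (orb T x) \ I)) := by
  obtain ⟨h1, h2, h3⟩ := cyc_cut A T x y hx hxy hy hT
  set T' := swap x y * T with hT'
  set D := (cyc A T).erase (orb T x) with hD
  set o1 := orb T' x with ho1
  set o2 := orb T' y with ho2
  have hyA : y ∈ A := orb_subset hT hx hy
  have hT'A : ∀ z ∈ A, T' z ∈ A := by
    intro z hz
    rw [hT', Perm.mul_apply]
    exact swap_inv.2 (by tauto) _ (hT z hz)
  rw [mem_insert, not_or] at h2
  have hDc : ∀ c ∈ D, c ∈ cyc A T' := fun c hc => by rw [h1]; simp [hc]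
  have hcA : ∀ c ∈ cyc A T', c ⊆ A := by
    intro c hc
    obtain ⟨w, hw, rfl⟩ := mem_image.1 hc
    exact orb_subset hT'A hw
  have hcI : ∀ c ∈ cyc A T', ∀ z ∈ c, T' z ∈ c := by
    intro c hc z hz
    obtain ⟨w, hw, rfl⟩ := mem_image.1 hc
    exact apply_mem_orb.2 hz
  have ho1c : o1 ∈ cyc A T' := mem_image_of_mem _ hx
  have hins : ∀ B, x ∈ B → cyc B T' = insert o1 ((cyc B T').erase o1) := by
    intro B hB
    rw [insert_erase]
    exact mem_image_of_mem _ hB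
  refine sum_bij' (fun B _ => (cyc B T').erase o1) (fun I _ => o1 ∪ I.biUnion id) ?_ ?_ ?_ ?_ ?_
  · intro B hB
    rw [mem_filter, mem_powerset] at hB
    obtain ⟨hBA, ⟨hxB, hyB⟩, hBi⟩ := hB
    rw [mem_powerset]
    intro c hc
    rw [mem_erase] at hc
    obtain ⟨w, hw, rfl⟩ := mem_image.1 hc.2
    have : orb T' w ∈ cyc A T' := mem_image_of_mem _ (hBA hw)
    rw [h1, mem_insert, mem_insert] at this
    rcases this with h | h | h
    · exact absurd h hc.1
    · exfalso
      apply hyB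
      apply orb_subset hBi hw
      rw [h]; exact self_mem_orb _ _
    · exact h
  · intro I hI
    rw [mem_powerset] at hI
    rw [mem_filter, mem_powerset]
    refine ⟨?_, ⟨?_, ?_⟩, ?_⟩
    · apply union_subset (hcA _ ho1c)
      rw [biUnion_subset]
      intro c hc
      exact hcA _ (hDc c (hI hc))
    · exact mem_union_left _ (self_mem_orb _ _)
    · rw [mem_union, mem_biUnion]
      rintro (h | ⟨c, hc, h⟩)
      · exact h2.1 (orb_eq_of_mem h).symm
      · have := mem_cyc_eq (hDc c (hI hc)) h
        rw [← this] at hc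
        exact h3 (hI hc)
    · intro z hz
      rw [mem_union, mem_biUnion] at hz ⊢
      rcases hz with h | ⟨c, hc, h⟩
      · exact Or.inl (apply_mem_orb.2 h)
      · exact Or.inr ⟨c, hc, hcI c (hDc c (hI hc)) z h⟩
  · intro B hB
    rw [mem_filter, mem_powerset] at hB
    obtain ⟨hBA, ⟨hxB, hyB⟩, hBi⟩ := hB
    ext z
    rw [mem_union, mem_biUnion]
    constructor
    · rintro (h | ⟨c, hc, h⟩)
      · exact orb_subset hBi hxB h
      · rw [mem_erase] at hc
        obtain ⟨w, hw, rfl⟩ := mem_image.1 hc.2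
        exact orb_subset hBi hw h
    · intro hz
      by_cases h : orb T' z = o1
      · left; rw [← h]; exact self_mem_orb _ _
      · right
        exact ⟨orb T' z, mem_erase.2 ⟨h, mem_image_of_mem _ hz⟩, self_mem_orb _ _⟩
  · intro I hI
    rw [mem_powerset] at hI
    ext c
    rw [mem_erase]
    constructor
    · rintro ⟨hc1, hc2⟩
      obtain ⟨w, hw, rfl⟩ := mem_image.1 hc2
      rw [mem_union, mem_biUnion] at hw
      rcases hw with h | ⟨c, hc, h⟩
      · exact absurd (orb_eq_of_mem h) hc1
      · rw [mem_cyc_eq (hDc c (hI hc)) h]; exact hc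
    · intro hc
      refine ⟨?_, ?_⟩
      · rintro rfl; exact h2.2 (hI hc)
      · obtain ⟨w, hw, h⟩ := mem_image.1 (hDc c (hI hc))
        rw [← h]
        apply mem_image_of_mem
        rw [mem_union, mem_biUnion]
        exact Or.inr ⟨c, hc, by rw [← h]; exact self_mem_orb _ _⟩
  · intro B hB
    rw [mem_filter, mem_powerset] at hB
    obtain ⟨hBA, ⟨hxB, hyB⟩, hBi⟩ := hB
    rw [← hins B hxB]
    congr 1
    rw [cyc_sdiff hBA hBi, h1]
    have hy2 : o2 ∉ cyc B T' := by
      intro h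
      obtain ⟨w, hw, h⟩ := mem_image.1 h
      apply hyB
      apply orb_subset hBi hw
      rw [h]; exact self_mem_orb _ _
    have hx1 : o1 ∈ cyc B T' := mem_image_of_mem _ hxB
    ext c
    simp only [mem_sdiff, mem_insert, mem_erase]
    constructor
    · rintro ⟨rfl | rfl | h, h'⟩
      · exact absurd hx1 h'
      · exact Or.inl rfl
      · exact Or.inr ⟨h, fun h'' => h' h''.2⟩
    · rintro (rfl | ⟨h, h'⟩)
      · exact ⟨Or.inr (Or.inl rfl), hy2⟩
      · refine ⟨Or.inr (Or.inr h), fun h'' => h' ⟨?_, h''⟩⟩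
        rintro rfl; exact h2.2 h

theorem hx_zero (s : Finset α → ℕ) (I : Finset (Finset α)) : hx s 0 I = 0 := by
  simp [hx, ww]

theorem cut_total (A : Finset α) (T : Perm α) (x : α) (D : Finset (Finset α)) :
    ∑ y ∈ (orb T x).erase x, ∑ I ∈ D.powerset, hx card ((orb (swap x y * T) x).card) I *
        hx card ((orb (swap x y * T) y).card) (D \ I) = cutS card (orb T x).card D := by
  set n := Function.minimalPeriod T x with hn
  have h1 : ∑ y ∈ (orb T x).erase x, ∑ I ∈ D.powerset, hx card ((orb (swap x y * T) x).card) I *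
        hx card ((orb (swap x y * T) y).card) (D \ I) =
      ∑ k ∈ Ico 1 n, ∑ I ∈ D.powerset, hx card k I * hx card (n - k) (D \ I) := by
    symm
    refine sum_bij (fun k _ => T^[k] x) ?_ ?_ ?_ ?_
    · intro k hk
      rw [mem_Ico] at hk
      refine mem_erase.2 ⟨fun h => ?_, mem_orb_iff.2 ⟨k, rfl⟩⟩
      have := iter_inj (i := k) (j := 0) hk.2 (by omega) h
      omega
    · intro k hk l hl h
      rw [mem_Ico] at hk hl
      exact iter_inj hk.2 hl.2 h
    · intro y hy
      rw [mem_erase] at hy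
      obtain ⟨k, hk, h⟩ := exists_iter hy.2
      refine ⟨k, mem_Ico.2 ⟨?_, hk⟩, h⟩
      by_contra h'
      have : k = 0 := by omega
      subst this
      exact hy.1 h.symm
    · intro k hk
      rw [mem_Ico] at hk
      obtain ⟨-, -, h3, h4, -⟩ := cut_lemma T x _ k (by omega) hk.2 rfl
      rw [h3, h4, card_orb]
  rw [h1, card_orb, cutS, ← hn]
  rw [Finset.Nat.sum_antidiagonal_eq_sum_range_succ (fun a b => ∑ I ∈ D.powerset, hx card a I * hx card b (D \ I))]
  rw [sum_range_succ, Nat.sub_self]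
  simp only [hx_zero, mul_zero, sum_const_zero, add_zero]
  rw [← Nat.Ico_zero_eq_range, sum_eq_sum_Ico_succ_bot (show 0 < n from minP_pos T x)]
  simp [hx_zero]

theorem Tr_nil {A : Finset α} (hA : A.Nonempty) : Tr A [] ↔ A.card = 1 := by
  constructor
  · intro h
    obtain ⟨x, hx⟩ := hA
    have := h {x} (by simpa using hx) (by simp) (by simp [Inv])
    rw [← this]; simp
  · intro h B hB hne _
    obtain ⟨x, rfl⟩ := card_eq_one.1 h
    exact (subset_singleton_iff.1 hB).resolve_left hne.ne_empty

theorem hurwitz (m : ℕ) : ∀ (A : Finset α) (T : Perm α), A.Nonempty → (∀ z, z ∉ A → T z = z) →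
    (m + 2 < A.card + (cyc A T).card → cnt A T m = 0) ∧
    (m + 2 = A.card + (cyc A T).card → (cyc A T).card ≤ 4 → cnt A T m = (m.factorial : ℚ) * hv card (cyc A T)) := by
  induction m using Nat.strong_induction_on with
  | _ m IH =>
  rcases m with _ | m
  · intro A T hA hT
    have hcA : 1 ≤ A.card := hA.card_pos
    have hcc : (cyc A T).card ≤ A.card := card_image_le
    have hcp : 1 ≤ (cyc A T).card := (hA.image _).card_pos
    constructor
    · intro h
      simp only [cnt, sumL]
      rw [if_neg]
      rintro ⟨-, h2⟩
      rw [Tr_nil hA] at h2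
      omega
    · intro h _
      have h1 : A.card = 1 := by omega
      obtain ⟨x, rfl⟩ := card_eq_one.1 h1
      have hT1 : T = 1 := by
        ext z
        by_cases hz : z = x
        · have := sup_inv hT x (by simp)
          rw [mem_singleton] at this
          rw [hz, this]; rfl
        · exact hT z (by simpa using hz)
      simp only [cnt, sumL]
      rw [if_pos ⟨by rw [hT1]; rfl, (Tr_nil hA).2 h1⟩]
      have hc : cyc {x} T = {orb T x} := by simp [cyc]
      have : orb T x = {x} := by
        apply Subset.antisymm (orb_subset (sup_inv hT) (by simp))
        simpa using self_mem_orb T x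
      rw [hc, hv1, this, card_singleton, tt_one]; simp
  · intro A T hA hT
    have hTA := sup_inv hT
    have IHm := IH m (by omega)
    have hsup : ∀ x ∈ A, ∀ y ∈ A, ∀ z, z ∉ A → (swap x y * T) z = z := by
      intro x hx y hy z hz
      rw [Perm.mul_apply, hT z hz]
      apply swap_apply_of_ne_of_ne
      · rintro rfl; exact hz hx
      · rintro rfl; exact hz hy
    -- join: no invariant sets
    have hjoin0 : ∀ x y, y ∉ orb T x → A.powerset.filter (fun B => (x ∈ B ∧ y ∉ B) ∧ ∀ z ∈ B, (swap x y * T) z ∈ B) = ∅ := by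
      intro x y hy
      rw [filter_eq_empty_iff]
      rintro B - ⟨⟨h1, h2⟩, h3⟩
      exact h2 (orb_subset h3 h1 (join_same T x y hy))
    have hjoinc : ∀ x ∈ A, ∀ y ∈ A, y ∉ orb T x →
        cyc A (swap x y * T) = insert (orb (swap x y * T) x) (((cyc A T).erase (orb T x)).erase (orb T y)) ∧
        orb (swap x y * T) x ∉ (((cyc A T).erase (orb T x)).erase (orb T y)) ∧
        (orb (swap x y * T) x).card = (orb T x).card + (orb T y).card ∧
        (cyc A T).card = (cyc A (swap x y * T)).card + 1 := by
      intro x hx y hy hxy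
      have hne : x ≠ y := by rintro rfl; exact hxy (self_mem_orb _ _)
      have hs := join_same T x y hxy
      have hself : swap x y * (swap x y * T) = T := by rw [← mul_assoc, swap_mul_self, one_mul]
      have c := cyc_cut A (swap x y * T) x y hx hne hs (sup_inv (hsup x hx y hy))
      obtain ⟨k, hk, hky⟩ := exists_iter hs
      have hk0 : 0 < k := by
        rcases Nat.eq_zero_or_pos k with rfl | h
        · exact absurd hky hne
        · exact h
      have d := cut_lemma (swap x y * T) x y k hk0 hk hky
      rw [hself] at c d
      obtain ⟨c1, c2, c3⟩ := c
      obtain ⟨d1, d2, d3, d4, d5⟩ := d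
      have e : ((cyc A T).erase (orb T x)).erase (orb T y) = (cyc A (swap x y * T)).erase (orb (swap x y * T) x) := by
        rw [c1, erase_insert c2, erase_insert c3]
      have hm : orb (swap x y * T) x ∈ cyc A (swap x y * T) := mem_image_of_mem _ hx
      refine ⟨?_, ?_, ?_, ?_⟩
      · rw [e, insert_erase hm]
      · rw [e]; simp
      · have : k < (orb (swap x y * T) x).card := by rw [card_orb]; exact hk
        omega
      · rw [c1, card_insert_of_notMem c2, card_insert_of_notMem c3, card_erase_of_mem hm]
        have : 0 < (cyc A (swap x y * T)).card := card_pos.2 ⟨_, hm⟩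
        omega
    have hcutc : ∀ x ∈ A, ∀ y, x ≠ y → y ∈ orb T x → (cyc A (swap x y * T)).card = (cyc A T).card + 1 := by
      intro x hx y hne hy
      obtain ⟨c1, c2, c3⟩ := cyc_cut A T x y hx hne hy hTA
      have hm : orb T x ∈ cyc A T := mem_image_of_mem _ hx
      rw [c1, card_insert_of_notMem c2, card_insert_of_notMem c3, card_erase_of_mem hm]
      have : 0 < (cyc A T).card := card_pos.2 ⟨_, hm⟩
      omega
    -- the product terms
    have hB : ∀ (B : Finset α) (S : Perm α), B ⊆ A → (∀ z, z ∉ A → S z = z) → (∀ z ∈ B, S z ∈ B) → B.Nonempty → (A \ B).Nonempty →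
        (m + 4 < A.card + (cyc A S).card → ∑ ij ∈ antidiagonal m, (m.choose ij.1 : ℚ) * (cnt B (res B S) ij.1 *
          cnt (A \ B) (res (A \ B) S) ij.2) = 0) ∧
        (m + 4 = A.card + (cyc A S).card → (cyc B S).card ≤ 4 → (cyc (A \ B) S).card ≤ 4 →
          ∑ ij ∈ antidiagonal m, (m.choose ij.1 : ℚ) * (cnt B (res B S) ij.1 *
          cnt (A \ B) (res (A \ B) S) ij.2) = (m.factorial : ℚ) * (hv card (cyc B S) * hv card (cyc (A \ B) S))) := by
      intro B S hBA hS hBS hB1 hB2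
      have hBS2 : ∀ z ∈ A \ B, S z ∈ A \ B := by
        intro z hz
        rw [mem_sdiff] at hz ⊢
        exact ⟨sup_inv hS z hz.1, fun h => hz.2 ((perm_inv hBS z).1 h)⟩
      have r1 : ∀ z, z ∉ B → res B S z = z := fun z hz => by rw [res_apply hBS, if_neg hz]
      have r2 : ∀ z, z ∉ A \ B → res (A \ B) S z = z := fun z hz => by rw [res_apply hBS2, if_neg hz]
      have hcard : (A \ B).card + B.card = A.card := card_sdiff_add_card_eq_card hBA
      have hcyc : (cyc (A \ B) S).card + (cyc B S).card = (cyc A S).card := by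
        rw [cyc_sdiff hBA hBS]
        exact card_sdiff_add_card_eq_card (image_subset_image hBA)
      have hz : ∀ ij ∈ antidiagonal m, (ij.1 + 2 < B.card + (cyc B S).card ∨ ij.2 + 2 < (A \ B).card + (cyc (A \ B) S).card) →
          (m.choose ij.1 : ℚ) * (cnt B (res B S) ij.1 * cnt (A \ B) (res (A \ B) S) ij.2) = 0 := by
        intro ij hij h
        rw [HasAntidiagonal.mem_antidiagonal] at hij
        rcases h with h | h
        · have := (IH ij.1 (by omega) B (res B S) hB1 r1).1 (by rwa [cyc_res hBS])
          rw [this]; ring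
        · have := (IH ij.2 (by omega) (A \ B) (res (A \ B) S) hB2 r2).1 (by rwa [cyc_res hBS2])
          rw [this]; ring
      constructor
      · intro h
        apply sum_eq_zero
        intro ij hij
        apply hz ij hij
        rw [HasAntidiagonal.mem_antidiagonal] at hij
        omega
      · intro h h4 h4'
        have p1 : 1 ≤ B.card := hB1.card_pos
        have p2 : 1 ≤ (cyc B S).card := (hB1.image _).card_pos
        have p3 : 1 ≤ (A \ B).card := hB2.card_pos
        have p4 : 1 ≤ (cyc (A \ B) S).card := (hB2.image _).card_pos
        rw [sum_eq_single (B.card + (cyc B S).card - 2, (A \ B).card + (cyc (A \ B) S).card - 2)]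
        · have q1 := (IH (B.card + (cyc B S).card - 2) (by omega) B (res B S) hB1 r1).2 (by rw [cyc_res hBS]; omega) (by rwa [cyc_res hBS])
          have q2 := (IH ((A \ B).card + (cyc (A \ B) S).card - 2) (by omega) (A \ B) (res (A \ B) S) hB2 r2).2
            (by rw [cyc_res hBS2]; omega) (by rwa [cyc_res hBS2])
          simp only [q1, q2, cyc_res hBS, cyc_res hBS2]
          have hm : B.card + (cyc B S).card - 2 + ((A \ B).card + (cyc (A \ B) S).card - 2) = m := by omega
          have := Nat.add_choose_mul_factorial_mul_factorial (B.card + (cyc B S).card - 2) ((A \ B).card + (cyc (A \ B) S).card - 2)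
          rw [hm] at this
          have hch := Nat.choose_symm_add (a := B.card + (cyc B S).card - 2) (b := (A \ B).card + (cyc (A \ B) S).card - 2)
          rw [hm] at hch
          rw [← this, hch]; push_cast; ring
        · intro ij hij hne
          apply hz ij hij
          rw [HasAntidiagonal.mem_antidiagonal] at hij
          by_contra hc
          apply hne
          ext
          · simp only; omega
          · simp only; omega
        · intro h'
          exfalso; apply h'
          rw [HasAntidiagonal.mem_antidiagonal]; simp only; omega
    rw [cnt_succ A T hT m]
    constructor
    · intro h
      rw [sum_eq_zero, mul_zero]
      intro p hp
      obtain ⟨hx, hy, hne⟩ := mem_offDiag.1 hp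
      by_cases hc : p.2 ∈ orb T p.1
      · have e1 := hcutc _ hx _ hne hc
        rw [(IHm A _ hA (hsup _ hx _ hy)).1 (by omega), zero_add]
        apply sum_eq_zero
        intro B hBf
        rw [mem_filter, mem_powerset] at hBf
        obtain ⟨hBA, ⟨hxB, hyB⟩, hBi⟩ := hBf
        exact (hB B _ hBA (hsup _ hx _ hy) hBi ⟨_, hxB⟩ ⟨_, mem_sdiff.2 ⟨hy, hyB⟩⟩).1 (by omega)
      · have e1 := (hjoinc _ hx _ hy hc).2.2.2
        rw [hjoin0 _ _ hc, sum_empty, add_zero]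
        exact (IHm A _ hA (hsup _ hx _ hy)).1 (by omega)
    · intro h h4
      have hterm : ∀ x ∈ A, ∀ y ∈ A.erase x, (cnt A (swap x y * T) m +
      ∑ B ∈ A.powerset.filter (fun B => (x ∈ B ∧ y ∉ B) ∧ ∀ z ∈ B, (swap x y * T) z ∈ B),
        ∑ ij ∈ antidiagonal m, (m.choose ij.1 : ℚ) * (cnt B (res B (swap x y * T)) ij.1 *
          cnt (A \ B) (res (A \ B) (swap x y * T)) ij.2)) = (m.factorial : ℚ) *
          if y ∈ orb T x then ∑ I ∈ ((cyc A T).erase (orb T x)).powerset, hx card ((orb (swap x y * T) x).card) I *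
            hx card ((orb (swap x y * T) y).card) (((cyc A T).erase (orb T x)) \ I)
          else hx card ((orb T x).card + (orb T y).card) (((cyc A T).erase (orb T x)).erase (orb T y)) := by
        intro x hx y hy'
        obtain ⟨hne, hy⟩ := mem_erase.1 hy'
        by_cases hc : y ∈ orb T x
        · rw [if_pos hc]
          have e1 := hcutc _ hx _ hne.symm hc
          rw [(IHm A _ hA (hsup _ hx _ hy)).1 (by omega), zero_add]
          obtain ⟨c1, c2, c3⟩ := cyc_cut A T x y hx hne.symm hc hTA
          have hbij := cut_bij A T x y hx hne.symm hc hTA (fun C E => if C.card ≤ 4 ∧ E.card ≤ 4 then hv card C * hv card E else 0)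
          have hcard : ((cyc A T).erase (orb T x)).card ≤ 3 := by
            rw [card_erase_of_mem (show orb T x ∈ cyc A T from mem_image_of_mem _ hx)]; omega
          have hE : ∀ I ∈ ((cyc A T).erase (orb T x)).powerset,
              (if (insert (orb (swap x y * T) x) I).card ≤ 4 ∧ (insert (orb (swap x y * T) y) ((cyc A T).erase (orb T x) \ I)).card ≤ 4 then
               hv card (insert (orb (swap x y * T) x) I) * hv card (insert (orb (swap x y * T) y) ((cyc A T).erase (orb T x) \ I)) else 0) =
              HZ.hx card ((orb (swap x y * T) x).card) I * HZ.hx card ((orb (swap x y * T) y).card) (((cyc A T).erase (orb T x)) \ I) := by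
            intro I hI
            rw [mem_powerset] at hI
            rw [if_pos, hv_insert, hv_insert]
            · intro h'; exact c3 (mem_sdiff.1 h').1
            · intro h'; exact c2 (mem_insert_of_mem (hI h'))
            · constructor
              · refine (card_insert_le _ _).trans ?_
                have := card_le_card hI
                omega
              · refine (card_insert_le _ _).trans ?_
                have := card_le_card (sdiff_subset (s := (cyc A T).erase (orb T x)) (t := I))
                omega
          rw [← sum_congr rfl hE, ← hbij, mul_sum]
          refine sum_congr rfl fun B hBf => ?_
          have hBf' := hBf
          rw [mem_filter, mem_powerset] at hBf
          obtain ⟨hBA, ⟨hxB, hyB⟩, hBi⟩ := hBf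
          have hBc : (cyc B (swap x y * T)).card ≤ 4 ∧ (cyc (A \ B) (swap x y * T)).card ≤ 4 := by
            have hcyc : (cyc (A \ B) (swap x y * T)).card + (cyc B (swap x y * T)).card = (cyc A (swap x y * T)).card := by
              rw [cyc_sdiff hBA hBi]
              exact card_sdiff_add_card_eq_card (image_subset_image hBA)
            have q1 : 0 < (cyc B (swap x y * T)).card := card_pos.2 ⟨_, mem_image_of_mem _ hxB⟩
            have q2 : 0 < (cyc (A \ B) (swap x y * T)).card := card_pos.2 ⟨_, mem_image_of_mem _ (mem_sdiff.2 ⟨hy, hyB⟩)⟩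
            omega
          rw [if_pos hBc]
          exact (hB B _ hBA (hsup _ hx _ hy) hBi ⟨_, hxB⟩ ⟨_, mem_sdiff.2 ⟨hy, hyB⟩⟩).2 (by omega) hBc.1 hBc.2
        · rw [if_neg hc, hjoin0 _ _ hc, sum_empty, add_zero]
          obtain ⟨e1, e2, e3, e4⟩ := hjoinc _ hx _ hy hc
          rw [(IHm A _ hA (hsup _ hx _ hy)).2 (by omega) (by omega), e1, hv_insert _ _ _ e2, e3]
      rw [sum_offD, sum_congr rfl fun x hx => sum_congr rfl fun y hy => hterm x hx y hy]
      have hx2 : ∀ x ∈ A, ∑ y ∈ A.erase x, ((m.factorial : ℚ) *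
          if y ∈ orb T x then ∑ I ∈ ((cyc A T).erase (orb T x)).powerset, hx card ((orb (swap x y * T) x).card) I *
            hx card ((orb (swap x y * T) y).card) (((cyc A T).erase (orb T x)) \ I)
          else hx card ((orb T x).card + (orb T y).card) (((cyc A T).erase (orb T x)).erase (orb T y)))
          = (m.factorial : ℚ) * (cutS card (orb T x).card ((cyc A T).erase (orb T x)) +
            ∑ d ∈ (cyc A T).erase (orb T x), (d.card : ℚ) * hx card ((orb T x).card + d.card) (((cyc A T).erase (orb T x)).erase d)) := by
        intro x hx
        have hox : orb T x ⊆ A := orb_subset hTA hx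
        have hoi : ∀ z ∈ orb T x, T z ∈ orb T x := fun z hz => apply_mem_orb.2 hz
        rw [← mul_sum, sum_ite]
        congr 2
        · rw [← cut_total A T x]
          refine sum_congr ?_ fun _ _ => rfl
          ext y; rw [mem_filter, mem_erase, mem_erase]
          exact ⟨fun h => ⟨h.1.1, h.2⟩, fun h => ⟨⟨h.1, hox h.2⟩, h.2⟩⟩
        · have hs := sum_cyc (A \ orb T x) T (by
            intro z hz
            rw [mem_sdiff] at hz ⊢
            exact ⟨hTA z hz.1, fun h => hz.2 (apply_mem_orb.1 h)⟩)
            (fun d => HZ.hx card ((orb T x).card + d.card) (((cyc A T).erase (orb T x)).erase d))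
          have hcy : cyc (orb T x) T = {orb T x} := by
            ext c
            rw [mem_singleton]
            constructor
            · intro hc
              obtain ⟨w, hw, rfl⟩ := mem_image.1 hc
              exact orb_eq_of_mem hw
            · rintro rfl; exact mem_image_of_mem _ (self_mem_orb _ _)
          rw [cyc_sdiff hox hoi, hcy, sdiff_singleton_eq_erase] at hs
          rw [← hs]
          refine sum_congr ?_ fun _ _ => rfl
          ext y; rw [mem_filter, mem_erase, mem_sdiff]
          refine ⟨fun h => ⟨h.1.2, h.2⟩, fun h => ⟨⟨?_, h.1⟩, h.2⟩⟩
          rintro rfl; exact h.2 (self_mem_orb _ _)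
      rw [sum_congr rfl hx2, ← mul_sum]
      rw [sum_cyc A T hTA (fun c => cutS card c.card ((cyc A T).erase c) +
            ∑ d ∈ (cyc A T).erase c, (d.card : ℚ) * hx card (c.card + d.card) (((cyc A T).erase c).erase d))]
      have hal := alg_main card (cyc A T) (hA.image _) h4 (fun c hc => card_pos_of_cyc hc)
      have hAc : ∑ c ∈ cyc A T, (c.card : ℚ) = A.card := by
        have := sum_cyc A T hTA (fun _ => 1)
        simp only [mul_one] at this
        rw [← this]; simp
      rw [hAc] at hal
      have hmm : ((A.card : ℚ) + (cyc A T).card - 2) = m + 1 := by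
        have : ((m + 1 + 2 : ℕ) : ℚ) = (A.card + (cyc A T).card : ℕ) := by rw [h]
        push_cast at this
        linarith
      rw [hmm] at hal
      rw [Nat.factorial_succ]
      push_cast
      have hR : RHS card (cyc A T) = (1/2) * ∑ c ∈ cyc A T, (c.card : ℚ) * (cutS card c.card ((cyc A T).erase c) +
            ∑ d ∈ (cyc A T).erase c, (d.card : ℚ) * hx card (c.card + d.card) (((cyc A T).erase c).erase d)) := by
        unfold RHS
        simp only [mul_add, sum_add_distrib, mul_sum, mul_assoc]
        ring
      rw [hR] at hal
      linear_combination (-(m.factorial : ℚ)) * hal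
end hur
end HZ

namespace HZ
open Finset Equiv Equiv.Perm
open scoped Classical
set_option linter.unusedSectionVars false
section del
variable {α : Type*} [Fintype α]

theorem inv_app (s : Perm α) (x : α) : s⁻¹ (s x) = x := s.symm_apply_apply x

noncomputable def del (T : Perm α) (x : α) : Perm α := swap x (T x) * T

theorem del_self (T : Perm α) (x : α) : del T x x = x := by simp [del]

theorem del_comm (T : Perm α) (x y : α) : del (del T x) y = del (del T y) x := by
  by_cases hxy : x = y
  · rw [hxy]
  have hab : T x ≠ T y := fun h => hxy (T.injective h)
  unfold del
  rw [← mul_assoc, ← mul_assoc]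
  congr 1
  rw [Perm.mul_apply, Perm.mul_apply]
  generalize T x = a at *
  generalize T y = b at *
  ext w
  simp only [Perm.mul_apply, swap_apply_def]
  grind

instance : RightCommutative (del : Perm α → α → Perm α) := ⟨fun T x y => del_comm T x y⟩

noncomputable def delS (S : Finset α) (T : Perm α) : Perm α := S.val.foldl del T

theorem delS_empty (T : Perm α) : delS ∅ T = T := by simp [delS]
theorem delS_insert (S : Finset α) (T : Perm α) (x : α) (h : x ∉ S) : delS (insert x S) T = delS S (del T x) := by
  unfold delS
  rw [insert_val_of_notMem h, Multiset.foldl_cons]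
theorem delS_erase (S : Finset α) (T : Perm α) (x : α) (h : x ∈ S) : delS (S.erase x) (del T x) = delS S T := by
  rw [← delS_insert _ _ _ (notMem_erase x S), insert_erase h]

theorem del_mul (T s : Perm α) (x : α) (h : s x = x) : del (s * T) x = s * del T x := by
  unfold del
  rw [Perm.mul_apply, ← mul_assoc, ← mul_assoc]
  congr 1
  have := swap_mul_eq_mul_swap s (s x) (s (T x))
  simp only [inv_app] at this
  rw [h] at this
  rw [this]

theorem delS_mul (S : Finset α) (T s : Perm α) (h : ∀ x ∈ S, s x = x) : delS S (s * T) = s * delS S T := by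
  induction S using Finset.induction_on generalizing T with
  | empty => simp [delS_empty]
  | insert x S hx ih =>
    rw [delS_insert _ _ _ hx, delS_insert _ _ _ hx, del_mul _ _ _ (h x (by simp)), ih _ fun z hz => h z (by simp [hz])]

theorem del_fix {T : Perm α} {x w : α} (h : T w = w) : del T x w = w := by
  unfold del
  rw [Perm.mul_apply, h]
  by_cases h1 : w = x
  · subst h1; rw [h]; simp
  · apply swap_apply_of_ne_of_ne h1
    intro h2
    rw [h2] at h
    exact h1 (h2.trans (T.injective h))

theorem delS_fix {S : Finset α} {T : Perm α} {w : α} (h : T w = w) : delS S T w = w := by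
  induction S using Finset.induction_on generalizing T with
  | empty => simpa [delS_empty]
  | insert x S hx ih => rw [delS_insert _ _ _ hx]; exact ih (del_fix h)

theorem delS_fix_mem {S : Finset α} {T : Perm α} {w : α} (h : w ∈ S) : delS S T w = w := by
  rw [← delS_erase S T w h]
  exact delS_fix (del_self _ _)

theorem orb_del (T : Perm α) (x z : α) (hz : z ≠ x) : orb (del T x) z = (orb T z).erase x := by
  by_cases hx : T x = x
  · have h1 : del T x = T := by unfold del; rw [hx]; simp; rfl
    rw [h1, erase_eq_of_notMem]
    intro h
    have h2 := orb_eq_of_mem h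
    have : orb T x ⊆ {x} := orb_subset (by simp [hx]) (by simp)
    rw [h2] at this
    exact hz (mem_singleton.1 (this (self_mem_orb _ _)))
  · have hp : 1 < Function.minimalPeriod T x := by
      have := minP_pos T x
      by_contra h
      have h1 : Function.minimalPeriod T x = 1 := by omega
      exact hx (Function.minimalPeriod_eq_one_iff_isFixedPt.1 h1)
    obtain ⟨h1, h2, h3, h4, h5⟩ := cut_lemma T x (T x) 1 one_pos hp rfl
    change orb (del T x) x ∪ orb (del T x) (T x) = orb T x at h1
    change T x ∉ orb (del T x) x at h2
    change (orb (del T x) x).card = 1 at h3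
    change ∀ z, z ∉ orb T x → orb (del T x) z = orb T z at h5
    have e1 : orb (del T x) x = {x} := by
      obtain ⟨a, ha⟩ := card_eq_one.1 h3
      have := self_mem_orb (del T x) x
      rw [ha, mem_singleton] at this
      rw [ha, ← this]
    rw [e1] at h1 h2
    by_cases hzx : z ∈ orb T x
    · have e2 : orb T z = orb T x := orb_eq_of_mem hzx
      have hx2 : x ∉ orb (del T x) (T x) := by
        intro h
        have := orb_eq_of_mem h
        rw [e1] at this
        apply h2
        rw [this]; exact self_mem_orb _ _
      have e3 : (orb T x).erase x = orb (del T x) (T x) := by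
        rw [← h1]; ext w; simp only [mem_erase, mem_union, mem_singleton]
        constructor
        · tauto
        · intro h; refine ⟨?_, Or.inr h⟩; rintro rfl; exact hx2 h
      rw [e2, e3]
      apply orb_eq_of_mem
      rw [← e3]; exact mem_erase.2 ⟨hz, hzx⟩
    · rw [h5 z hzx, erase_eq_of_notMem]
      intro h
      apply hzx
      rw [orb_eq_of_mem h]; exact self_mem_orb _ _

theorem orb_delS (S : Finset α) (T : Perm α) (z : α) (hz : z ∉ S) : orb (delS S T) z = orb T z \ S := by
  induction S using Finset.induction_on generalizing T with
  | empty => simp [delS_empty]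
  | insert x S hx ih =>
    rw [mem_insert, not_or] at hz
    rw [delS_insert _ _ _ hx, ih _ hz.2, orb_del _ _ _ hz.1]
    ext w; simp only [mem_sdiff, mem_erase, mem_insert]; tauto

noncomputable def Wn : ℕ → Finset α → Perm α → ℚ
  | 0, _, _ => 1
  | n+1, S, T => (1/((n:ℚ)+1)) * ∑ x ∈ S.filter (fun x => T x ∉ S), Wn n (S.erase x) (del T x)

noncomputable def W (S : Finset α) (T : Perm α) : ℚ := Wn S.card S T

theorem W_empty (T : Perm α) : W ∅ T = 1 := by simp [W, Wn]

theorem W_rec (S : Finset α) (T : Perm α) (hS : S.Nonempty) :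
    (S.card : ℚ) * W S T = ∑ x ∈ S.filter (fun x => T x ∉ S), W (S.erase x) (del T x) := by
  unfold W
  obtain ⟨n, hn⟩ : ∃ n, S.card = n + 1 := ⟨S.card - 1, by have := hS.card_pos; omega⟩
  rw [hn, Wn, ← mul_assoc]
  push_cast
  have : ((n:ℚ)+1) ≠ 0 := by positivity
  rw [mul_one_div_cancel this, one_mul]
  refine sum_congr rfl fun x hx => ?_
  rw [card_erase_of_mem (mem_filter.1 hx).1, hn]
  rfl

theorem W_ind {S : Finset α} {T : Perm α} {v : ℚ} (hS : S.Nonempty)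
   (h : (S.card : ℚ) * v = ∑ x ∈ S.filter (fun x => T x ∉ S), W (S.erase x) (del T x)) : W S T = v := by
  have := W_rec S T hS
  rw [← h] at this
  have h0 : (S.card : ℚ) ≠ 0 := by have := hS.card_pos; positivity
  exact mul_left_cancel₀ h0 this

theorem fix_compl {S : Finset α} {s : Perm α} (h : ∀ x ∈ S, s x = x) (z : α) : s z ∈ S ↔ z ∈ S := by
  constructor
  · intro hz
    have := h _ hz
    rwa [s.injective this] at hz
  · intro hz; rwa [h z hz]

theorem W_mul (S : Finset α) (T s : Perm α) (h : ∀ x ∈ S, s x = x) : W S (s * T) = W S T := by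
  induction hn : S.card generalizing S T with
  | zero => rw [card_eq_zero] at hn; subst hn; simp [W_empty]
  | succ n ih =>
    have hS : S.Nonempty := card_pos.1 (by omega)
    apply W_ind hS
    rw [W_rec S T hS]
    have : S.filter (fun x => (s * T) x ∉ S) = S.filter (fun x => T x ∉ S) := by
      refine filter_congr fun x _ => ?_
      rw [Perm.mul_apply, fix_compl h]
    rw [this]
    refine sum_congr rfl fun x hx => ?_
    have hx' := (mem_filter.1 hx).1
    rw [del_mul _ _ _ (h x hx')]
    symm
    apply ih
    · intro z hz; exact h z (mem_of_mem_erase hz)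
    · rw [card_erase_of_mem hx']; omega

theorem W_conj (S : Finset α) (T s : Perm α) : W (S.image s) (s * T * s⁻¹) = W S T := by
  induction hn : S.card generalizing S T with
  | zero => rw [card_eq_zero] at hn; subst hn; simp [W_empty]
  | succ n ih =>
    have hS : S.Nonempty := card_pos.1 (by omega)
    apply W_ind (hS.image _)
    rw [card_image_of_injective _ s.injective, W_rec S T hS]
    have : (S.image s).filter (fun x => (s * T * s⁻¹) x ∉ S.image s) = (S.filter (fun x => T x ∉ S)).image s := by
      ext z
      simp only [mem_filter, mem_image, Perm.mul_apply]
      constructor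
      · rintro ⟨⟨x, hx, rfl⟩, h⟩
        refine ⟨x, ⟨hx, fun h' => h ⟨T x, h', by simp⟩⟩, rfl⟩
      · rintro ⟨x, ⟨hx, h⟩, rfl⟩
        refine ⟨⟨x, hx, rfl⟩, ?_⟩
        rintro ⟨w, hw, h'⟩
        simp only [inv_app, EmbeddingLike.apply_eq_iff_eq] at h'
        exact h (h' ▸ hw)
    rw [this, sum_image (fun a _ b _ h => s.injective h)]
    refine sum_congr rfl fun x hx => ?_
    have hx' := (mem_filter.1 hx).1
    have e : del (s * T * s⁻¹) (s x) = s * del T x * s⁻¹ := by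
      unfold del
      simp only [Perm.mul_apply, inv_app]
      rw [mul_assoc, ← mul_assoc, ← mul_assoc, ← mul_assoc]
      congr 2
      have := swap_mul_eq_mul_swap s (s x) (s (T x))
      simp only [inv_app] at this
      exact this
    rw [e, ← image_erase s.injective]
    symm
    apply ih
    rw [card_erase_of_mem hx']; omega

theorem W_image (S : Finset α) (T : Perm α) : W (S.image T) T = W S T := by
  have := W_conj S T T
  rwa [mul_assoc, mul_inv_cancel, mul_one] at this

theorem W_union (B : Finset α) (S1 S2 : Finset α) (T : Perm α) (hT : ∀ z ∈ B, T z ∈ B) (h1 : S1 ⊆ B) (h2 : Disjoint S2 B) :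
    W (S1 ∪ S2) T = W S1 T * W S2 T := by
  induction hn : (S1 ∪ S2).card generalizing S1 S2 T with
  | zero =>
    rw [card_eq_zero, union_eq_empty] at hn
    rw [hn.1, hn.2]; simp [W_empty]
  | succ n ih =>
    have hS : (S1 ∪ S2).Nonempty := card_pos.1 (by omega)
    have hd : Disjoint S1 S2 := (disjoint_of_subset_right h1 h2).symm
    apply W_ind hS
    have hTB := perm_inv hT
    have hn2 : ∀ x ∈ S2, x ∉ B := fun x hx => disjoint_left.1 h2 hx
    have f : (S1 ∪ S2).filter (fun x => T x ∉ S1 ∪ S2) = S1.filter (fun x => T x ∉ S1) ∪ S2.filter (fun x => T x ∉ S2) := by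
      rw [filter_union]
      congr 1
      · refine filter_congr fun x hx => ?_
        rw [mem_union, not_or]
        refine ⟨fun h => h.1, fun h => ⟨h, fun h' => hn2 _ h' (hT x (h1 hx))⟩⟩
      · refine filter_congr fun x hx => ?_
        rw [mem_union, not_or]
        refine ⟨fun h => h.2, fun h => ⟨fun h' => hn2 _ hx ((hTB x).1 (h1 h')), h⟩⟩
    have hr : ∀ S, (S.card : ℚ) * W S T = ∑ x ∈ S.filter (fun x => T x ∉ S), W (S.erase x) (del T x) := by
      intro S
      rcases S.eq_empty_or_nonempty with rfl | h
      · simp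
      · exact W_rec S T h
    rw [f, sum_union (disjoint_filter_filter hd), card_union_of_disjoint hd]
    push_cast
    rw [add_mul, ← mul_assoc, hr S1, mul_comm (W S1 T), ← mul_assoc, hr S2, sum_mul, sum_mul]
    have hdB : ∀ x ∈ B, ∀ z ∈ B, del T x z ∈ B := by
      intro x hx z hz
      unfold del
      rw [Perm.mul_apply]
      exact swap_inv.2 (by simp [hx, hT x hx]) _ (hT z hz)
    have hdB2 : ∀ x, x ∉ B → ∀ z ∈ B, del T x z ∈ B := by
      intro x hx z hz
      unfold del
      rw [Perm.mul_apply]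
      exact swap_inv.2 (by simp [hx, hTB x]) _ (hT z hz)
    congr 1
    · refine sum_congr rfl fun x hx => ?_
      have hx' := mem_filter.1 hx
      have hx2 : x ∉ S2 := disjoint_left.1 hd hx'.1
      rw [erase_union_distrib, erase_eq_of_notMem hx2]
      rw [ih (S1.erase x) S2 (del T x) (hdB x (h1 hx'.1)) ((erase_subset _ _).trans h1) h2]
      · congr 1
        symm
        apply W_mul
        exact swap_fix hx2 (fun h => hn2 _ h (hT x (h1 hx'.1)))
      · rw [← erase_eq_of_notMem hx2, ← erase_union_distrib, card_erase_of_mem (by simp [hx'.1])]; omega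
    · refine sum_congr rfl fun x hx => ?_
      have hx' := mem_filter.1 hx
      have hx2 : x ∉ S1 := disjoint_right.1 hd hx'.1
      rw [erase_union_distrib, erase_eq_of_notMem hx2]
      rw [ih S1 (S2.erase x) (del T x) (hdB2 x (hn2 x hx'.1)) h1 (disjoint_of_subset_left (erase_subset _ _) h2)]
      · rw [mul_comm]
        congr 1
        symm
        apply W_mul
        exact swap_fix hx2 (fun h => hn2 x hx'.1 ((hTB x).1 (h1 h)))
      · rw [← erase_eq_of_notMem hx2, ← erase_union_distrib, card_erase_of_mem (by simp [hx'.1])]; omega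

theorem W_inv (c : Finset α) (T : Perm α) (hc : c.Nonempty) (hT : ∀ z ∈ c, T z ∈ c) : W c T = 0 := by
  apply W_ind hc
  rw [filter_eq_empty_iff.2 (fun x hx h => h (hT x hx))]
  simp

end del
end HZ

namespace HZ
open Finset Equiv Equiv.Perm
open scoped Classical
set_option linter.unusedSectionVars false
section leaf
variable {α : Type*} [Fintype α]

noncomputable def mv (x : α) (L : List (Perm α)) : ℕ := L.countP (fun τ => τ x ≠ x)
def Lf (S : Finset α) (L : List (Perm α)) : Prop :=
  (∀ s ∈ S, mv s L = 1) ∧ (∀ τ ∈ L, ∀ s ∈ S, ∀ s' ∈ S, τ s ≠ s → τ s' ≠ s' → s = s')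
noncomputable def rem (S : Finset α) (L : List (Perm α)) : List (Perm α) := L.filter (fun τ => ∀ s ∈ S, τ s = s)

theorem mv_nil (x : α) : mv x [] = 0 := rfl
theorem mv_cons (x : α) (τ : Perm α) (L) : mv x (τ :: L) = mv x L + if τ x ≠ x then 1 else 0 := by
  unfold mv; rw [List.countP_cons]; simp
theorem mv_zero {x : α} {L : List (Perm α)} : mv x L = 0 ↔ ∀ τ ∈ L, τ x = x := by
  unfold mv; rw [List.countP_eq_zero]; simp
theorem rem_cons_of {S : Finset α} {τ : Perm α} {L} (h : ∀ s ∈ S, τ s = s) : rem S (τ :: L) = τ :: rem S L := by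
  unfold rem; rw [List.filter_cons_of_pos (by simpa using h)]
theorem rem_cons_not {S : Finset α} {τ : Perm α} {L} (h : ∃ s ∈ S, τ s ≠ s) : rem S (τ :: L) = rem S L := by
  unfold rem; rw [List.filter_cons_of_neg (by simpa using h)]
theorem rem_erase {S : Finset α} {x : α} {L} (h : mv x L = 0) : rem S L = rem (S.erase x) L := by
  unfold rem
  apply List.filter_congr
  intro τ hτ
  rw [mv_zero] at h
  rw [decide_eq_decide]
  refine ⟨fun h' s hs => h' s (mem_of_mem_erase hs), fun h' s hs => ?_⟩
  by_cases hx : s = x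
  · rw [hx]; exact h τ hτ
  · exact h' s (mem_erase.2 ⟨hx, hs⟩)

theorem Lf_a {S : Finset α} {τ : Perm α} {L} (h : ∀ s ∈ S, τ s = s) : Lf S (τ :: L) ↔ Lf S L := by
  unfold Lf
  constructor
  · rintro ⟨h1, h2⟩
    refine ⟨fun s hs => ?_, fun t ht => h2 t (List.mem_cons_of_mem _ ht)⟩
    have := h1 s hs
    rwa [mv_cons, if_neg (by simp [h s hs]), add_zero] at this
  · rintro ⟨h1, h2⟩
    refine ⟨fun s hs => ?_, fun t ht s hs s' hs' h3 h4 => ?_⟩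
    · rw [mv_cons, if_neg (by simp [h s hs]), add_zero, h1 s hs]
    · rcases List.mem_cons.1 ht with rfl | ht
      · exact absurd (h s hs) h3
      · exact h2 t ht s hs s' hs' h3 h4

theorem Lf_b {S : Finset α} {x y : α} {L} (hx : x ∈ S) (hy : y ∈ S) (h : x ≠ y) : ¬ Lf S (swap x y :: L) := by
  rintro ⟨_, h2⟩
  exact h (h2 _ List.mem_cons_self x hx y hy (by simpa using h.symm) (by simpa using h))

theorem Lf_c {S : Finset α} {x y : α} {L} (hx : x ∈ S) (hy : y ∉ S) :
    Lf S (swap x y :: L) ↔ mv x L = 0 ∧ Lf (S.erase x) L := by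
  have hxy : y ≠ x := by rintro rfl; exact hy hx
  have hf : ∀ s ∈ S, s ≠ x → swap x y s = s := fun s hs h =>
    swap_apply_of_ne_of_ne h (by rintro rfl; exact hy hs)
  unfold Lf
  constructor
  · rintro ⟨h1, h2⟩
    refine ⟨?_, fun s hs => ?_, fun t ht s hs s' hs' => h2 t (List.mem_cons_of_mem _ ht) s (mem_of_mem_erase hs) s' (mem_of_mem_erase hs')⟩
    · have := h1 x hx
      rw [mv_cons, if_pos (by simpa using hxy)] at this
      omega
    · have := h1 s (mem_of_mem_erase hs)
      rwa [mv_cons, if_neg (by simp [hf s (mem_of_mem_erase hs) (ne_of_mem_erase hs)]), add_zero] at this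
  · rintro ⟨h0, h1, h2⟩
    refine ⟨fun s hs => ?_, fun t ht s hs s' hs' h3 h4 => ?_⟩
    · by_cases h : s = x
      · rw [h, mv_cons, h0, if_pos (by simpa using hxy)]
      · rw [mv_cons, if_neg (by simp [hf s hs h]), add_zero, h1 s (mem_erase.2 ⟨h, hs⟩)]
    · rcases List.mem_cons.1 ht with rfl | ht
      · have e1 : s = x := by by_contra h; exact h3 (hf s hs h)
        have e2 : s' = x := by by_contra h; exact h4 (hf s' hs' h)
        rw [e1, e2]
      · rw [mv_zero] at h0
        have e1 : s ≠ x := by rintro rfl; exact h3 (h0 t (by assumption))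
        have e2 : s' ≠ x := by rintro rfl; exact h4 (h0 t (by assumption))
        exact h2 t ht s (mem_erase.2 ⟨e1, hs⟩) s' (mem_erase.2 ⟨e2, hs'⟩) h3 h4

theorem prod_fix_pt {x : α} {L : List (Perm α)} (h : mv x L = 0) : L.prod x = x := by
  induction L with
  | nil => rfl
  | cons t L ih =>
    rw [mv_zero] at h
    rw [List.prod_cons, Perm.mul_apply, ih (mv_zero.2 fun τ hτ => h τ (List.mem_cons_of_mem _ hτ)), h t List.mem_cons_self]

theorem sumL_erase (A : Finset α) (x : α) (m : ℕ) (f : List (Perm α) → ℚ) :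
    sumL A m (fun L => if mv x L = 0 then f L else 0) = sumL (A.erase x) m f := by
  induction m generalizing f with
  | zero => simp [sumL, mv_nil]
  | succ m ih =>
    unfold sumL
    congr 1
    symm
    have e : ∀ p ∈ (A.erase x).offDiag, sumL (A.erase x) m (fun L => f (swap p.1 p.2 :: L)) =
        sumL A m (fun L => if mv x (swap p.1 p.2 :: L) = 0 then f (swap p.1 p.2 :: L) else 0) := by
      intro p hp
      rw [mem_offDiag, mem_erase, mem_erase] at hp
      rw [← ih]
      congr 1; funext L
      rw [mv_cons, if_neg (not_not.2 (swap_apply_of_ne_of_ne hp.1.1.symm hp.2.1.1.symm)), add_zero]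
    rw [sum_congr rfl e]
    apply sum_subset
    · exact offDiag_mono (erase_subset _ _)
    · intro p hp h
      rw [mem_offDiag, mem_erase, mem_erase] at h
      rw [mem_offDiag] at hp
      refine Eq.trans ?_ (sumL_zero A m)
      congr 1; funext L
      have hne : swap p.1 p.2 x ≠ x := ?_
      · rw [mv_cons, if_pos hne, if_neg (by omega)]
      intro h'
      rw [swap_apply_eq_iff] at h'
      by_cases h1 : x = p.1
      · rw [h1, swap_apply_left] at h'; exact hp.2.2 h'
      · by_cases h2 : x = p.2
        · rw [h2, swap_apply_right] at h'; exact hp.2.2 h'.symm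
        · exact h ⟨⟨fun h => h1 h.symm, hp.1⟩, ⟨fun h => h2 h.symm, hp.2.1⟩, hp.2.2⟩

theorem Zthm (m : ℕ) (A S : Finset α) (T : Perm α) (g : List (Perm α) → ℚ) (hS : S ⊆ A) (hT : ∀ z, z ∉ A → T z = z) :
    sumL A m (fun L => if L.prod = T ∧ Lf S L then g (rem S L) else 0) =
      (m.descFactorial S.card : ℚ) * W S T * sumL (A \ S) (m - S.card) (fun L => if L.prod = delS S T then g L else 0) := by
  induction m generalizing A S T g with
  | zero =>
    rcases S.eq_empty_or_nonempty with rfl | h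
    · simp [sumL, W_empty, delS_empty, Lf, rem]; congr
    · have hc : S.card ≠ 0 := h.card_pos.ne'
      obtain ⟨n, hn⟩ := Nat.exists_eq_succ_of_ne_zero hc
      obtain ⟨s, hs⟩ := h
      rw [hn, Nat.zero_descFactorial_succ]
      have : ¬ Lf S [] := fun h => by simpa [mv_nil] using h.1 s hs
      simp [sumL, this]
  | succ m ih =>
    set G : α × α → ℚ := fun p => sumL A m (fun L => if (swap p.1 p.2 :: L).prod = T ∧ Lf S (swap p.1 p.2 :: L) then g (rem S (swap p.1 p.2 :: L)) else 0) with hG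
    have hTA : ∀ z ∈ A, T z ∈ A := by
      intro z hz
      by_contra h
      have := hT _ h
      rw [T.injective this] at h; exact h hz
    have hsum : ∑ p ∈ A.offDiag, G p = ∑ p ∈ (A \ S).offDiag, G p + (∑ p ∈ S ×ˢ (A \ S), G p + ∑ p ∈ (A \ S) ×ˢ S, G p) := by
      rw [← sum_union, ← sum_union]
      · symm
        apply sum_subset
        · intro p hp
          simp only [mem_union, mem_offDiag, mem_product, mem_sdiff] at hp ⊢
          rcases hp with h | h | h
          · exact ⟨h.1.1, h.2.1.1, h.2.2⟩
          · exact ⟨hS h.1, h.2.1, fun e => h.2.2 (e ▸ h.1)⟩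
          · exact ⟨h.1.1, hS h.2, fun e => h.1.2 (e ▸ h.2)⟩
        · intro p hp h
          simp only [mem_union, mem_offDiag, mem_product, mem_sdiff] at hp h
          refine Eq.trans ?_ (sumL_zero A m)
          rw [hG]
          dsimp only
          congr 1; funext L
          rw [if_neg]
          rintro ⟨_, h'⟩
          exact Lf_b (by tauto) (by tauto) hp.2.2 h'
      · rw [disjoint_left]; intro p h1 h2
        simp only [mem_union, mem_offDiag, mem_product, mem_sdiff] at h1 h2
        tauto
      · rw [disjoint_left]; intro p h1 h2
        simp only [mem_union, mem_offDiag, mem_product, mem_sdiff] at h1 h2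
        tauto
    have hsym : ∑ p ∈ (A \ S) ×ˢ S, G p = ∑ p ∈ S ×ˢ (A \ S), G p := by
      rw [sum_product_right, sum_product]
      refine sum_congr rfl fun x _ => sum_congr rfl fun y _ => ?_
      simp only [hG, swap_comm x y]
    set D := delS S T with hD
    have h1 : ∀ p ∈ (A \ S).offDiag, G p = (m.descFactorial S.card : ℚ) * W S T * sumL (A \ S) (m - S.card) (fun L => if (swap p.1 p.2 :: L).prod = D then g (swap p.1 p.2 :: L) else 0) := by
      intro p hp
      simp only [mem_offDiag, mem_sdiff] at hp
      have hf := swap_fix hp.1.2 hp.2.1.2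
      have := ih A S (swap p.1 p.2 * T) (fun L => g (swap p.1 p.2 :: L)) hS (by
        intro z hz
        rw [Perm.mul_apply, hT z hz]
        apply swap_apply_of_ne_of_ne
        · rintro rfl; exact hz hp.1.1
        · rintro rfl; exact hz hp.2.1.1)
      rw [W_mul _ _ _ hf, delS_mul _ _ _ hf] at this
      have eq : ∀ (P Q : Perm α), (swap p.1 p.2 * P = Q) = (P = swap p.1 p.2 * Q) := by
        intro P Q
        rw [eq_iff_iff]
        constructor
        · rintro rfl; rw [← mul_assoc, swap_mul_self, one_mul]
        · rintro rfl; rw [← mul_assoc, swap_mul_self, one_mul]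
      simp only [hG, Lf_a hf, rem_cons_of hf, List.prod_cons, eq]
      exact this
    have h2 : ∀ x ∈ S, ∀ y ∈ A \ S, G (x, y) = if T x = y then (m.descFactorial (S.card - 1) : ℚ) * W (S.erase x) (del T x) * sumL (A \ S) (m - (S.card - 1)) (fun L => if L.prod = D then g L else 0) else 0 := by
      intro x hx y hy
      rw [mem_sdiff] at hy
      have hxy : swap x y x ≠ x := by
        rw [swap_apply_left]; rintro rfl; exact hy.2 hx
      simp only [hG, Lf_c hx hy.2, rem_cons_not ⟨x, hx, hxy⟩, List.prod_cons]
      split_ifs with h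
      · have := ih (A.erase x) (S.erase x) (del T x) g (erase_subset_erase x hS) (by
          intro z hz
          by_cases hzx : z = x
          · rw [hzx, del_self]
          · exact del_fix (hT z fun h => hz (mem_erase.2 ⟨hzx, h⟩)))
        rw [delS_erase _ _ _ hx, card_erase_of_mem hx] at this
        have e : A.erase x \ S.erase x = A \ S := by
          ext z; simp only [mem_sdiff, mem_erase]
          by_cases h : z = x
          · subst h; tauto
          · tauto
        rw [e] at this
        rw [← this, ← sumL_erase]
        congr 1; funext L
        by_cases h0 : mv x L = 0
        · rw [if_pos h0, rem_erase h0]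
          have : (swap x y * L.prod = T) ↔ L.prod = del T x := by
            unfold del
            rw [h]
            constructor
            · rintro rfl; rw [← mul_assoc, swap_mul_self, one_mul]
            · intro h; rw [h, ← mul_assoc, swap_mul_self, one_mul]
          simp only [this, h0, true_and]
        · rw [if_neg h0, if_neg (by tauto)]
      · refine Eq.trans ?_ (sumL_zero A m)
        congr 1; funext L
        rw [if_neg]
        rintro ⟨h3, h4, _⟩
        apply h
        rw [← h3, Perm.mul_apply, prod_fix_pt h4, swap_apply_left]
    have h3 : ∑ p ∈ S ×ˢ (A \ S), G p = (m.descFactorial (S.card - 1) : ℚ) * (S.card * W S T) * sumL (A \ S) (m - (S.card - 1)) (fun L => if L.prod = D then g L else 0) := by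
      rw [sum_product]
      rw [sum_congr rfl fun x hx => sum_congr rfl fun y hy => h2 x hx y hy]
      simp only [sum_ite_eq]
      rcases S.eq_empty_or_nonempty with rfl | hne
      · simp
      rw [W_rec S T hne, mul_sum, sum_mul, sum_filter]
      refine sum_congr rfl fun x hx => ?_
      have : T x ∈ A \ S ↔ T x ∉ S := by simp [hTA x (hS hx)]
      simp only [this]
    rw [sumL]
    change 1 / 2 * ∑ p ∈ A.offDiag, G p = _
    rw [hsum, hsym, h3, sum_congr rfl h1, ← mul_sum]
    rcases S.eq_empty_or_nonempty with rfl | hne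
    · simp [sumL]; ring
    obtain ⟨s, hs⟩ : ∃ s, S.card = s + 1 := ⟨S.card - 1, by have := hne.card_pos; omega⟩
    rw [hs]
    simp only [Nat.add_sub_cancel, Nat.add_sub_add_right]
    rw [Nat.succ_descFactorial_succ]
    by_cases hms : s + 1 ≤ m
    · have e : m - s = (m - (s + 1)) + 1 := by omega
      have e2 : (m.descFactorial (s+1) : ℚ) = ((m:ℚ) - s) * m.descFactorial s := by
        rw [Nat.descFactorial_succ]; push_cast [show s ≤ m by omega]; ring
      rw [e, sumL, e2]
      push_cast
      ring
    · rw [Nat.descFactorial_eq_zero_iff_lt.2 (by omega : m < s+1)]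
      by_cases hms2 : s = m
      · subst hms2; push_cast; ring
      · rw [Nat.descFactorial_eq_zero_iff_lt.2 (by omega : m < s)]; simp
end leaf
end HZ

namespace HZ
open Finset Equiv Equiv.Perm
open scoped Classical
set_option linter.unusedSectionVars false
section incl
variable {α : Type*} [Fintype α]

theorem mv_uniq {s : α} {L : List (Perm α)} (h : mv s L = 1) {t t' : Perm α} (ht : t ∈ L) (ht' : t' ∈ L)
    (h1 : t s ≠ s) (h2 : t' s ≠ s) : t = t' := by
  unfold mv at h
  rw [List.countP_eq_length_filter, List.length_eq_one_iff] at h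
  obtain ⟨a, ha⟩ := h
  have e1 : t ∈ L.filter (fun τ => τ s ≠ s) := List.mem_filter.2 ⟨ht, by simpa using h1⟩
  have e2 : t' ∈ L.filter (fun τ => τ s ≠ s) := List.mem_filter.2 ⟨ht', by simpa using h2⟩
  rw [ha, List.mem_singleton] at e1 e2
  rw [e1, e2]

theorem mv_ex {s : α} {L : List (Perm α)} (h : mv s L = 1) : ∃ t ∈ L, t s ≠ s := by
  by_contra! h'
  rw [mv_zero.2 h'] at h; omega

theorem swap_of {A : Finset α} {L : List (Perm α)} (hL : SwL A L) {t : Perm α} (ht : t ∈ L) {s : α} (h : t s ≠ s) :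
    t = swap s (t s) ∧ s ∈ A ∧ t s ∈ A ∧ t (t s) = s := by
  obtain ⟨x, hx, y, hy, hxy, rfl⟩ := hL t ht
  by_cases h1 : s = x
  · subst h1; simp [hx, hy]
  · by_cases h2 : s = y
    · subst h2; simp [hx, hy, swap_comm]
    · exact absurd (swap_apply_of_ne_of_ne h1 h2) h

theorem tr_leaf {A S : Finset α} {L : List (Perm α)} (hA : 3 ≤ A.card) (hS : S ⊆ A) (hL : SwL A L) :
    (Tr A L ∧ ∀ s ∈ S, mv s L = 1) ↔ (Lf S L ∧ Tr (A \ S) (rem S L)) := by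
  constructor
  · rintro ⟨hT, h1⟩
    have h2 : ∀ τ ∈ L, ∀ s ∈ S, ∀ s' ∈ S, τ s ≠ s → τ s' ≠ s' → s = s' := by
      intro t ht s hs s' hs' h3 h4
      by_contra hne
      obtain ⟨e, _, _, _⟩ := swap_of hL ht h3
      have e5 : t s = s' := by
        by_contra h
        rw [e] at h4
        exact h4 (swap_apply_of_ne_of_ne (Ne.symm hne) (Ne.symm h))
      rw [e5] at e
      have : ({s, s'} : Finset α) = A := by
        apply hT
        · intro z hz
          rw [mem_insert, mem_singleton] at hz
          rcases hz with rfl | rfl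
          · exact hS hs
          · exact hS hs'
        · simp
        · intro t' ht' z hz
          by_cases h5 : t' = t
          · rw [h5, e]; revert z; rw [swap_inv]; simp
          · have a1 : t' s = s := by
              by_contra h; exact h5 (mv_uniq (h1 s hs) ht' ht h h3)
            have a2 : t' s' = s' := by
              by_contra h; exact h5 (mv_uniq (h1 s' hs') ht' ht h h4)
            rw [mem_insert, mem_singleton] at hz ⊢
            rcases hz with rfl | rfl
            · left; exact a1
            · right; exact a2
      have := card_le_two (a := s) (b := s')
      rw [‹({s, s'} : Finset α) = A›] at this
      omega
    refine ⟨⟨h1, h2⟩, ?_⟩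
    intro B hB hne hI
    have hBS : ∀ z ∈ B, z ∉ S := fun z hz => (mem_sdiff.1 (hB hz)).2
    have key : B ∪ S.filter (fun s => ∃ t ∈ L, t s ≠ s ∧ t s ∈ B) = A := by
      apply hT
      · exact union_subset (hB.trans sdiff_subset) ((filter_subset _ _).trans hS)
      · exact hne.mono subset_union_left
      · intro t ht
        by_cases h : ∀ s ∈ S, t s = s
        · intro z hz
          rw [mem_union, mem_filter] at hz ⊢
          rcases hz with hz | hz
          · left; exact hI t (List.mem_filter.2 ⟨ht, by simpa using h⟩) z hz
          · right; rw [h z hz.1]; exact hz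
        · push Not at h
          obtain ⟨s, hs, h3⟩ := h
          obtain ⟨e, _, _, e4⟩ := swap_of hL ht h3
          have hy : t s ∉ S := fun h => h3 (h2 t ht s hs _ h h3 (by rw [e4]; exact h3.symm)).symm
          rw [e, swap_inv]
          simp only [mem_union, mem_filter]
          constructor
          · rintro (h | ⟨_, t', ht', h5, h6⟩)
            · exact absurd hs (hBS s h)
            · left; rwa [mv_uniq (h1 s hs) ht ht' h3 h5]
          · rintro (h | h)
            · right; exact ⟨hs, t, ht, h3, h⟩
            · exact absurd h.1 hy
    refine Subset.antisymm hB fun z hz => ?_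
    rw [mem_sdiff] at hz
    have h3 := hz.1
    rw [← key, mem_union, mem_filter] at h3
    exact h3.resolve_right fun h => hz.2 h.1
  · rintro ⟨⟨h1, h2⟩, hT⟩
    refine ⟨?_, h1⟩
    intro B hB hne hI
    have hn : ∀ t ∈ L, ∀ s ∈ S, t s ≠ s → t s ∉ S := fun t ht s hs h3 h =>
      h3 (h2 t ht s hs _ h h3 (by rw [(swap_of hL ht h3).2.2.2]; exact h3.symm)).symm
    have key : B \ S = A \ S := by
      apply hT
      · exact sdiff_subset_sdiff hB (Subset.refl _)
      · obtain ⟨b, hb⟩ := hne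
        by_cases hbS : b ∈ S
        · obtain ⟨t, ht, h3⟩ := mv_ex (h1 b hbS)
          exact ⟨t b, mem_sdiff.2 ⟨hI t ht b hb, hn t ht b hbS h3⟩⟩
        · exact ⟨b, mem_sdiff.2 ⟨hb, hbS⟩⟩
      · intro t ht z hz
        obtain ⟨ht, h3⟩ := List.mem_filter.1 ht
        rw [mem_sdiff] at hz ⊢
        refine ⟨hI t ht z hz.1, fun h => hz.2 ?_⟩
        have h3 : ∀ s ∈ S, t s = s := by simpa using h3
        rwa [← t.injective (h3 _ h)]
    refine Subset.antisymm hB fun z hz => ?_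
    by_cases hzS : z ∈ S
    · obtain ⟨t, ht, h3⟩ := mv_ex (h1 z hzS)
      obtain ⟨_, _, e3, e4⟩ := swap_of hL ht h3
      have : t z ∈ B \ S := by rw [key]; exact mem_sdiff.2 ⟨e3, hn t ht z hzS h3⟩
      rw [← e4]
      exact hI t ht _ (mem_sdiff.1 this).1
    · have : z ∈ B \ S := by rw [key]; exact mem_sdiff.2 ⟨hz, hzS⟩
      exact (mem_sdiff.1 this).1

noncomputable def KK (A : Finset α) (T : Perm α) (m : ℕ) : ℚ :=
  sumL A m (fun L => if L.prod = T ∧ Tr A L ∧ ∀ x ∈ A, 2 ≤ mv x L then 1 else 0)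

theorem KK_eq (A : Finset α) (T : Perm α) (m : ℕ) (hA : 3 ≤ A.card) (hT : ∀ z, z ∉ A → T z = z) :
    KK A T m = ∑ S ∈ A.powerset, (-1 : ℚ) ^ S.card *
      ((m.descFactorial S.card : ℚ) * W S T * cnt (A \ S) (delS S T) (m - S.card)) := by
  have h1 : ∀ S ∈ A.powerset, (m.descFactorial S.card : ℚ) * W S T * cnt (A \ S) (delS S T) (m - S.card)
      = sumL A m (fun L => if L.prod = T ∧ Tr A L ∧ ∀ s ∈ S, mv s L = 1 then 1 else 0) := by
    intro S hS
    rw [mem_powerset] at hS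
    have := Zthm m A S T (fun L => if Tr (A \ S) L then 1 else 0) hS hT
    simp only [← ite_and] at this
    unfold cnt
    rw [← this]
    apply sumL_congr
    intro L hL _
    refine if_congr ?_ rfl rfl
    rw [tr_leaf hA hS hL, and_assoc]
  rw [sum_congr rfl fun S hS => by rw [h1 S hS, ← sumL_mul], ← sumL_sum]
  unfold KK
  apply sumL_congr
  intro L hL _
  by_cases h : L.prod = T ∧ Tr A L
  · simp only [h.1, h.2, true_and]
    have h2 : ∀ x ∈ A, 1 ≤ mv x L := by
      intro x hx
      by_contra h0
      have h0 : mv x L = 0 := by omega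
      rw [mv_zero] at h0
      have : ({x} : Finset α) = A := by
        apply h.2 _ (by simpa) (by simp)
        intro t ht z hz
        rw [mem_singleton] at hz ⊢
        rw [hz, h0 t ht]
      rw [← this] at hA; simp at hA
    have h3 : (if ∀ x ∈ A, 2 ≤ mv x L then (1:ℚ) else 0) = ∏ x ∈ A, (1 + -(if mv x L = 1 then (1:ℚ) else 0)) := by
      split_ifs with h4
      · symm; apply prod_eq_one
        intro x hx
        rw [if_neg (by have := h4 x hx; omega)]; simp
      · push Not at h4
        obtain ⟨x, hx, h4⟩ := h4
        symm; apply prod_eq_zero hx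
        rw [if_pos (by have := h2 x hx; omega)]; simp
    rw [h3, prod_one_add]
    refine sum_congr rfl fun S _ => ?_
    rw [prod_neg, prod_ite_zero]
    simp
  · rw [if_neg (by tauto)]
    symm; apply sum_eq_zero
    intro S _
    rw [if_neg (by tauto), mul_zero]
end incl
end HZ

namespace HZ
open Finset Equiv Equiv.Perm
open scoped Classical
set_option linter.unusedSectionVars false

section af
noncomputable def af (n p : ℕ) : ℚ := ∑ s ∈ range (n+1), (-1:ℚ)^s * (n.choose s) * ((n:ℚ) - s)^p

theorem af_zero (n : ℕ) : af (n+1) 0 = 0 := by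
  have := Int.alternating_sum_range_choose (n := n+1)
  rw [if_neg (by omega)] at this
  have h2 : ((∑ i ∈ range (n + 1 + 1), ((-1) ^ i * ((n+1).choose i : ℤ)) : ℤ) : ℚ) = 0 := by rw [this]; rfl
  push_cast at h2
  simpa [af] using h2

theorem af_rec (n p : ℕ) : af (n+1) (p+1) = (n+1) * (af (n+1) p + af n p) := by
  set M : ℚ := ∑ s ∈ range (n+1), (-1:ℚ)^s * (n.choose s) * ((n:ℚ) + 1 - s)^p with hM
  have h1 : af (n+1) (p+1) = (n+1) * M := by
    unfold af
    rw [sum_range_succ, hM, mul_sum]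
    simp only [Nat.cast_add, Nat.cast_one, sub_self, zero_pow (Nat.succ_ne_zero p), mul_zero, add_zero]
    refine sum_congr rfl fun s hs => ?_
    have hs' : s ≤ n := by rw [mem_range] at hs; omega
    have e := Nat.choose_mul_succ_eq n s
    have e2 : (n.choose s : ℚ) * (n + 1) = (n+1).choose s * (n + 1 - s) := by
      have h : ((n + 1 - s : ℕ) : ℚ) = n + 1 - s := by push_cast [show s ≤ n + 1 by omega]; ring
      rw [← h]; exact_mod_cast e
    rw [pow_succ]
    linear_combination (-(-1:ℚ)^s * ((n:ℚ) + 1 - s)^p) * e2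
  have h2 : af (n+1) p = M - af n p := by
    have hM2 : M = ∑ s ∈ range (n+1), (-1:ℚ)^(s+1) * (n.choose (s+1)) * ((n:ℚ) + 1 - ((s+1 : ℕ) : ℚ))^p + ((n:ℚ) + 1)^p := by
      have := sum_range_succ' (fun s : ℕ => (-1:ℚ)^s * (n.choose s) * ((n:ℚ) + 1 - (s:ℚ))^p) (n+1)
      rw [sum_range_succ] at this
      simp only [Nat.choose_succ_self, Nat.cast_zero, mul_zero, zero_mul, add_zero, pow_zero, Nat.choose_zero_right, Nat.cast_one, one_mul, sub_zero] at this
      rw [hM, this]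
    unfold af
    rw [hM2, sum_range_succ']
    have e : ∀ s ∈ range (n+1), (-1:ℚ)^(s+1) * ((n+1).choose (s+1)) * (((n+1 : ℕ) : ℚ) - ((s+1 : ℕ) : ℚ))^p
       = (-1:ℚ)^(s+1) * (n.choose (s+1)) * ((n:ℚ) + 1 - ((s+1 : ℕ) : ℚ))^p - (-1:ℚ)^s * (n.choose s) * ((n:ℚ) - s)^p := by
      intro s _
      rw [Nat.choose_succ_succ]
      push_cast
      rw [show (n:ℚ) + 1 - (s + 1) = n - s by ring]
      ring
    rw [sum_congr rfl e, sum_sub_distrib]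
    push_cast
    simp
    ring
  rw [h1, h2]; ring

theorem af_lt (p : ℕ) : ∀ n, p < n → af n p = 0 := by
  induction p with
  | zero => intro n hn; obtain ⟨k, rfl⟩ : ∃ k, n = k + 1 := ⟨n - 1, by omega⟩; exact af_zero k
  | succ p ih =>
    intro n hn; obtain ⟨k, rfl⟩ : ∃ k, n = k + 1 := ⟨n - 1, by omega⟩
    rw [af_rec, ih _ (by omega), ih _ (by omega)]; simp

theorem af_eq (n : ℕ) : af n n = n.factorial := by
  induction n with
  | zero => simp [af]
  | succ n ih => rw [af_rec, ih, af_lt _ _ (Nat.lt_succ_self n), Nat.factorial_succ]; push_cast; ring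

theorem af_eq1 (n : ℕ) : af n (n+1) = n.factorial * (n * (n + 1) / 2) := by
  induction n with
  | zero => simp [af]
  | succ n ih => rw [af_rec, ih, af_eq, Nat.factorial_succ]; push_cast; ring
end af

section eval
variable {α : Type*} [Fintype α]

noncomputable def Q (c : Finset α) (s : ℕ) (T : Perm α) : ℚ := ∑ S ∈ c.powersetCard s, W S T

noncomputable def R (c : Finset α) (s : ℕ) (T : Perm α) (z : α) : ℚ := ∑ S ∈ (c.powersetCard s).filter (fun S => z ∉ S), W S T

theorem R_step (c : Finset α) (s : ℕ) (T : Perm α) (z : α) (hT : ∀ w ∈ c, T w ∈ c) : R c s T (T z) = R c s T z := by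
  unfold R
  symm
  refine sum_bij' (fun S _ => S.image T) (fun S _ => S.image (T⁻¹ : Perm α)) ?_ ?_ ?_ ?_ ?_
  · intro S hS
    rw [mem_filter, mem_powersetCard] at hS ⊢
    refine ⟨⟨?_, by rw [card_image_of_injective _ T.injective]; exact hS.1.2⟩, ?_⟩
    · intro w hw
      obtain ⟨v, hv, rfl⟩ := mem_image.1 hw
      exact hT v (hS.1.1 hv)
    · intro h
      obtain ⟨v, hv, h'⟩ := mem_image.1 h
      exact hS.2 (T.injective h' ▸ hv)
  · intro S hS
    rw [mem_filter, mem_powersetCard] at hS ⊢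
    refine ⟨⟨?_, by rw [card_image_of_injective _ (T⁻¹ : Perm α).injective]; exact hS.1.2⟩, ?_⟩
    · intro w hw
      obtain ⟨v, hv, rfl⟩ := mem_image.1 hw
      rw [← perm_inv hT]
      have : T (T⁻¹ v) = v := T.apply_symm_apply v
      rw [this]; exact hS.1.1 hv
    · intro h
      obtain ⟨v, hv, h'⟩ := mem_image.1 h
      have : T (T⁻¹ v) = v := T.apply_symm_apply v
      rw [h'] at this
      rw [this] at hS; exact hS.2 hv
  · intro S _
    rw [image_image]
    have : (⇑T⁻¹ ∘ ⇑T) = id := by funext x; exact T.symm_apply_apply x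
    rw [this, image_id]
  · intro S _
    rw [image_image]
    have : (⇑T ∘ ⇑T⁻¹) = id := by funext x; exact T.apply_symm_apply x
    rw [this, image_id]
  · intro S _
    exact (W_image S T).symm

theorem cyc_inv {c : Finset α} {T : Perm α} (hc : ∀ z ∈ c, orb T z = c) : ∀ w ∈ c, T w ∈ c := by
  intro w hw
  have := apply_mem_orb (T := T) (x := w) (z := w)
  rw [hc w hw] at this
  exact this.2 hw

theorem R_eq (c : Finset α) (s : ℕ) (T : Perm α) (z : α) (hc : ∀ z ∈ c, orb T z = c) (hz : z ∈ c) :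
    (c.card : ℚ) * R c s T z = ((c.card : ℚ) - s) * Q c s T := by
  have hT := cyc_inv hc
  have hR : ∀ w ∈ c, R c s T w = R c s T z := by
    intro w hw
    rw [← hc z hz, mem_orb_iff] at hw
    obtain ⟨n, rfl⟩ := hw
    induction n with
    | zero => rfl
    | succ n ih => rw [Function.iterate_succ_apply', R_step _ _ _ _ hT, ih]
  have h1 : ∑ w ∈ c, R c s T w = (c.card : ℚ) * R c s T z := by
    rw [sum_congr rfl hR, sum_const, nsmul_eq_mul]
  rw [← h1]
  unfold R Q
  simp only [sum_filter]
  rw [sum_comm, mul_sum]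
  refine sum_congr rfl fun S hS => ?_
  rw [mem_powersetCard] at hS
  rw [← sum_filter, sum_const, nsmul_eq_mul]
  congr 1
  have : c.filter (fun w => w ∉ S) = c \ S := by ext; simp
  rw [this, card_sdiff_of_subset hS.1, Nat.cast_sub (card_le_card hS.1), hS.2]

theorem Q_eq (s : ℕ) : ∀ (c : Finset α) (T : Perm α), (∀ z ∈ c, orb T z = c) → s < c.card →
    (s.factorial : ℚ) * ((c.card : ℚ) - s) * Q c s T = c.card * ((c.card : ℚ) - s)^s := by
  induction s with
  | zero => intro c T _ _; simp [Q, W_empty]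
  | succ s ih =>
    intro c T hc hs
    have hT := cyc_inv hc
    have h1 : ((s:ℚ) + 1) * Q c (s+1) T = ∑ x ∈ c, R (c.erase x) s (del T x) (T x) := by
      unfold Q R
      rw [mul_sum]
      have e : ∀ S ∈ c.powersetCard (s+1), ((s:ℚ) + 1) * W S T = ∑ x ∈ c, if x ∈ S ∧ T x ∉ S then W (S.erase x) (del T x) else 0 := by
        intro S hS
        rw [mem_powersetCard] at hS
        have h := W_rec S T (card_pos.1 (by omega))
        rw [hS.2] at h
        push_cast at h
        rw [h, ← sum_filter]
        refine sum_congr ?_ fun _ _ => rfl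
        ext x; simp only [mem_filter]
        refine ⟨fun h => ⟨hS.1 h.1, h⟩, fun h => h.2⟩
      rw [sum_congr rfl e, sum_comm]
      refine sum_congr rfl fun x hx => ?_
      rw [← sum_filter]
      have hTx : T x ≠ x := by
        intro h
        have : orb T x ⊆ {x} := orb_subset (by simp [h]) (by simp)
        rw [hc x hx] at this
        have := card_le_card this
        rw [card_singleton] at this
        omega
      refine sum_bij' (fun S _ => S.erase x) (fun S _ => insert x S) ?_ ?_ ?_ ?_ ?_
      · intro S hS
        rw [mem_filter, mem_powersetCard] at hS ⊢
        refine ⟨⟨erase_subset_erase _ hS.1.1, by rw [card_erase_of_mem hS.2.1]; omega⟩, fun h => hS.2.2 (mem_of_mem_erase h)⟩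
      · intro S hS
        rw [mem_filter, mem_powersetCard] at hS ⊢
        have hxS : x ∉ S := fun h => notMem_erase x c (hS.1.1 h)
        refine ⟨⟨insert_subset hx (hS.1.1.trans (erase_subset _ _)), by rw [card_insert_of_notMem hxS]; omega⟩, mem_insert_self _ _, ?_⟩
        rw [mem_insert]; rintro (h | h)
        · exact hTx h
        · exact hS.2 h
      · intro S hS
        rw [mem_filter] at hS
        exact insert_erase hS.2.1
      · intro S hS
        rw [mem_filter, mem_powersetCard] at hS
        exact erase_insert fun h => notMem_erase x c (hS.1.1 h)
      · intro S hS; rfl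
    have hμ : (c.card : ℚ) - 1 - s ≠ 0 := by
      have : (s:ℚ) + 1 < c.card := by exact_mod_cast hs
      linarith
    have hμ1 : (c.card : ℚ) - 1 ≠ 0 := by
      have : (s:ℚ) + 1 < c.card := by exact_mod_cast hs
      have : (0:ℚ) ≤ s := by positivity
      linarith
    have h2 : ∀ x ∈ c, (s.factorial : ℚ) * R (c.erase x) s (del T x) (T x) = ((c.card : ℚ) - 1 - s)^s := by
      intro x hx
      have hTx : T x ∈ c.erase x := by
        rw [mem_erase]; refine ⟨?_, hT x hx⟩
        intro h
        have : orb T x ⊆ {x} := orb_subset (by simp [h]) (by simp)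
        rw [hc x hx] at this
        have := card_le_card this
        rw [card_singleton] at this
        omega
      have hc' : ∀ z ∈ c.erase x, orb (del T x) z = c.erase x := by
        intro z hz
        rw [orb_del _ _ _ (ne_of_mem_erase hz), hc z (mem_of_mem_erase hz)]
      have a1 := R_eq _ s _ _ hc' hTx
      have a2 := ih _ _ hc' (by rw [card_erase_of_mem hx]; omega)
      rw [card_erase_of_mem hx, Nat.cast_sub (by omega)] at a1 a2
      push_cast at a1 a2
      apply mul_left_cancel₀ hμ1
      linear_combination (s.factorial : ℚ) * a1 + a2
    have h3 : ((s:ℚ) + 1) * (s.factorial : ℚ) * Q c (s+1) T = c.card * ((c.card : ℚ) - 1 - s)^s := by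
      rw [mul_comm (s + 1 : ℚ), mul_assoc, h1, mul_sum, sum_congr rfl h2, sum_const, nsmul_eq_mul]
    rw [Nat.factorial_succ, pow_succ]
    push_cast
    rw [show (c.card : ℚ) - (s + 1) = c.card - 1 - s by ring]
    linear_combination ((c.card : ℚ) - 1 - s) * h3

theorem Phi (c : Finset α) (T : Perm α) (hne : c.Nonempty) (hc : ∀ z ∈ c, orb T z = c) (j : ℕ) :
    ∑ S ∈ c.powerset, (-1:ℚ)^S.card * W S T * (((c \ S).card : ℚ)^j * ww (c \ S).card) =
      c.card / c.card.factorial * af c.card (c.card + j) := by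
  have hpos := hne.card_pos
  rw [sum_powerset]
  unfold af
  rw [mul_sum]
  refine sum_congr rfl fun s hs => ?_
  rw [mem_range] at hs
  have e : ∑ S ∈ c.powersetCard s, (-1:ℚ)^S.card * W S T * (((c \ S).card : ℚ)^j * ww (c \ S).card)
      = (-1)^s * Q c s T * (((c.card - s : ℕ) : ℚ)^j * ww (c.card - s)) := by
    unfold Q
    rw [mul_sum, sum_mul]
    refine sum_congr rfl fun S hS => ?_
    rw [mem_powersetCard] at hS
    rw [card_sdiff_of_subset hS.1, hS.2]
  rw [e]
  by_cases h : s = c.card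
  · subst h
    simp [ww, show c.card ≠ 0 by omega]
  have hlt : s < c.card := by omega
  have hQ := Q_eq s c T hc hlt
  obtain ⟨ν, hν⟩ : ∃ ν, c.card = ν + s := ⟨c.card - s, by omega⟩
  rw [hν] at hQ hlt ⊢
  have hν0 : (ν : ℚ) ≠ 0 := by have : 0 < ν := by omega
                               positivity
  have hch : ((ν + s).choose s : ℚ) = (ν+s).factorial / (s.factorial * ν.factorial) := by
    rw [Nat.cast_choose ℚ (by omega)]; simp
  rw [hch]
  rw [Nat.add_sub_cancel]
  push_cast at hQ ⊢
  simp only [add_sub_cancel_right] at hQ ⊢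
  unfold ww
  have f1 : (s.factorial : ℚ) ≠ 0 := by positivity
  have f2 : (ν.factorial : ℚ) ≠ 0 := by positivity
  have f3 : ((ν+s).factorial : ℚ) ≠ 0 := by positivity
  have hQ' : Q c s T = (ν + s) * ν^s / (s.factorial * ν) := by
    field_simp; linear_combination hQ
  rw [hQ']
  field_simp
  ring

theorem Phi0 (c : Finset α) (T : Perm α) (hne : c.Nonempty) (hc : ∀ z ∈ c, orb T z = c) :
    ∑ S ∈ c.powerset, (-1:ℚ)^S.card * W S T * ww (c \ S).card = c.card := by
  have := Phi c T hne hc 0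
  simp only [pow_zero, one_mul, add_zero, af_eq] at this
  rw [this]
  have : (c.card.factorial : ℚ) ≠ 0 := by positivity
  field_simp

theorem Phi1 (c : Finset α) (T : Perm α) (hne : c.Nonempty) (hc : ∀ z ∈ c, orb T z = c) :
    ∑ S ∈ c.powerset, (-1:ℚ)^S.card * W S T * ((c \ S).card * ww (c \ S).card) = c.card * (c.card * (c.card + 1) / 2) := by
  have := Phi c T hne hc 1
  simp only [pow_one, af_eq1] at this
  rw [this]
  have : (c.card.factorial : ℚ) ≠ 0 := by positivity
  field_simp

theorem sum_pow_union (c U : Finset α) (h : Disjoint c U) (F : Finset α → ℚ) :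
    ∑ S ∈ (c ∪ U).powerset, F S = ∑ S1 ∈ c.powerset, ∑ S2 ∈ U.powerset, F (S1 ∪ S2) := by
  rw [← sum_product']
  refine sum_bij' (fun S _ => (S ∩ c, S ∩ U)) (fun p _ => p.1 ∪ p.2) ?_ ?_ ?_ ?_ ?_
  · intro S hS
    simp [inter_subset_right]
  · intro p hp
    rw [mem_product, mem_powerset, mem_powerset] at hp
    rw [mem_powerset]; exact union_subset_union hp.1 hp.2
  · intro S hS
    rw [mem_powerset] at hS
    rw [← inter_union_distrib_left, inter_eq_left.2 hS]
  · intro p hp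
    rw [mem_product, mem_powerset, mem_powerset] at hp
    have d := disjoint_left.1 h
    ext z
    · simp only [mem_inter, mem_union]
      constructor
      · rintro ⟨a | a, b⟩
        · exact a
        · exact absurd (hp.2 a) (d b)
      · intro a; exact ⟨Or.inl a, hp.1 a⟩
    · simp only [mem_inter, mem_union]
      constructor
      · rintro ⟨a | a, b⟩
        · exact absurd b (d (hp.1 a))
        · exact a
      · intro a; exact ⟨Or.inr a, hp.2 a⟩
  · intro S hS
    rw [mem_powerset] at hS
    dsimp only
    rw [← inter_union_distrib_left, inter_eq_left.2 hS]

theorem factorC (T : Perm α) (φ : Finset α → Finset α → ℚ) (C : Finset (Finset α))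
    (hi : ∀ c ∈ C, ∀ z ∈ c, T z ∈ c) (hd : ∀ c ∈ C, ∀ c' ∈ C, c ≠ c' → Disjoint c c') :
    ∑ S ∈ (C.biUnion id).powerset, (-1:ℚ)^S.card * W S T * ∏ c ∈ C, φ c (c \ S) =
      ∏ c ∈ C, ∑ S ∈ c.powerset, (-1:ℚ)^S.card * W S T * φ c (c \ S) := by
  induction C using Finset.induction_on with
  | empty => simp [W_empty]
  | insert c C hcC ih =>
    have hdU : Disjoint c (C.biUnion id) := by
      rw [disjoint_biUnion_right]
      intro c' hc'
      exact hd c (mem_insert_self _ _) c' (mem_insert_of_mem hc') (by rintro rfl; exact hcC hc')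
    rw [biUnion_insert, id, sum_pow_union _ _ hdU, prod_insert hcC,
      ← ih (fun c' h => hi c' (mem_insert_of_mem h)) (fun c1 h1 c2 h2 => hd c1 (mem_insert_of_mem h1) c2 (mem_insert_of_mem h2)), sum_mul_sum]
    refine sum_congr rfl fun S1 h1 => sum_congr rfl fun S2 h2 => ?_
    rw [mem_powerset] at h1 h2
    have d2 : Disjoint S2 c := (disjoint_of_subset_right h2 hdU).symm
    have d1 : Disjoint S1 S2 := (disjoint_of_subset_right h1 d2).symm
    rw [prod_insert hcC, card_union_of_disjoint d1, W_union c S1 S2 T (hi c (mem_insert_self _ _)) h1 d2, pow_add]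
    have e1 : c \ (S1 ∪ S2) = c \ S1 := by
      ext z; simp only [mem_sdiff, mem_union]
      have : z ∈ c → z ∉ S2 := fun h => disjoint_right.1 d2 h
      tauto
    have e2 : ∏ c' ∈ C, φ c' (c' \ (S1 ∪ S2)) = ∏ c' ∈ C, φ c' (c' \ S2) := by
      refine prod_congr rfl fun c' hc' => ?_
      congr 1
      ext z; simp only [mem_sdiff, mem_union]
      have hz : z ∈ c' → z ∉ c := fun h => disjoint_right.1 hdU (mem_biUnion.2 ⟨c', hc', h⟩)
      have := @h1 z
      tauto
    rw [e1, e2]; ring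

theorem K_val (A : Finset α) (T : Perm α) (hA : 3 ≤ A.card) (hT : ∀ z, z ∉ A → T z = z) (h4 : (cyc A T).card = 4) :
    KK A T (A.card + 2) = ((A.card + 2).factorial : ℚ) * ((∏ c ∈ cyc A T, (c.card : ℚ)) * ∑ c ∈ cyc A T, ((c.card : ℚ) * (c.card + 1) / 2)) := by
  have hTA := sup_inv hT
  have horb : ∀ c ∈ cyc A T, ∀ z ∈ c, orb T z = c := fun c hc z hz => mem_cyc_eq hc hz
  have hdis : ∀ c ∈ cyc A T, ∀ c' ∈ cyc A T, c ≠ c' → Disjoint c c' := by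
    intro c hc c' hc' hne
    rw [disjoint_left]; intro z h1 h2
    exact hne ((horb c hc z h1).symm.trans (horb c' hc' z h2))
  have hsub : ∀ c ∈ cyc A T, c ⊆ A := by
    intro c hc
    obtain ⟨w, hw, rfl⟩ := mem_image.1 hc
    exact orb_subset hTA hw
  have hU : (cyc A T).biUnion id = A := by
    ext z; rw [mem_biUnion]
    constructor
    · rintro ⟨c, hc, hz⟩; exact hsub c hc hz
    · intro hz; exact ⟨orb T z, mem_image_of_mem _ hz, self_mem_orb _ _⟩
  have hnec : ∀ c ∈ cyc A T, c.Nonempty := fun c hc => card_pos.1 (card_pos_of_cyc hc)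
  have key : ∀ S ∈ A.powerset, (-1 : ℚ) ^ S.card * (((A.card + 2).descFactorial S.card : ℚ) * W S T * cnt (A \ S) (delS S T) (A.card + 2 - S.card))
     = ((A.card + 2).factorial : ℚ) * ∑ c0 ∈ cyc A T, ((-1 : ℚ) ^ S.card * W S T * ∏ c ∈ cyc A T, ((if c = c0 then ((c \ S).card : ℚ) else 1) * ww (c \ S).card)) := by
    intro S hS
    rw [mem_powerset] at hS
    by_cases hfull : ∃ c ∈ cyc A T, c ⊆ S
    · obtain ⟨c, hc, hcS⟩ := hfull
      have : W S T = 0 := by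
        have := W_union c c (S \ c) T (cyc_inv (horb c hc)) (Subset.refl _) sdiff_disjoint
        rw [union_sdiff_of_subset hcS, W_inv c T (hnec c hc) (cyc_inv (horb c hc)), zero_mul] at this
        exact this
      rw [this]; simp
    · push Not at hfull
      have hne' : ∀ c ∈ cyc A T, (c \ S).Nonempty := fun c hc => sdiff_nonempty.2 (hfull c hc)
      have hcyc : cyc (A \ S) (delS S T) = (cyc A T).image (fun c => c \ S) := by
        ext d
        unfold cyc
        simp only [mem_image]
        constructor
        · rintro ⟨z, hz, rfl⟩
          rw [mem_sdiff] at hz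
          exact ⟨orb T z, ⟨z, hz.1, rfl⟩, (orb_delS S T z hz.2).symm⟩
        · rintro ⟨c, ⟨w, hw, rfl⟩, rfl⟩
          obtain ⟨z, hz⟩ := hne' (orb T w) (mem_image_of_mem _ hw)
          rw [mem_sdiff] at hz
          refine ⟨z, mem_sdiff.2 ⟨orb_subset hTA hw hz.1, hz.2⟩, ?_⟩
          rw [orb_delS S T z hz.2, orb_eq_of_mem hz.1]
      have hinj : Set.InjOn (fun c => c \ S) (cyc A T : Set (Finset α)) := by
        intro c hc c' hc' h
        obtain ⟨z, hz⟩ := hne' c hc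
        have hz' := hz
        dsimp only at h
        rw [h] at hz'
        exact (horb c hc z (mem_sdiff.1 hz).1).symm.trans (horb c' hc' z (mem_sdiff.1 hz').1)
      have hc4 : (cyc (A \ S) (delS S T)).card = 4 := by rw [hcyc, card_image_of_injOn hinj, h4]
      have hAS : (A \ S).Nonempty := by
        obtain ⟨c, hc⟩ := card_pos.1 (by omega : 0 < (cyc A T).card)
        exact (hne' c hc).mono (sdiff_subset_sdiff (hsub c hc) (Subset.refl _))
      have hSc := card_le_card hS
      have hh := (hurwitz (A.card + 2 - S.card) (A \ S) (delS S T) hAS (by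
        intro z hz
        rw [mem_sdiff, not_and_or, not_not] at hz
        rcases hz with hz | hz
        · exact delS_fix (hT z hz)
        · exact delS_fix_mem hz)).2 (by rw [hc4, card_sdiff_of_subset hS]; omega) hc4.le
      rw [hh]
      have hv : hv card (cyc (A \ S) (delS S T)) = ∑ c0 ∈ cyc A T, ∏ c ∈ cyc A T, ((if c = c0 then ((c \ S).card : ℚ) else 1) * ww (c \ S).card) := by
        unfold hv
        rw [hc4, hcyc, sum_image hinj, prod_image hinj]
        simp only [prod_mul_distrib, prod_ite_eq', ← sum_mul]
        norm_num
        left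
        refine sum_congr rfl fun c hc => ?_
        rw [if_pos hc]
      rw [hv, ← mul_sum]
      have hf : ((A.card + 2).descFactorial S.card : ℚ) * ((A.card + 2 - S.card).factorial : ℚ) = (A.card + 2).factorial := by
        rw [← Nat.factorial_mul_descFactorial (show S.card ≤ A.card + 2 by omega)]; push_cast; ring
      rw [← hf]; ring
  rw [KK_eq A T _ hA hT, sum_congr rfl key, ← mul_sum]
  congr 1
  rw [sum_comm, mul_sum]
  refine sum_congr rfl fun c0 hc0 => ?_
  have hF := factorC T (fun c d => (if c = c0 then (d.card : ℚ) else 1) * ww d.card) (cyc A T) (fun c hc => cyc_inv (horb c hc)) hdis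
  rw [hU] at hF
  rw [hF]
  have : ∀ c ∈ cyc A T, ∑ S ∈ c.powerset, (-1:ℚ)^S.card * W S T * ((if c = c0 then ((c \ S).card : ℚ) else 1) * ww (c \ S).card)
     = c.card * (if c = c0 then ((c.card : ℚ) * (c.card + 1) / 2) else 1) := by
    intro c hc
    split_ifs with h
    · exact Phi1 c T (hnec c hc) (horb c hc)
    · simp only [one_mul, mul_one]
      exact Phi0 c T (hnec c hc) (horb c hc)
  rw [prod_congr rfl this, prod_mul_distrib, prod_ite_eq', if_pos hc0]
end eval
end HZ

namespace HZ
open Finset Equiv Equiv.Perm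
open scoped Classical
set_option linter.unusedSectionVars false
section conn
variable {α : Type*} [Fintype α]

theorem swap_eq_sw {x y a b : α} (hab : a ≠ b) (h : swap a b = swap x y) : (a, b) = (x, y) ∨ (a, b) = (y, x) := by
  have h1 : swap x y a = b := by rw [← h, swap_apply_left]
  by_cases h2 : a = x
  · subst h2; left; rw [swap_apply_left] at h1; rw [h1]
  · by_cases h3 : a = y
    · subst h3; right; rw [swap_apply_right] at h1; rw [h1]
    · rw [swap_apply_of_ne_of_ne h2 h3] at h1; exact absurd h1 hab

theorem sum_swap (h : Perm α → ℚ) :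
    ∑ τ : Perm α, (if τ.IsSwap then h τ else 0) = (1/2) * ∑ p ∈ (univ : Finset α).offDiag, h (swap p.1 p.2) := by
  rw [← sum_fiberwise (univ : Finset α).offDiag (fun p => swap p.1 p.2) (fun p => h (swap p.1 p.2)), mul_sum]
  refine sum_congr rfl fun τ _ => ?_
  split_ifs with ht
  · obtain ⟨x, y, hxy, rfl⟩ := ht
    have : (univ : Finset α).offDiag.filter (fun p => swap p.1 p.2 = swap x y) = {(x, y), (y, x)} := by
      ext ⟨a, b⟩
      simp only [mem_filter, mem_offDiag, mem_univ, true_and, mem_insert, mem_singleton]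
      constructor
      · rintro ⟨h1, h2⟩; exact swap_eq_sw h1 h2
      · rintro (h | h)
        · rw [Prod.mk.injEq] at h; rw [h.1, h.2]; exact ⟨hxy, rfl⟩
        · rw [Prod.mk.injEq] at h; rw [h.1, h.2]; exact ⟨hxy.symm, swap_comm _ _⟩
    rw [this, sum_pair (by simp [Prod.ext_iff, hxy])]
    dsimp only
    rw [swap_comm y x]; ring
  · rw [filter_eq_empty_iff.2]
    · simp
    · intro p hp h
      exact ht ⟨p.1, p.2, (mem_offDiag.1 hp).2.2, h.symm⟩

theorem sumL_univ (m : ℕ) (f : List (Perm α) → ℚ) :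
    sumL univ m f = ∑ σ : Fin m → Perm α, if ∀ i, (σ i).IsSwap then f (List.ofFn σ) else 0 := by
  induction m generalizing f with
  | zero => simp [sumL]
  | succ m ih =>
    rw [sumL, ← sum_swap (fun τ => sumL univ m fun L => f (τ :: L)),
      ← (Fin.consEquiv (fun _ : Fin (m+1) => Perm α)).sum_comp, Fintype.sum_prod_type]
    refine sum_congr rfl fun τ _ => ?_
    rw [ih]
    split_ifs with h
    · refine sum_congr rfl fun σ _ => ?_
      simp [Fin.consEquiv, Fin.forall_fin_succ, h, List.ofFn_succ]
    · symm; apply sum_eq_zero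
      intro σ _
      simp [Fin.consEquiv, Fin.forall_fin_succ, h]

theorem mv_ofFn {m : ℕ} (σ : Fin m → Perm α) (x : α) : mv x (List.ofFn σ) = Nat.card {i : Fin m // σ i x ≠ x} := by
  rw [Nat.card_eq_fintype_card, Fintype.card_subtype, card_filter]
  induction m with
  | zero => simp [mv_nil]
  | succ m ih =>
    rw [List.ofFn_succ, mv_cons, ih, Fin.sum_univ_succ, add_comm]

theorem Tr_ofFn {m : ℕ} (σ : Fin m → Perm α) [Nonempty α] : Tr univ (List.ofFn σ) ↔ ∀ x y : α, ∃ g ∈ Subgroup.closure (Set.range σ), g x = y := by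
  constructor
  · intro h x y
    have := h (univ.filter fun y => ∃ g ∈ Subgroup.closure (Set.range σ), g x = y) (subset_univ _)
      ⟨x, by simp only [mem_filter, mem_univ, true_and]; exact ⟨1, Subgroup.one_mem _, rfl⟩⟩ (by
        intro τ hτ z hz
        simp only [mem_filter, mem_univ, true_and] at hz ⊢
        obtain ⟨g, hg, rfl⟩ := hz
        rw [List.mem_ofFn] at hτ
        exact ⟨τ * g, Subgroup.mul_mem _ (Subgroup.subset_closure hτ) hg, rfl⟩)
    have h2 := mem_univ y
    rw [← this, mem_filter] at h2
    exact h2.2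
  · intro h B _ ⟨b, hb⟩ hI
    have key : ∀ g ∈ Subgroup.closure (Set.range σ), ∀ z, g z ∈ B ↔ z ∈ B := by
      intro g hg
      induction hg using Subgroup.closure_induction with
      | mem τ hτ => exact perm_inv (hI τ ((List.mem_ofFn).2 hτ))
      | one => intro z; rfl
      | mul a b _ _ ha hb => intro z; rw [Perm.mul_apply, ha, hb]
      | inv a _ ha => intro z; rw [← ha]; have : a (a⁻¹ z) = z := a.apply_symm_apply z
                      rw [this]
    ext y
    obtain ⟨g, hg, rfl⟩ := h b y
    simp [key g hg, hb]

theorem cyc_type (T : Perm α) : ((cyc univ T).val.map card).filter (fun x => 2 ≤ x) = T.cycleType := by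
  have h2 : ∀ x, 2 ≤ (orb T x).card ↔ x ∈ T.support := by
    intro x
    rw [mem_support]
    constructor
    · intro h h'
      have : orb T x ⊆ {x} := orb_subset (by simp [h']) (by simp)
      have := card_le_card this
      rw [card_singleton] at this; omega
    · intro h
      exact one_lt_card.2 ⟨T x, apply_mem_orb.2 (self_mem_orb _ _), x, self_mem_orb _ _, h⟩
  have h3 : ∀ x ∈ T.support, (T.cycleOf x).support = orb T x := by
    intro x hx
    ext y
    rw [mem_support_cycleOf_iff, mem_orb]; tauto
  have h4 : (cyc univ T).filter (fun c => 2 ≤ c.card) = T.cycleFactorsFinset.image support := by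
    ext c
    simp only [mem_filter, cyc, mem_image, mem_univ, true_and]
    constructor
    · rintro ⟨⟨x, rfl⟩, h⟩
      rw [h2] at h
      exact ⟨T.cycleOf x, cycleOf_mem_cycleFactorsFinset_iff.2 h, h3 x h⟩
    · rintro ⟨p, hp, rfl⟩
      have hcy := (mem_cycleFactorsFinset_iff.1 hp).1
      obtain ⟨x, hx⟩ := hcy.nonempty_support
      have e := cycle_is_cycleOf hx hp
      have hx' : x ∈ T.support := by rw [e] at hp; exact cycleOf_mem_cycleFactorsFinset_iff.1 hp
      rw [e, h3 x hx', h2]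
      exact ⟨⟨x, rfl⟩, hx'⟩
  have hinj : Set.InjOn support (T.cycleFactorsFinset : Set (Perm α)) := by
    intro p hp q hq h
    obtain ⟨x, hx⟩ := (mem_cycleFactorsFinset_iff.1 hp).1.nonempty_support
    rw [cycle_is_cycleOf hx hp]
    rw [h] at hx
    rw [← cycle_is_cycleOf hx hq]
  rw [cycleType_def, Multiset.filter_map]
  have h5 : Multiset.filter ((fun x => 2 ≤ x) ∘ card) (cyc univ T).val = T.cycleFactorsFinset.val.map support := by
    rw [← image_val_of_injOn hinj, ← h4]; rfl
  rw [h5, Multiset.map_map]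

theorem ms_sum (M : Multiset ℕ) (h : ∀ x ∈ M, 1 ≤ x) : M = M.filter (fun x => 2 ≤ x) + Multiset.replicate (M.sum - (M.filter (fun x => 2 ≤ x)).sum) 1 := by
  induction M using Multiset.induction_on with
  | empty => simp
  | cons a M ih =>
    have ih := ih fun x hx => h x (Multiset.mem_cons_of_mem hx)
    have ha := h a (Multiset.mem_cons_self _ _)
    by_cases h2 : 2 ≤ a
    · rw [Multiset.filter_cons_of_pos _ h2, Multiset.sum_cons, Multiset.sum_cons, Nat.add_sub_add_left, Multiset.cons_add, ← ih]
    · have : a = 1 := by omega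
      subst this
      rw [Multiset.filter_cons_of_neg _ h2, Multiset.sum_cons]
      have hle : (M.filter (fun x => 2 ≤ x)).sum ≤ M.sum := by
        have := congrArg Multiset.sum ih
        rw [Multiset.sum_add] at this; omega
      rw [add_comm 1, Nat.sub_add_comm hle, Multiset.replicate_succ, Multiset.add_cons, ← ih]

theorem cyc_ms (T : Perm α) (N : Multiset ℕ) (hN : ∀ x ∈ N, 1 ≤ x) (hs : N.sum = Fintype.card α)
    (h : T.cycleType = N.filter (fun x => 2 ≤ x)) : (cyc univ T).val.map card = N := by
  rw [ms_sum N hN, ms_sum ((cyc univ T).val.map card), cyc_type, h, hs]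
  · congr 3
    have := sum_cyc univ T (fun _ _ => mem_univ _) (fun _ => 1)
    simp only [sum_const, nsmul_eq_mul, mul_one, card_univ] at this
    have h2 : ∑ c ∈ cyc univ T, c.card = Fintype.card α := by exact_mod_cast this.symm
    exact h2
  · intro x hx
    obtain ⟨c, hc, rfl⟩ := Multiset.mem_map.1 hx
    exact card_pos_of_cyc hc

theorem K_final (T : Perm α) (a b c d : ℕ) (ha : 1 ≤ a) (hb : 1 ≤ b) (hc : 1 ≤ c) (hd : 1 ≤ d) (hs : Fintype.card α = a + b + c + d)
    (hT : T.cycleType = Multiset.filter (fun x => 2 ≤ x) ({a, b, c, d} : Multiset ℕ)) :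
    KK univ T (a + b + c + d + 2) = ((a + b + c + d + 2).factorial : ℚ) * (a * b * c * d) *
          ((1 / 2) * ((a ^ 2 + a) + (b ^ 2 + b) + (c ^ 2 + c) + (d ^ 2 + d))) := by
  have hM := cyc_ms T {a, b, c, d} (by simp; omega) (by simp [hs]; ring) hT
  have h4 : (cyc univ T).card = 4 := by
    have := congrArg Multiset.card hM
    rw [Multiset.card_map] at this
    rw [card_def, this]; rfl
  have h := K_val univ T (by rw [card_univ]; omega) (by simp) h4
  rw [card_univ, hs] at h
  rw [h]
  have h1 : ∏ c ∈ cyc univ T, (c.card : ℚ) = ((((cyc univ T).val.map card).map (fun n : ℕ => (n : ℚ)))).prod := by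
    rw [Multiset.map_map]; rfl
  have h2 : ∑ c ∈ cyc univ T, ((c.card : ℚ) * (c.card + 1) / 2) = ((((cyc univ T).val.map card).map (fun n : ℕ => (n : ℚ) * (n + 1) / 2))).sum := by
    rw [Multiset.map_map]; rfl
  rw [h1, h2, hM]
  simp
  ring

theorem isSwap_inst (i1 i2 : DecidableEq α) (τ : Perm α) : @IsSwap α i1 τ ↔ @IsSwap α i2 τ := by
  rw [Subsingleton.elim i1 i2]

theorem pruned_card' {m : ℕ} [Nonempty α] (T : Perm α) (P : (Fin m → Perm α) → Prop)
    (hP : ∀ σ, P σ ↔ (∀ i, (σ i).IsSwap) ∧ (List.ofFn σ).prod = T ∧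
      (∀ x y : α, ∃ g ∈ Subgroup.closure (Set.range σ), g x = y) ∧ (∀ x : α, 2 ≤ Nat.card {i : Fin m // σ i x ≠ x})) :
    (Nat.card {σ : Fin m → Perm α // P σ} : ℚ) = KK univ T m := by
  unfold KK
  rw [sumL_univ, Nat.card_eq_fintype_card, Fintype.card_subtype, card_filter, Nat.cast_sum]
  refine Fintype.sum_congr _ _ fun σ => ?_
  rw [← ite_and, Nat.cast_ite, Nat.cast_one, Nat.cast_zero]
  refine if_congr ?_ rfl rfl
  rw [hP, ← Tr_ofFn]
  simp only [mv_ofFn, mem_univ, true_implies]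

theorem pruned_card {d m : ℕ} [Nonempty (Fin d)] (T : Perm (Fin d)) :
    (Nat.card {σ : Fin m → Perm (Fin d) // IsPrunedFactorisation T σ} : ℚ) = KK univ T m := by
  apply pruned_card'
  intro σ
  unfold IsPrunedFactorisation
  refine and_congr (forall_congr' fun i => isSwap_inst _ _ _) Iff.rfl
end conn
end HZ

theorem prunedHurwitz_genus_zero_four_part (μ₁ μ₂ μ₃ μ₄ : ℕ)
    (h₁ : 1 ≤ μ₁) (h₂ : 1 ≤ μ₂) (h₃ : 1 ≤ μ₃) (h₄ : 1 ≤ μ₄)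
    (T : Equiv.Perm (Fin (μ₁ + μ₂ + μ₃ + μ₄)))
    (hT : T.cycleType = Multiset.filter (fun x => 2 ≤ x) ({μ₁, μ₂, μ₃, μ₄} : Multiset ℕ)) :
    (Nat.card {σ : Fin (μ₁ + μ₂ + μ₃ + μ₄ + 2) → Equiv.Perm (Fin (μ₁ + μ₂ + μ₃ + μ₄)) //
        IsPrunedFactorisation T σ} : ℚ)
      = (Nat.factorial (μ₁ + μ₂ + μ₃ + μ₄ + 2) : ℚ) * (μ₁ * μ₂ * μ₃ * μ₄) *
          ((1 / 2) * ((μ₁ ^ 2 + μ₁) + (μ₂ ^ 2 + μ₂) + (μ₃ ^ 2 + μ₃) + (μ₄ ^ 2 + μ₄))) := by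
  have : Nonempty (Fin (μ₁ + μ₂ + μ₃ + μ₄)) := ⟨⟨0, by omega⟩⟩
  rw [HZ.pruned_card]
  apply HZ.K_final T _ _ _ _ h₁ h₂ h₃ h₄ (by simp)
  convert hT
end

section
/- For every integer d ≥ 0 there exists a polynomial q_d with rational coefficients of degree 2d such that for every positive integer μ: μ^{μ+d+1}/μ! = Σ_{ν=1}^{μ} q_d(ν) · ν·μ^{μ−ν}/(μ−ν)!. -/
open Polynomial in
lemma asc_diff (k : ℕ) (x : ℚ) :
    (ascPochhammer ℚ (k+1)).eval (x+1) - (ascPochhammer ℚ (k+1)).eval x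
      = (k+1) * (ascPochhammer ℚ k).eval (x+1) := by
  have h1 : (ascPochhammer ℚ (k+1)).eval (x+1) = (ascPochhammer ℚ k).eval (x+1) * (x+1+k) :=
    ascPochhammer_succ_eval k (x+1)
  have h2 : (ascPochhammer ℚ (k+1)).eval x = x * (ascPochhammer ℚ k).eval (x+1) := by
    rw [ascPochhammer_succ_left]; simp
  rw [h1, h2]; ring

open Polynomial in
lemma antidiff (k : ℕ) : ∀ p : ℚ[X], p.natDegree ≤ k →
    ∃ F : ℚ[X], F.natDegree ≤ k+1 ∧ F.coeff (k+1) * (k+1) = p.coeff k ∧ F.eval 0 = 0 ∧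
      ∀ x : ℚ, F.eval (x+1) - F.eval x = p.eval (x+1) := by
  induction k with
  | zero =>
    intro p hp
    obtain ⟨c, rfl⟩ : ∃ c, p = C c := ⟨_, eq_C_of_natDegree_le_zero hp⟩
    refine ⟨C c * X, (natDegree_C_mul_le _ _).trans (by simp), by simp, by simp, fun x => by simp; ring⟩
  | succ k ih =>
    intro p hp
    set c := p.coeff (k+1) with hc
    have hm : ∀ n, (ascPochhammer ℚ n).coeff n = 1 := fun n => by
      have := (monic_ascPochhammer ℚ n).coeff_natDegree
      rwa [ascPochhammer_natDegree] at this
    have hd : (p - C c * ascPochhammer ℚ (k+1)).natDegree ≤ k := by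
      rw [natDegree_le_iff_coeff_eq_zero]
      intro N hN
      rcases (Nat.succ_le_of_lt hN).eq_or_lt with h | h
      · subst h
        simp [hm, hc]
      · rw [coeff_sub, coeff_C_mul, coeff_eq_zero_of_natDegree_lt (lt_of_le_of_lt hp h),
          coeff_eq_zero_of_natDegree_lt (by rw [ascPochhammer_natDegree]; exact h)]
        simp
    obtain ⟨F, h1, h2, h3, h4⟩ := ih _ hd
    have hk : ((k:ℚ)+1+1) ≠ 0 := by positivity
    refine ⟨F + C (c/(k+1+1)) * ascPochhammer ℚ (k+1+1), ?_, ?_, ?_, ?_⟩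
    · refine natDegree_add_le_of_degree_le (by omega) ?_
      exact (natDegree_C_mul_le _ _).trans (by rw [ascPochhammer_natDegree])
    · rw [coeff_add, coeff_C_mul, hm, coeff_eq_zero_of_natDegree_lt (by omega)]
      push_cast
      field_simp
      simp
    · rw [eval_add, h3, eval_mul, ascPochhammer_eval_zero]; simp
    · intro x
      have e := asc_diff (k+1) x
      have e4 := h4 x
      simp only [eval_add, eval_sub, eval_mul, eval_C] at e4 ⊢
      push_cast at e
      have : c / ((k:ℚ)+1+1) * ((ascPochhammer ℚ (k+1+1)).eval (x+1)
          - (ascPochhammer ℚ (k+1+1)).eval x) = c * (ascPochhammer ℚ (k+1)).eval (x+1) := by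
        rw [e]; field_simp
      linarith

/-- summation by parts, with partial sums up to `n ≤ μ` -/
lemma parts (f : ℚ → ℚ) (h0 : f 0 = 0) (μ : ℕ) (n : ℕ) (hn : n + 1 ≤ μ) :
    ∑ ν ∈ Finset.Icc 1 n, f ν * ν * (μ : ℚ) ^ (μ - ν) / Nat.factorial (μ - ν)
     = μ * ∑ ν ∈ Finset.Icc 1 n, (f ν - f (ν - 1)) * (μ : ℚ) ^ (μ - ν) / Nat.factorial (μ - ν)
       - μ * f n * (μ : ℚ) ^ (μ - (n+1)) / Nat.factorial (μ - (n+1)) := by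
  induction n with
  | zero => simp [h0]
  | succ n ih =>
    rw [Finset.sum_Icc_succ_top (by omega), Finset.sum_Icc_succ_top (by omega), ih (by omega)]
    obtain ⟨m, rfl⟩ := Nat.exists_eq_add_of_le hn
    have e1 : n + 1 + 1 + m - (n+1) = m + 1 := by omega
    have e2 : n + 1 + 1 + m - (n+1+1) = m := by omega
    rw [e1, e2, Nat.factorial_succ]
    have : (Nat.factorial m : ℚ) ≠ 0 := by positivity
    have : (m:ℚ) + 1 ≠ 0 := by positivity
    push_cast
    rw [add_sub_cancel_right]
    field_simp
    ring

lemma parts' (f : ℚ → ℚ) (h0 : f 0 = 0) (μ : ℕ) (hμ : 1 ≤ μ) :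
    ∑ ν ∈ Finset.Icc 1 μ, f ν * ν * (μ : ℚ) ^ (μ - ν) / Nat.factorial (μ - ν)
     = μ * ∑ ν ∈ Finset.Icc 1 μ, (f ν - f (ν - 1)) * (μ : ℚ) ^ (μ - ν) / Nat.factorial (μ - ν) := by
  obtain ⟨n, rfl⟩ := Nat.exists_eq_add_of_le' hμ
  rw [Finset.sum_Icc_succ_top (by omega), Finset.sum_Icc_succ_top (by omega),
    parts f h0 (n+1) n le_rfl]
  simp
  ring

lemma base (μ : ℕ) (hμ : 1 ≤ μ) : (μ : ℚ) ^ (μ + 1) / Nat.factorial μ =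
    ∑ ν ∈ Finset.Icc 1 μ, (ν : ℚ) * (μ : ℚ) ^ (μ - ν) / Nat.factorial (μ - ν) := by
  have h := parts' (fun x => if x = 0 then 0 else 1) (by simp) μ hμ
  have e1 : ∀ ν ∈ Finset.Icc 1 μ, (fun x : ℚ => if x = 0 then (0:ℚ) else 1) ν * ν * (μ : ℚ) ^ (μ - ν)
      / Nat.factorial (μ - ν) = (ν : ℚ) * (μ : ℚ) ^ (μ - ν) / Nat.factorial (μ - ν) := by
    intro ν hν
    have : ν ≠ 0 := by have := Finset.mem_Icc.1 hν; omega
    simp [this]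
  rw [Finset.sum_congr rfl e1] at h
  rw [h, Finset.sum_eq_single_of_mem 1 (by simp [hμ])]
  · obtain ⟨n, rfl⟩ := Nat.exists_eq_add_of_le' hμ
    simp [Nat.factorial_succ]
    have : (n:ℚ) + 1 ≠ 0 := by positivity
    field_simp
    ring
  · intro ν hν h1
    have h0 := Finset.mem_Icc.1 hν
    have a : (ν:ℚ) ≠ 0 := by norm_cast; omega
    have b : (ν:ℚ) - 1 ≠ 0 := by rw [sub_ne_zero]; exact_mod_cast h1
    simp [a, b]

/-- For every `d ≥ 0` there is a polynomial `q_d` of degree `2d` with rational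
coefficients such that `μ^(μ+d+1)/μ! = Σ_{ν=1}^{μ} q_d(ν) · ν · μ^(μ-ν)/(μ-ν)!`
for every positive integer `μ`. -/
theorem exists_qd_polynomial (d : ℕ) :
    ∃ q : Polynomial ℚ, q.degree = (2 * d : ℕ) ∧
      ∀ μ : ℕ, 1 ≤ μ →
        (μ : ℚ) ^ (μ + d + 1) / Nat.factorial μ =
          ∑ ν ∈ Finset.Icc 1 μ,
            q.eval (ν : ℚ) * (ν : ℚ) * (μ : ℚ) ^ (μ - ν) / Nat.factorial (μ - ν) := by
  induction d with
  | zero =>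
    refine ⟨1, by simp, fun μ hμ => ?_⟩
    simpa using base μ hμ
  | succ d ih =>
    obtain ⟨q, hq, h⟩ := ih
    have hq0 : q ≠ 0 := by rintro rfl; rw [Polynomial.degree_zero] at hq; exact WithBot.bot_ne_coe hq
    have hn : q.natDegree = 2 * d := Polynomial.natDegree_eq_of_degree_eq_some hq
    obtain ⟨F, h1, h2, h3, h4⟩ := antidiff (2*d+1) (q * Polynomial.X)
      (by rw [Polynomial.natDegree_mul_X hq0, hn])
    refine ⟨F, ?_, fun μ hμ => ?_⟩
    · apply Polynomial.degree_eq_of_le_of_coeff_ne_zero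
      · exact Polynomial.degree_le_of_natDegree_le (by omega)
      · intro h0
        rw [show 2 * d + 1 + 1 = 2 * (d+1) by ring, h0, Polynomial.coeff_mul_X, zero_mul, ← hn] at h2
        exact hq0 (Polynomial.leadingCoeff_eq_zero.1 h2.symm)
    · rw [parts' (fun x => F.eval x) h3 μ hμ]
      have : ∀ ν : ℕ, F.eval (ν:ℚ) - F.eval ((ν:ℚ) - 1) = q.eval (ν:ℚ) * ν := fun ν => by
        have := h4 ((ν:ℚ) - 1)
        simpa using this
      simp only [this]
      rw [← h μ hμ]
      ring
end

section
/- For every integer d ≥ 0 and every positive integer μ: μ^{μ+d+1} = Σ_{ν=1}^{μ} S(ν+d, ν) · ν · μ^{μ−ν} · μ!/(μ−ν)!, where S(ν+d, ν) is the Stirling number of the second kind. -/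
/-- The Stirling number of the second kind `S(p, q)`: the number of partitions of a
set with `p` elements into `q` nonempty blocks. -/
noncomputable def stirlingSecond (p q : ℕ) : ℕ :=
  Nat.card {P : Finpartition (Finset.univ : Finset (Fin p)) // P.parts.card = q}

namespace StirlingAux

open Finset

/-- The function attached to a partition and an injective labelling of its blocks. -/
def lab (p x : ℕ) (w : Σ P : Finpartition (univ : Finset (Fin p)), (P.parts ↪ Fin x)) :
    Fin p → Fin x :=
  fun a => w.2 ⟨w.1.part a, w.1.part_mem.2 (mem_univ a)⟩

lemma lab_eq_iff {p x : ℕ} (w : Σ P : Finpartition (univ : Finset (Fin p)), (P.parts ↪ Fin x))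
    (a b : Fin p) : lab p x w a = lab p x w b ↔ w.1.part a = w.1.part b := by
  unfold lab
  rw [w.2.injective.eq_iff]
  simp

lemma parts_eq {p : ℕ} (P : Finpartition (univ : Finset (Fin p))) :
    P.parts = univ.image P.part := by
  ext t
  simp only [mem_image, mem_univ, true_and]
  constructor
  · intro ht
    obtain ⟨a, _, ha⟩ := P.part_surjOn ht
    exact ⟨a, ha⟩
  · rintro ⟨a, rfl⟩
    exact P.part_mem.2 (mem_univ a)

lemma lab_bij (p x : ℕ) : Function.Bijective (lab p x) := by
  constructor
  · rintro ⟨P, e⟩ ⟨Q, g⟩ h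
    have hpart : P.part = Q.part := by
      funext b
      ext a
      rw [P.mem_part_iff_part_eq_part (mem_univ _) (mem_univ _),
        Q.mem_part_iff_part_eq_part (mem_univ _) (mem_univ _),
        ← lab_eq_iff ⟨P, e⟩, ← lab_eq_iff ⟨Q, g⟩, h]
    have hPQ : P = Q := by
      apply Finpartition.ext
      rw [parts_eq, parts_eq, hpart]
    subst hPQ
    congr 1
    ext ⟨t, ht⟩
    obtain ⟨a, _, rfl⟩ := P.part_surjOn ht
    exact congrArg Fin.val (congrFun h a)
  · intro f
    classical
    let P := Finpartition.ofSetoid (Setoid.ker f)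
    have hP : ∀ a b, P.part a = P.part b ↔ f a = f b := by
      intro a b
      rw [← P.mem_part_iff_part_eq_part (mem_univ _) (mem_univ _),
        Finpartition.mem_part_ofSetoid_iff_rel, Setoid.ker_def, eq_comm]
    have hs : ∀ t : P.parts, ∃ a, P.part a = t := by
      rintro ⟨t, ht⟩
      obtain ⟨a, _, ha⟩ := P.part_surjOn ht
      exact ⟨a, ha⟩
    choose s hs using hs
    refine ⟨⟨P, ⟨fun t => f (s t), ?_⟩⟩, ?_⟩
    · intro t u htu
      apply Subtype.ext
      rw [← hs t, ← hs u]
      exact (hP _ _).2 htu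
    · funext a
      exact (hP _ _).1 (hs _)

lemma pow_eq (p x : ℕ) :
    x ^ p = ∑ q ∈ range (p + 1), stirlingSecond p q * x.descFactorial q := by
  classical
  have h := Fintype.card_congr (Equiv.ofBijective _ (lab_bij p x))
  rw [Fintype.card_sigma] at h
  simp only [Fintype.card_embedding_eq, Fintype.card_fun, Fintype.card_fin,
    Fintype.card_coe] at h
  rw [← h, ← Finset.sum_fiberwise_of_maps_to (t := range (p + 1)) (g := fun P => #P.parts)]
  · refine Finset.sum_congr rfl fun q _ => ?_
    rw [Finset.sum_congr rfl (g := fun _ => x.descFactorial q)]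
    · rw [Finset.sum_const, smul_eq_mul, stirlingSecond, Nat.card_eq_fintype_card,
        Fintype.card_subtype]
    · intro P hP
      rw [(mem_filter.1 hP).2]
  · intro P _
    rw [mem_range, Nat.lt_succ_iff]
    simpa using P.card_parts_le_card

lemma step (x q : ℕ) :
    x * x.descFactorial q = x.descFactorial (q + 1) + q * x.descFactorial q := by
  rw [Nat.descFactorial_succ, ← add_mul]
  rcases le_or_gt q x with h | h
  · rw [Nat.sub_add_cancel h]
  · simp [Nat.descFactorial_of_lt h]

lemma pow_eq' (p x : ℕ) :
    x ^ p = ∑ q ∈ range (p + 1), Nat.stirlingSecond p q * x.descFactorial q := by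
  induction p with
  | zero => simp
  | succ p ih =>
    rw [pow_succ', ih, mul_sum, Finset.sum_range_succ' _ (p + 1)]
    simp only [Nat.stirlingSecond_succ_succ, Nat.stirlingSecond_succ_zero, zero_mul, add_zero,
      add_mul, sum_add_distrib]
    have e : ∀ q, x * (Nat.stirlingSecond p q * x.descFactorial q) =
        Nat.stirlingSecond p q * x.descFactorial (q + 1) +
          q * Nat.stirlingSecond p q * x.descFactorial q := by
      intro q
      rw [mul_left_comm, step]; ring
    simp only [e, sum_add_distrib]
    rw [add_comm]
    congr 1
    have h1 := Finset.sum_range_succ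
      (fun q => q * Nat.stirlingSecond p q * x.descFactorial q) (p + 1)
    have h2 := Finset.sum_range_succ'
      (fun q => q * Nat.stirlingSecond p q * x.descFactorial q) (p + 1)
    rw [Nat.stirlingSecond_eq_zero_of_lt (Nat.lt_succ_self p)] at h1
    simp only [mul_zero, zero_mul, add_zero] at h1 h2
    rw [← h1, h2, ← sum_add_distrib]
    exact Finset.sum_congr rfl fun _ _ => by ring

lemma eq_nat (p q : ℕ) (hq : q ≤ p) : stirlingSecond p q = Nat.stirlingSecond p q := by
  induction q using Nat.strong_induction_on with
  | _ q ih =>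
    have h := (pow_eq p q).symm.trans (pow_eq' p q)
    have key : ∀ f : ℕ → ℕ, ∑ i ∈ range (p + 1), f i * q.descFactorial i =
        ∑ i ∈ range q, f i * q.descFactorial i + f q * q.descFactorial q := by
      intro f
      rw [← Finset.sum_range_succ]
      symm
      apply Finset.sum_subset
      · intro i; simp only [mem_range]; omega
      · intro i _ hi
        rw [Nat.descFactorial_of_lt (by simp only [mem_range] at hi; omega), mul_zero]
    rw [key, key, Finset.sum_congr rfl (fun i hi => by
      rw [ih i (mem_range.1 hi) (by have := mem_range.1 hi; omega)])] at h
    have h' := Nat.add_left_cancel h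
    refine Nat.eq_of_mul_eq_mul_right ?_ h'
    rw [Nat.descFactorial_self]
    exact Nat.factorial_pos q

/-- Number of words of length `v + d` over `x` letters with exactly `v` letters occurring. -/
def A (x d v : ℕ) : ℕ := Nat.stirlingSecond (v + d) v * x.descFactorial v

/-- Partial sums. -/
def S (x d : ℕ) : ℕ → ℕ
  | 0 => 0
  | m + 1 => x * S x d m + A x d (m + 1) * (m + 1)

lemma A_zero (x v : ℕ) : A x 0 v = x.descFactorial v := by
  simp [A, Nat.stirlingSecond_self]

lemma S_zero (x m : ℕ) : S x 0 m + A x 0 (m + 1) = x ^ (m + 1) := by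
  induction m with
  | zero => simp [S, A_zero]
  | succ m ih =>
    have := step x (m + 1)
    rw [pow_succ', ← ih, S, A_zero, A_zero, mul_add x, this]
    ring

lemma A_succ (x d m : ℕ) : A x (d + 1) (m + 1) + m * A x (d + 1) m =
    (m + 1) * A x d (m + 1) + x * A x (d + 1) m := by
  have h : Nat.stirlingSecond (m + 1 + (d + 1)) (m + 1) =
      (m + 1) * Nat.stirlingSecond (m + 1 + d) (m + 1) + Nat.stirlingSecond (m + (d + 1)) m := by
    rw [show m + 1 + (d + 1) = (m + 1 + d) + 1 by ring, Nat.stirlingSecond_succ_succ,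
      show m + 1 + d = m + (d + 1) by ring]
  unfold A
  rw [h, mul_left_comm x, step]
  ring

lemma S_succ (x d m : ℕ) : S x (d + 1) m + A x (d + 1) (m + 1) = S x d (m + 1) := by
  induction m with
  | zero =>
    have := A_succ x d 0
    have h0 : A x (d + 1) 0 = 0 := by simp [A]
    rw [h0] at this
    simp [S] at this ⊢
    exact this
  | succ m ih =>
    have := A_succ x d (m + 1)
    rw [S, S, ← ih]
    linarith

lemma S_self (x d : ℕ) : S x d x = x ^ (x + d + 1) := by
  have h0 : ∀ d, A x d (x + 1) = 0 := fun d => by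
    simp [A]
  induction d with
  | zero => simpa [h0] using S_zero x x
  | succ d ih =>
    have := S_succ x d x
    rw [h0, add_zero, S, h0, ih] at this
    rw [this]; ring

lemma S_eq (x d m : ℕ) : S x d m = ∑ v ∈ Icc 1 m, A x d v * v * x ^ (m - v) := by
  induction m with
  | zero => simp [S]
  | succ m ih =>
    rw [S, ih, Finset.sum_Icc_succ_top (by omega), mul_sum]
    simp only [Nat.sub_self, pow_zero, mul_one]
    congr 1
    refine Finset.sum_congr rfl fun v hv => ?_
    rw [Nat.succ_sub (mem_Icc.1 hv).2, pow_succ]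
    ring

end StirlingAux

/-- For every `d ≥ 0` and every positive integer `μ`:
`μ^(μ+d+1) = Σ_{ν=1}^{μ} S(ν+d, ν) · ν · μ^(μ-ν) · μ!/(μ-ν)!`. -/
theorem stirling_identity (d μ : ℕ) (hμ : 1 ≤ μ) :
    μ ^ (μ + d + 1) =
      ∑ ν ∈ Finset.Icc 1 μ,
        stirlingSecond (ν + d) ν * ν * μ ^ (μ - ν) *
          (Nat.factorial μ / Nat.factorial (μ - ν)) := by
  rw [← StirlingAux.S_self, StirlingAux.S_eq]
  refine Finset.sum_congr rfl fun v hv => ?_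
  rw [StirlingAux.eq_nat _ _ (Nat.le_add_right v d),
    ← Nat.descFactorial_eq_div (Finset.mem_Icc.1 hv).2, StirlingAux.A]
  ring
end
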